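/- arXiv:2209.09334 — 5 statements merged into one kernel-verified Lean document; each statement's English description precedes it below -/
import Mathlib

section
/- Let a and b be positive integers with gcd(a,b) = 1, and let p(z) = a_D z^D + a_{D-1} z^{D-1} + ... + a_1 z be a polynomial with integer coefficients and zero constant term such that D ≥ 2, a_D > 0 and a_1 ≠ 0. Then the equation a·x + b·y = p(z) is 2-Ramsey. -/
open Polynomial

/-- Membership in `A` is preserved by translation by `h`, as long as one stays in `[1, W]`. -/
def StepStable (A : ℤ → Prop) (W h : ℤ) : Prop :=
  ∀ x, 1 ≤ x → x ≤ W → 1 ≤ x + h → x + h ≤ W → A x → A (x + h)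

/-- Inside `[1, W]`, membership in `A` is invariant under translation by `h`. -/
def StepInvariant (A : ℤ → Prop) (W h : ℤ) : Prop :=
  StepStable A W h ∧ StepStable A W (-h)

/-- The map `y ↦ y + s` or `y - t` permutes any interval of length `s + t`, so a set stable under
both steps is stable under the inverse steps. -/
theorem StepStable.neg_left {A : ℤ → Prop} {W s t : ℤ} (hs : 0 < s) (ht : 0 < t) (hW : s + t ≤ W)
    (h₁ : StepStable A W s) (h₂ : StepStable A W (-t)) : StepStable A W (-s) := by
  classical
  intro x _ hxW hxs _ hA
  obtain ⟨u, hu⟩ : ∃ u, u = min (x - s - 1) (W - s - t) := ⟨_, rfl⟩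
  have hu0 : 0 ≤ u := by omega
  have hux : u + s < x := by omega
  have hxu : x ≤ u + s + t := by omega
  have huW : u + s + t ≤ W := by omega
  set F := (Finset.Icc (u + 1) (u + s + t)).filter A with hF
  let f : ℤ → ℤ := fun y => if y ≤ u + t then y + s else y + -t
  have hmaps : Set.MapsTo f (F : Set ℤ) (F : Set ℤ) := by
    intro y hy
    simp only [hF, Finset.coe_filter, Finset.mem_Icc, Set.mem_ofPred_eq] at hy ⊢
    obtain ⟨⟨hy1, hy2⟩, hyA⟩ := hy
    by_cases hyt : y ≤ u + t
    · simp only [f, if_pos hyt]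
      exact ⟨by omega, h₁ y (by omega) (by omega) (by omega) (by omega) hyA⟩
    · simp only [f, if_neg hyt]
      exact ⟨by omega, h₂ y (by omega) (by omega) (by omega) (by omega) hyA⟩
  have hinj : Set.InjOn f (F : Set ℤ) := by
    intro y hy y' hy' hyy
    simp only [hF, Finset.coe_filter, Finset.mem_Icc, Set.mem_ofPred_eq] at hy hy'
    simp only [f] at hyy
    split_ifs at hyy <;> omega
  have hxF : x ∈ (F : Set ℤ) := by
    simp only [hF, Finset.coe_filter, Finset.mem_Icc, Set.mem_ofPred_eq]
    exact ⟨by omega, hA⟩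
  obtain ⟨w, hw, hwx⟩ := Finset.surjOn_of_injOn_of_card_le f hmaps hinj le_rfl hxF
  simp only [hF, Finset.coe_filter, Finset.mem_Icc, Set.mem_ofPred_eq] at hw
  simp only [f] at hwx
  split_ifs at hwx
  · rw [show x + -s = w by omega]
    exact hw.2
  · omega

theorem StepStable.reflect {A : ℤ → Prop} {W h : ℤ} (hA : StepStable A W h) :
    StepStable (fun x => A (W + 1 - x)) W (-h) := by
  intro x h1 h2 h3 h4 hx
  have := hA (W + 1 - x) (by omega) (by omega) (by omega) (by omega) hx
  simpa only [show W + 1 - (x + -h) = W + 1 - x + h by ring] using this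

theorem StepStable.of_reflect {A : ℤ → Prop} {W h : ℤ}
    (hA : StepStable (fun x => A (W + 1 - x)) W h) : StepStable A W (-h) := by
  have := hA.reflect
  simpa only [sub_sub_cancel] using this

theorem StepStable.invariant_of_pos {A : ℤ → Prop} {W s t : ℤ} (hs : 0 < s) (ht : t < 0)
    (hW : s - t ≤ W) (h₁ : StepStable A W s) (h₂ : StepStable A W t) : StepInvariant A W s :=
  ⟨h₁, StepStable.neg_left hs (neg_pos.2 ht) (by omega) h₁ (by simpa using h₂)⟩

theorem StepStable.invariant_of_neg {A : ℤ → Prop} {W s t : ℤ} (hs : 0 < s) (ht : t < 0)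
    (hW : s - t ≤ W) (h₁ : StepStable A W s) (h₂ : StepStable A W t) : StepInvariant A W t := by
  refine ⟨h₂, StepStable.of_reflect ?_⟩
  have := StepStable.neg_left (neg_pos.2 ht) hs (by omega) h₂.reflect h₁.reflect
  simpa using this

theorem StepInvariant.neg {A : ℤ → Prop} {W h : ℤ} (hA : StepInvariant A W h) :
    StepInvariant A W (-h) :=
  ⟨hA.2, by simpa using hA.1⟩

theorem StepInvariant.zero (A : ℤ → Prop) (W : ℤ) : StepInvariant A W 0 := by
  constructor <;> intro x _ _ _ _ hx <;> simpa using hx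

theorem StepStable.add {A : ℤ → Prop} {W h h' : ℤ} (hh : 2 * |h| ≤ W) (hh' : 2 * |h'| ≤ W)
    (hA : StepStable A W h) (hA' : StepStable A W h') : StepStable A W (h + h') := by
  intro x h1 h2 h3 h4 hx
  have e1 := abs_le.1 (show |h| ≤ W / 2 by omega)
  have e2 := abs_le.1 (show |h'| ≤ W / 2 by omega)
  by_cases hc : 1 ≤ x + h ∧ x + h ≤ W
  · have := hA' (x + h) hc.1 hc.2 (by omega) (by omega) (hA x h1 h2 hc.1 hc.2 hx)
    rwa [add_assoc] at this
  · have := hA (x + h') (by omega) (by omega) (by omega) (by omega)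
      (hA' x h1 h2 (by omega) (by omega) hx)
    rwa [add_assoc, add_comm h'] at this

theorem StepInvariant.add {A : ℤ → Prop} {W h h' : ℤ} (hh : 2 * |h| ≤ W) (hh' : 2 * |h'| ≤ W)
    (hA : StepInvariant A W h) (hA' : StepInvariant A W h') : StepInvariant A W (h + h') := by
  refine ⟨hA.1.add hh hh' hA'.1, ?_⟩
  rw [neg_add]
  exact hA.2.add (by rwa [abs_neg]) (by rwa [abs_neg]) hA'.2

/-- If all differences of values of `q` at `k, …, k + n` are invariant steps, so are the iterated
forward differences. -/
theorem StepInvariant.fwdDiff_iterate {A : ℤ → Prop} {W B k : ℤ} {q : ℤ → ℤ} {n : ℕ}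
    (hW : 2 ^ (n + 1) * B ≤ W) (hB : 0 ≤ B)
    (hq : ∀ i : ℕ, i < n → |q (k + i + 1) - q (k + i)| ≤ B ∧
      StepInvariant A W (q (k + i + 1) - q (k + i))) :
    ∀ m i : ℕ, m + 1 + i ≤ n → |(fwdDiff 1)^[m + 1] q (k + i)| ≤ 2 ^ m * B ∧
      StepInvariant A W ((fwdDiff 1)^[m + 1] q (k + i)) := by
  intro m
  induction m with
  | zero =>
    intro i hi
    simpa [fwdDiff] using hq i (by omega)
  | succ m ih =>
    intro i hi
    obtain ⟨b1, s1⟩ := ih i (by omega)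
    obtain ⟨b2, s2⟩ := ih (i + 1) (by omega)
    rw [Function.iterate_succ_apply']
    simp only [fwdDiff]
    push_cast at b2 s2
    rw [← add_assoc] at b2 s2
    have hpow : (2 : ℤ) ^ (m + 1) * B ≤ 2 ^ (n + 1) * B := by
      gcongr
      · norm_num
      · omega
    have e : (2 : ℤ) ^ (m + 1) = 2 * 2 ^ m := by ring
    refine ⟨(abs_sub _ _).trans ?_, ?_⟩
    · rw [e]
      linarith
    · rw [sub_eq_add_neg]
      refine s2.add ?_ ?_ s1.neg
      · rw [e] at hpow
        linarith
      · rw [abs_neg]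
        rw [e] at hpow
        linarith

/-- Two opposite colour changes of `χ` in the range `[N, ∞)` make the colouring `A` invariant under
the top finite difference of `q`. -/
theorem stepInvariant_of_switches {A A' χ : ℤ → Prop} {q : ℤ[X]} {N k l W B : ℤ}
    (hdeg : 1 ≤ q.natDegree)
    (hno : ∀ t u v, N ≤ t → 1 ≤ u → 1 ≤ v → u + v = q.eval t →
      ¬(A u ∧ A' v ∧ χ t) ∧ ¬(¬A u ∧ ¬A' v ∧ ¬χ t))
    (hmono : ∀ t, N ≤ t → q.eval t < q.eval (t + 1)) (hWN : W < q.eval N)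
    (hk : N ≤ k) (hl : N ≤ l) (hk0 : χ k) (hk1 : ¬χ (k + 1)) (hl0 : ¬χ l) (hl1 : χ (l + 1))
    (hBk : q.eval (k + q.natDegree) - q.eval k ≤ B)
    (hBl : q.eval (l + q.natDegree) - q.eval l ≤ B) (hW : 2 ^ (q.natDegree + 1) * B ≤ W) :
    StepInvariant A W (q.leadingCoeff * q.natDegree.factorial) := by
  have hle : ∀ (t : ℤ) (j : ℕ), N ≤ t → q.eval t ≤ q.eval (t + j) := by
    intro t j ht
    induction j with
    | zero => simp
    | succ j ih =>
      have := hmono (t + j) (by omega)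
      push_cast
      rw [← add_assoc]
      omega
  have hle' : ∀ t t' : ℤ, N ≤ t → t ≤ t' → q.eval t ≤ q.eval t' := by
    intro t t' ht htt
    have := hle t (t' - t).toNat ht
    rwa [show t + ((t' - t).toNat : ℤ) = t' by omega] at this
  have hstable : ∀ t₁ t₂, N ≤ t₁ → N ≤ t₂ → χ t₁ → ¬χ t₂ →
      StepStable A W (q.eval t₂ - q.eval t₁) := by
    intro t₁ t₂ ht₁ ht₂ hχ₁ hχ₂ x h1 h2 h3 h4 hx
    have hq := hle' N t₁ le_rfl ht₁
    have n1 := (hno t₁ x (q.eval t₁ - x) ht₁ h1 (by omega) (by ring)).1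
    have n2 := (hno t₂ (x + (q.eval t₂ - q.eval t₁)) (q.eval t₁ - x) ht₂ h3 (by omega)
      (by ring)).2
    tauto
  have hB0 : 0 ≤ B := by
    have := hle k q.natDegree hk
    omega
  have hW4 : 4 * B ≤ W := by
    refine le_trans ?_ hW
    have : (2 : ℤ) ^ 2 ≤ 2 ^ (q.natDegree + 1) := by
      gcongr
      · norm_num
      · omega
    nlinarith
  have hkpos : 0 < q.eval (k + 1) - q.eval k := sub_pos.2 (hmono k hk)
  have hlneg : q.eval l - q.eval (l + 1) < 0 := sub_neg.2 (hmono l hl)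
  have hkB : q.eval (k + 1) - q.eval k ≤ B := by
    have := hle' (k + 1) (k + q.natDegree) (by omega) (by omega)
    omega
  have hlB : q.eval (l + 1) - q.eval l ≤ B := by
    have := hle' (l + 1) (l + q.natDegree) (by omega) (by omega)
    omega
  have hsk := hstable k (k + 1) hk (by omega) hk0 hk1
  have hsl := hstable (l + 1) l (by omega) hl hl1 hl0
  have hopp : ∀ t₁ t₂, N ≤ t₁ → N ≤ t₂ → χ t₁ → ¬χ t₂ → |q.eval t₂ - q.eval t₁| ≤ B →
      StepInvariant A W (q.eval t₂ - q.eval t₁) := by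
    intro t₁ t₂ ht₁ ht₂ hχ₁ hχ₂ hb
    have hs := hstable t₁ t₂ ht₁ ht₂ hχ₁ hχ₂
    have hb' := abs_le.1 hb
    rcases lt_trichotomy (q.eval t₂ - q.eval t₁) 0 with h | h | h
    · exact StepStable.invariant_of_neg hkpos h (by omega) hsk hs
    · rw [h]
      exact StepInvariant.zero A W
    · exact StepStable.invariant_of_pos h hlneg (by omega) hs hsl
  have habs : ∀ i j : ℕ, i ≤ q.natDegree → j ≤ q.natDegree →
      |q.eval (k + i) - q.eval (k + j)| ≤ B := by
    intro i j hi hj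
    have h1 := hle k i hk
    have h2 := hle k j hk
    have h3 := hle' (k + i) (k + q.natDegree) (by omega) (by omega)
    have h4 := hle' (k + j) (k + q.natDegree) (by omega) (by omega)
    rw [abs_le]
    omega
  have hopp' : ∀ i j : ℕ, i ≤ q.natDegree → j ≤ q.natDegree → ¬(χ (k + i) ↔ χ (k + j)) →
      StepInvariant A W (q.eval (k + i) - q.eval (k + j)) := by
    intro i j hi hj hij
    by_cases hi' : χ (k + i)
    · have := (hopp (k + i) (k + j) (by omega) (by omega) hi' (by tauto) (habs j i hj hi)).neg
      rwa [neg_sub] at this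
    · exact hopp (k + j) (k + i) (by omega) (by omega) (by tauto) hi' (habs i j hi hj)
  have hall : ∀ i j : ℕ, i ≤ q.natDegree → j ≤ q.natDegree →
      StepInvariant A W (q.eval (k + i) - q.eval (k + j)) := by
    intro i j hi hj
    by_cases hij : χ (k + i) ↔ χ (k + j)
    · obtain ⟨m, hm, hmi⟩ : ∃ m : ℕ, m ≤ q.natDegree ∧ ¬(χ (k + i) ↔ χ (k + m)) := by
        by_cases hi' : χ (k + i)
        · exact ⟨1, hdeg, by simp [hi', hk1]⟩
        · exact ⟨0, by omega, by simp [hi', hk0]⟩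
      have := (hopp' i m hi hm hmi).add (by linarith [habs i m hi hm])
        (by linarith [habs m j hm hj]) (hopp' m j hm hj (by tauto))
      rwa [sub_add_sub_cancel] at this
    · exact hopp' i j hi hj hij
  obtain ⟨d, hd⟩ : ∃ d, q.natDegree = d + 1 := ⟨q.natDegree - 1, by omega⟩
  have hfin := (StepInvariant.fwdDiff_iterate (A := A) (q := fun t => q.eval t) (k := k)
    (n := q.natDegree) hW hB0 (fun i hi => by
      have h1 := habs (i + 1) i (by omega) (by omega)
      have h2 := hall (i + 1) i (by omega) (by omega)
      push_cast at h1 h2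
      rw [← add_assoc] at h1 h2
      exact ⟨h1, h2⟩) d 0 (by omega)).2
  rw [← hd, fwdDiff_iter_degree_eq_factorial] at hfin
  simpa using hfin

theorem Polynomial.exists_abs_eval_le {f : ℤ[X]} {d : ℕ} (hf : f.natDegree ≤ d) :
    ∃ c : ℤ, 0 ≤ c ∧ ∀ t : ℤ, 1 ≤ t → |f.eval t| ≤ c * t ^ d := by
  refine ⟨∑ i ∈ Finset.range (d + 1), |f.coeff i|, Finset.sum_nonneg fun _ _ => abs_nonneg _, ?_⟩
  intro t ht
  rw [eval_eq_sum_range' (Nat.lt_succ_of_le hf), Finset.sum_mul]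
  refine (Finset.abs_sum_le_sum_abs _ _).trans (Finset.sum_le_sum fun i hi => ?_)
  rw [abs_mul, abs_of_nonneg (pow_nonneg (by omega : 0 ≤ t) i)]
  have : i ≤ d := Nat.lt_succ_iff.1 (Finset.mem_range.1 hi)
  gcongr

theorem Polynomial.exists_abs_eval_add_sub_le {f : ℤ[X]} {d : ℕ} (hf : f.natDegree ≤ d + 1)
    (m : ℤ) : ∃ c : ℤ, 0 ≤ c ∧ ∀ t : ℤ, 1 ≤ t → |f.eval (t + m) - f.eval t| ≤ c * t ^ d := by
  have hdeg : (taylor m f - f).natDegree ≤ d := by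
    by_cases h0 : f.natDegree = 0
    · rw [eq_C_of_natDegree_eq_zero h0, taylor_C, sub_self, natDegree_zero]
      omega
    · have hf0 : f ≠ 0 := by
        rintro rfl
        simp at h0
      have hlt := degree_sub_lt_right (p := taylor m f) (q := f) (by simp) hf0 (by simp)
      rw [← Nat.lt_succ_iff]
      refine lt_of_lt_of_le ?_ hf
      by_cases hz : taylor m f - f = 0
      · rw [hz, natDegree_zero]
        omega
      · exact natDegree_lt_natDegree hz hlt
  obtain ⟨c, hc, h⟩ := exists_abs_eval_le hdeg
  exact ⟨c, hc, fun t ht => by simpa [taylor_eval] using h t ht⟩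

theorem Polynomial.exists_pow_le_two_mul_eval {f : ℤ[X]} (hdeg : 1 ≤ f.natDegree)
    (hlead : 0 < f.leadingCoeff) : ∃ T : ℤ, ∀ t, T ≤ t → t ^ f.natDegree ≤ 2 * f.eval t := by
  obtain ⟨d, hd⟩ : ∃ d, f.natDegree = d + 1 := ⟨f.natDegree - 1, by omega⟩
  obtain ⟨c, hc, h⟩ := exists_abs_eval_le (f := f.eraseLead) (d := d)
    (by have := f.eraseLead_natDegree_le; omega)
  refine ⟨2 * c + 1, fun t ht => ?_⟩
  have he : f.eval t = f.eraseLead.eval t + f.leadingCoeff * t ^ f.natDegree := by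
    conv_lhs => rw [← f.eraseLead_add_C_mul_X_pow]
    simp
  have h1 := (abs_le.1 (h t (by omega))).1
  have hp : 0 < t ^ d := pow_pos (by omega) d
  have h2 : t ^ (d + 1) ≤ f.leadingCoeff * t ^ (d + 1) :=
    le_mul_of_one_le_left (pow_nonneg (by omega) _) hlead
  have h3 : 2 * c * t ^ d ≤ t ^ (d + 1) := by
    rw [pow_succ']
    gcongr
    omega
  rw [he, hd]
  linarith

/-- Increments of an integer polynomial of degree at least two with positive leading coefficient
tend to infinity. -/
theorem Polynomial.exists_lt_eval_succ_sub {f : ℤ[X]} (hdeg : 2 ≤ f.natDegree)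
    (hlead : 0 < f.leadingCoeff) (c : ℤ) :
    ∃ T : ℤ, ∀ t, T ≤ t → c < f.eval (t + 1) - f.eval t := by
  obtain ⟨d, hd⟩ : ∃ d, f.natDegree = d + 2 := ⟨f.natDegree - 2, by omega⟩
  obtain ⟨e, he0, h⟩ := exists_abs_eval_add_sub_le (f := f.eraseLead) (d := d)
    (by have := f.eraseLead_natDegree_le; omega) 1
  refine ⟨e + |c| + 1, fun t ht => ?_⟩
  have hc := le_abs_self c
  have hc' := abs_nonneg c
  have he : ∀ t : ℤ, f.eval t = f.eraseLead.eval t + f.leadingCoeff * t ^ f.natDegree := by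
    intro t
    conv_lhs => rw [← f.eraseLead_add_C_mul_X_pow]
    simp
  have h1 := (abs_le.1 (h t (by omega))).1
  have hp : 1 ≤ t ^ d := one_le_pow₀ (by omega)
  have hstep : t ^ (d + 1) ≤ (t + 1) ^ (d + 2) - t ^ (d + 2) := by
    have : t ^ (d + 1) ≤ (t + 1) ^ (d + 1) := by
      gcongr <;> omega
    rw [pow_succ' _ (d + 1), pow_succ' _ (d + 1)]
    nlinarith [pow_nonneg (by omega : 0 ≤ t) (d + 1)]
  have h2 : t ^ (d + 1) ≤ f.leadingCoeff * ((t + 1) ^ (d + 2) - t ^ (d + 2)) :=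
    hstep.trans (le_mul_of_one_le_left ((pow_nonneg (by omega) _).trans hstep) hlead)
  have h3 : (|c| + 1) + e * t ^ d ≤ t ^ (d + 1) := by
    rw [pow_succ']
    nlinarith
  rw [he, he t, hd]
  linarith

/-- Increments at points of `[n, C n]` are negligible compared with the value at `n`. -/
theorem Polynomial.exists_mul_increment_le_eval {f : ℤ[X]} (hdeg : 2 ≤ f.natDegree)
    (hlead : 0 < f.leadingCoeff) (m : ℤ) {C M : ℤ} (hC : 0 ≤ C) (hM : 0 ≤ M) :
    ∃ T : ℤ, ∀ n, T ≤ n → ∀ t, n ≤ t → t ≤ C * n →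
      M * (f.eval (t + m) - f.eval t + t + 1) ≤ f.eval n := by
  obtain ⟨d, hd⟩ : ∃ d, f.natDegree = d + 2 := ⟨f.natDegree - 2, by omega⟩
  obtain ⟨e, he0, h⟩ := exists_abs_eval_add_sub_le (f := f) (d := d + 1) (by omega) m
  obtain ⟨T, hT⟩ := exists_pow_le_two_mul_eval (by omega) hlead
  have hK : 0 ≤ 2 * M * (e + 2) * C ^ (d + 1) := by positivity
  refine ⟨max T (2 * M * (e + 2) * C ^ (d + 1) + 1), fun n hn t hnt htC => ?_⟩
  have hn1 := le_of_max_le_left hn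
  have hn2 := le_of_max_le_right hn
  have ht1 : 1 ≤ t := by omega
  have h1 := (le_abs_self _).trans (h t ht1)
  have h2 : 1 ≤ t ^ (d + 1) := one_le_pow₀ ht1
  have h3 : t ≤ t ^ (d + 1) := le_self_pow₀ ht1 (by omega)
  have h4 : t ^ (d + 1) ≤ C ^ (d + 1) * n ^ (d + 1) := by
    rw [← mul_pow]
    gcongr
  have h5 := hT n hn1
  have h6 : 2 * M * (e + 2) * C ^ (d + 1) * n ^ (d + 1) ≤ n ^ (d + 2) := by
    rw [pow_succ' n (d + 1)]
    have : 0 ≤ n ^ (d + 1) := pow_nonneg (by omega) _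
    gcongr
    omega
  have h7 : M * (f.eval (t + m) - f.eval t + t + 1) ≤
      M * ((e + 2) * (C ^ (d + 1) * n ^ (d + 1))) := by
    gcongr
    calc f.eval (t + m) - f.eval t + t + 1 ≤ (e + 2) * t ^ (d + 1) := by linarith
      _ ≤ _ := by gcongr
  rw [hd] at h5
  linarith

theorem exists_switch {P : ℤ → Prop} {i j : ℤ} (hij : i ≤ j) (hi : P i) (hj : ¬P j) :
    ∃ k, i ≤ k ∧ k < j ∧ P k ∧ ¬P (k + 1) := by
  induction j, hij using Int.leInduction with
  | base => exact absurd hi hj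
  | succ j hij ih =>
    by_cases h : P j
    · exact ⟨j, hij, by omega, h, hj⟩
    · obtain ⟨k, h1, h2, h3⟩ := ih h
      exact ⟨k, h1, by omega, h3⟩

/-- One colour change of `χ` along the multiples of `b` forces two opposite colour changes at
comparable places. -/
theorem exists_comparable_switches {χ : ℤ → Prop} {r : ℤ[X]} {a b T : ℤ} (ha : 1 ≤ a) (hb : 1 ≤ b)
    (hdeg : 2 ≤ r.natDegree) (hlead : 0 < r.leadingCoeff)
    (hno : ∀ n s, T ≤ n → 1 ≤ s → 1 ≤ r.eval n - a * s →
      ¬(χ (b * s) ∧ χ (r.eval n - a * s) ∧ χ (b * n)) ∧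
      ¬(¬χ (b * s) ∧ ¬χ (r.eval n - a * s) ∧ ¬χ (b * n)))
    (hsw : ∀ n₀, ∃ n, n₀ ≤ n ∧ χ (b * n) ∧ ¬χ (b * (n + 1))) (N₀ : ℤ) :
    ∃ N k l, N₀ ≤ N ∧ N ≤ k ∧ k ≤ 8 * (a + b) * N ∧ N ≤ l ∧ l ≤ 8 * (a + b) * N ∧
      χ k ∧ ¬χ (k + 1) ∧ ¬χ l ∧ χ (l + 1) := by
  obtain ⟨E, hE⟩ : ∃ E, E = 2 * (a + b) := ⟨_, rfl⟩
  have hN0 := abs_nonneg N₀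
  obtain ⟨T₁, hT₁⟩ := exists_lt_eval_succ_sub hdeg hlead a
  obtain ⟨T₂, hT₂⟩ := exists_mul_increment_le_eval hdeg hlead 1 (C := 1)
    (M := E * (a + |N₀| + 1) + a) (by norm_num) (by subst hE; positivity)
  obtain ⟨n, hn, hn0, hn1⟩ := hsw (max (max T 1) (max T₁ T₂))
  have hinc := hT₁ n (by omega)
  have hgrow := hT₂ n (by omega) n le_rfl (by omega)
  have hnT : T ≤ n := by omega
  have hn1' : 1 ≤ n := by omega
  clear hn hT₁ hT₂
  obtain ⟨I, hI⟩ : ∃ I, I = r.eval (n + 1) - r.eval n := ⟨_, rfl⟩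
  obtain ⟨Y, hY⟩ : ∃ Y, Y = r.eval n - a * n := ⟨_, rfl⟩
  obtain ⟨s, hs⟩ : ∃ s, s = Y / E := ⟨_, rfl⟩
  rw [← hI] at hinc hgrow
  have hgrow' : E * (I + a * n + |N₀| + 1) ≤ Y := by
    have h1 : I + a * n + |N₀| + 1 ≤ (a + |N₀| + 1) * (I + n + 1) := by nlinarith
    have h2 : E * (I + a * n + |N₀| + 1) ≤ E * ((a + |N₀| + 1) * (I + n + 1)) :=
      mul_le_mul_of_nonneg_left h1 (by omega)
    nlinarith
  have hs1 : I + a * n + |N₀| + 1 ≤ s := by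
    rw [hs, Int.le_ediv_iff_mul_le (by omega)]
    linarith
  have hs2 : E * s ≤ Y := by
    rw [hs]
    exact Int.mul_ediv_self_le (by omega)
  have hs3 : Y < E * (s + 1) := by
    rw [hs]
    have := Int.lt_ediv_add_one_mul_self Y (by omega : 0 < E)
    linarith
  have hN₀ := le_abs_self N₀
  have han : 1 ≤ a * n := by nlinarith
  have hs0 : 1 ≤ s := by omega
  have hE2 : 2 * (a * s) + 2 * (b * s) ≤ Y := by
    rw [hE] at hs2
    linarith
  have hbs : s ≤ b * s := le_mul_of_one_le_left (by omega) hb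
  have has : s ≤ a * s := le_mul_of_one_le_left (by omega) ha
  have hYchi : ¬χ Y := by
    have := (hno n n hnT hn1' (by omega)).1
    rw [← hY] at this
    tauto
  have hY' : Y < r.eval (n + 1) - a * (n + 1) := by linarith
  have hY'chi : χ (r.eval (n + 1) - a * (n + 1)) := by
    have := (hno (n + 1) (n + 1) (by omega) (by omega) (by omega)).2
    tauto
  have hY'le : r.eval (n + 1) - a * (n + 1) ≤ 2 * Y := by
    rw [mul_add]
    omega
  have hCN : 2 * Y ≤ 8 * (a + b) * s := by
    rw [hE] at hs3
    nlinarith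
  obtain ⟨i, hi1, hi2, hi3⟩ : ∃ i, s ≤ i ∧ i ≤ Y ∧ χ i := by
    have := (hno (n + 1) s (by omega) hs0 (by omega)).2
    by_cases h : χ (b * s)
    · exact ⟨b * s, hbs, by omega, h⟩
    · exact ⟨r.eval (n + 1) - a * s, by omega, by omega, by tauto⟩
  obtain ⟨k, hk1, hk2, hk3, hk4⟩ := exists_switch hi2 hi3 hYchi
  obtain ⟨l, hl1, hl2, hl3, hl4⟩ := exists_switch (P := fun x => ¬χ x) hY'.le hYchi
    (not_not.2 hY'chi)
  exact ⟨s, k, l, by omega, by omega, by omega, by omega, by omega, hk3, hk4, hl3, not_not.1 hl4⟩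

theorem exists_not_colour {χ : ℤ → Prop} {r : ℤ[X]} {a b T : ℤ} (ha : 1 ≤ a) (hb : 1 ≤ b)
    (hdeg : 2 ≤ r.natDegree) (hlead : 0 < r.leadingCoeff) (hdvd : ∀ m, b ∣ r.eval (b * m))
    (hno : ∀ n s, T ≤ n → 1 ≤ s → 1 ≤ r.eval n - a * s →
      ¬(χ (b * s) ∧ χ (r.eval n - a * s) ∧ χ (b * n))) (n₀ : ℤ) :
    ∃ n, n₀ ≤ n ∧ ¬χ (b * n) := by
  by_contra! hcon
  obtain ⟨c, hc⟩ : ∃ c, c = max n₀ (max T 1) := ⟨_, rfl⟩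
  have hc1 : 1 ≤ c := by omega
  have hbc : 1 ≤ b * c := by nlinarith
  obtain ⟨T₁, hT₁⟩ := exists_mul_increment_le_eval hdeg hlead 0 (C := 1)
    (M := b * ((a + 1) * c)) (by norm_num) (by positivity)
  obtain ⟨m, hm⟩ : ∃ m, m = max c T₁ := ⟨_, rfl⟩
  have hm1 : 1 ≤ m := by omega
  have hbm : m ≤ b * m := le_mul_of_one_le_left (by omega) hb
  have hgrow := hT₁ (b * m) (by omega) (b * m) le_rfl (by omega)
  obtain ⟨e, he⟩ := hdvd m
  have hM : 0 ≤ b * ((a + 1) * c) := by positivity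
  rw [add_zero, sub_self, zero_add, he] at hgrow
  have he1 : b * ((a + 1) * c) ≤ b * e := by nlinarith
  have he2 : (a + 1) * c ≤ e := le_of_mul_le_mul_left he1 (by omega)
  have he3 : r.eval (b * m) - a * (b * c) = b * (e - a * c) := by
    rw [he]
    ring
  have hec : c ≤ e - a * c := by linarith
  have hcc : 1 ≤ b * (e - a * c) := by nlinarith
  have hbc' : c ≤ b * c := le_mul_of_one_le_left (by omega) hb
  refine hno (b * m) (b * c) (by omega) hbc (by omega) ⟨?_, ?_, ?_⟩
  · exact hcon _ (by omega)
  · rw [he3]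
    exact hcon _ (by omega)
  · exact hcon _ (by omega)

/-- `p(c t) / c` for a polynomial `p` without constant term. -/
noncomputable def Polynomial.scaleDiv (p : ℤ[X]) (c : ℤ) : ℤ[X] :=
  X * p.divX.comp (C c * X)

theorem Polynomial.eval_scaleDiv (p : ℤ[X]) (c t : ℤ) :
    (p.scaleDiv c).eval t = t * p.divX.eval (c * t) := by
  simp [scaleDiv]

theorem Polynomial.mul_eval_scaleDiv {p : ℤ[X]} (hp : p.coeff 0 = 0) (c t : ℤ) :
    c * (p.scaleDiv c).eval t = p.eval (c * t) := by
  conv_rhs => rw [← p.divX_mul_X_add, hp]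
  rw [eval_scaleDiv]
  simp
  ring

theorem Polynomial.natDegree_scaleDiv {p : ℤ[X]} (hp : 2 ≤ p.natDegree) {c : ℤ} (hc : 0 < c) :
    (p.scaleDiv c).natDegree = p.natDegree := by
  have hd : p.divX.natDegree = p.natDegree - 1 := natDegree_divX_eq_natDegree_tsub_one
  have h1 : (p.divX.comp (C c * X)).natDegree = p.natDegree - 1 := by
    rw [natDegree_comp, natDegree_C_mul_X c hc.ne', mul_one, hd]
  rw [scaleDiv, natDegree_X_mul, h1]
  · omega
  · rintro h
    rw [h, natDegree_zero] at h1
    omega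

theorem Polynomial.leadingCoeff_scaleDiv_pos {p : ℤ[X]} (hp : 2 ≤ p.natDegree)
    (hlead : 0 < p.leadingCoeff) {c : ℤ} (hc : 0 < c) : 0 < (p.scaleDiv c).leadingCoeff := by
  have hd : p.divX.leadingCoeff = p.leadingCoeff := by
    rw [leadingCoeff, natDegree_divX_eq_natDegree_tsub_one, coeff_divX, leadingCoeff]
    congr 1
    omega
  rw [scaleDiv, leadingCoeff_mul, leadingCoeff_X, one_mul,
    leadingCoeff_comp (by rw [natDegree_C_mul_X c hc.ne']; norm_num), hd]
  simp only [leadingCoeff_mul, leadingCoeff_C, leadingCoeff_X, mul_one]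
  positivity

/-- A partition of the integers into `P` and its complement has monochromatic solutions of
`a x + b y = p(z)` in positive integers with `z` arbitrarily large. -/
theorem exists_monochromatic_solution {P : ℤ → Prop} {p : ℤ[X]} {a b : ℤ} (ha : 1 ≤ a) (hb : 1 ≤ b)
    (hdeg : 2 ≤ p.natDegree) (hlead : 0 < p.leadingCoeff) (hconst : p.coeff 0 = 0) (T : ℤ) :
    ∃ x y z : ℤ, 1 ≤ x ∧ 1 ≤ y ∧ T ≤ z ∧ a * x + b * y = p.eval z ∧
      (P x ∧ P y ∧ P z ∨ ¬P x ∧ ¬P y ∧ ¬P z) := by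
  by_contra hcon
  have hno : ∀ x y z : ℤ, 1 ≤ x → 1 ≤ y → T ≤ z → a * x + b * y = p.eval z →
      ¬(P x ∧ P y ∧ P z) ∧ ¬(¬P x ∧ ¬P y ∧ ¬P z) := fun x y z hx hy hz h =>
    ⟨fun hP => hcon ⟨x, y, z, hx, hy, hz, h, Or.inl hP⟩,
      fun hP => hcon ⟨x, y, z, hx, hy, hz, h, Or.inr hP⟩⟩
  have hab : 1 ≤ a * b := one_le_mul_of_one_le_of_one_le ha hb
  have habb : 1 ≤ a * b * b := one_le_mul_of_one_le_of_one_le hab hb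
  set q := p.scaleDiv (a * b) with hq
  set r := p.scaleDiv (a * b * b) with hr
  have hqdeg : 2 ≤ q.natDegree := by rwa [hq, natDegree_scaleDiv hdeg (by omega)]
  have hrdeg : 2 ≤ r.natDegree := by rwa [hr, natDegree_scaleDiv hdeg (by omega)]
  have hqlead : 0 < q.leadingCoeff := leadingCoeff_scaleDiv_pos hdeg hlead (by omega)
  have hrlead : 0 < r.leadingCoeff := leadingCoeff_scaleDiv_pos hdeg hlead (by omega)
  obtain ⟨T', hT'⟩ : ∃ T', T' = max T 1 := ⟨_, rfl⟩
  have hnoq : ∀ t u v, T' ≤ t → 1 ≤ u → 1 ≤ v → u + v = q.eval t →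
      ¬(P (b * u) ∧ P (a * v) ∧ P (a * b * t)) ∧
      ¬(¬P (b * u) ∧ ¬P (a * v) ∧ ¬P (a * b * t)) := by
    intro t u v ht hu hv h
    have ht' : t ≤ a * b * t := le_mul_of_one_le_left (by omega) hab
    refine hno _ _ _ (by nlinarith) (by nlinarith) (by omega) ?_
    rw [← mul_eval_scaleDiv hconst, ← h]
    ring
  have hnor : ∀ n s, T' ≤ n → 1 ≤ s → 1 ≤ r.eval n - a * s →
      ¬(P (a * b * (b * s)) ∧ P (a * b * (r.eval n - a * s)) ∧ P (a * b * (b * n))) ∧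
      ¬(¬P (a * b * (b * s)) ∧ ¬P (a * b * (r.eval n - a * s)) ∧ ¬P (a * b * (b * n))) := by
    intro n s hn hs h
    have hn' : n ≤ a * b * b * n := le_mul_of_one_le_left (by omega) habb
    have hbs : 1 ≤ b * s := one_le_mul_of_one_le_of_one_le hb hs
    rw [← mul_assoc (a * b) b n]
    refine hno _ _ _ (one_le_mul_of_one_le_of_one_le hab hbs)
      (one_le_mul_of_one_le_of_one_le hab h) (by omega) ?_
    rw [← mul_eval_scaleDiv hconst]
    ring
  have hdvd : ∀ m, b ∣ r.eval (b * m) := by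
    intro m
    rw [hr, eval_scaleDiv, mul_assoc]
    exact dvd_mul_right _ _
  have hsw : ∀ n₀, ∃ n, n₀ ≤ n ∧ P (a * b * (b * n)) ∧ ¬P (a * b * (b * (n + 1))) := by
    intro n₀
    obtain ⟨i, hi, hPi⟩ := exists_not_colour (χ := fun t => ¬P (a * b * t)) ha hb hrdeg hrlead hdvd
      (fun n s h1 h2 h3 => (hnor n s h1 h2 h3).2) n₀
    obtain ⟨j, hj, hPj⟩ := exists_not_colour (χ := fun t => P (a * b * t)) ha hb hrdeg hrlead hdvd
      (fun n s h1 h2 h3 => (hnor n s h1 h2 h3).1) i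
    obtain ⟨k, h1, h2, h3, h4⟩ := exists_switch (P := fun t => P (a * b * (b * t))) hj
      (not_not.1 hPi) hPj
    exact ⟨k, by omega, h3, h4⟩
  obtain ⟨G, hG⟩ : ∃ G : ℤ, G = q.leadingCoeff * q.natDegree.factorial := ⟨_, rfl⟩
  have hG1 : 1 ≤ G := by
    rw [hG]
    exact one_le_mul_of_one_le_of_one_le hqlead (by exact_mod_cast q.natDegree.factorial_pos)
  have hper : ∀ x, 1 ≤ x → (P (b * x) ↔ P (b * (x + G))) := by
    intro x hx
    obtain ⟨T₁, hT₁⟩ := exists_lt_eval_succ_sub hqdeg hqlead 0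
    obtain ⟨T₂, hT₂⟩ := exists_mul_increment_le_eval hqdeg hqlead q.natDegree
      (C := 8 * (a + b)) (M := 2 ^ (q.natDegree + 1)) (by omega) (by positivity)
    obtain ⟨T₃, hT₃⟩ := exists_mul_increment_le_eval hqdeg hqlead 0
      (C := 1) (M := x + G + 1) (by norm_num) (by omega)
    obtain ⟨N, k, l, hN, hk1, hk2, hl1, hl2, hk3, hk4, hl3, hl4⟩ :=
      exists_comparable_switches (χ := fun t => P (a * b * t)) ha hb hrdeg hrlead hnor hsw
        (max T' (max T₁ (max T₂ T₃)))
    have hpow : (1 : ℤ) ≤ 2 ^ (q.natDegree + 1) := one_le_pow₀ (by norm_num)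
    have hposk := one_le_mul_of_one_le_of_one_le hpow (by omega : 1 ≤ k + 1)
    have hposl := one_le_mul_of_one_le_of_one_le hpow (by omega : 1 ≤ l + 1)
    have hbig := hT₃ N (by omega) N le_rfl (by omega)
    have hBk := hT₂ N (by omega) k hk1 hk2
    have hBl := hT₂ N (by omega) l hl1 hl2
    have hxN : x + G + 1 ≤ q.eval N := by
      rw [add_zero, sub_self, zero_add] at hbig
      nlinarith
    have hinv := stepInvariant_of_switches (A := fun u => P (b * u)) (A' := fun v => P (a * v))
      (χ := fun t => P (a * b * t)) (q := q) (N := N) (W := q.eval N - 1)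
      (B := max (q.eval (k + q.natDegree) - q.eval k) (q.eval (l + q.natDegree) - q.eval l))
      (by omega) (fun t u v ht => hnoq t u v (by omega))
      (fun t ht => by linarith [hT₁ t (by omega)]) (by omega) hk1 hl1 hk3 hk4 hl3 hl4
      (le_max_left _ _) (le_max_right _ _) (by
        rcases max_choice (q.eval (k + q.natDegree) - q.eval k)
          (q.eval (l + q.natDegree) - q.eval l) with h | h <;> rw [h] <;> linarith)
    rw [← hG] at hinv
    refine ⟨fun h => hinv.1 x hx (by omega) (by omega) (by omega) h, fun h => ?_⟩
    have := hinv.2 (x + G) (by omega) (by omega) (by omega) (by omega) h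
    rwa [add_neg_cancel_right] at this
  have hconstG : ∀ j, 1 ≤ j → (P (b * (G * j)) ↔ P (b * G)) := by
    intro j hj
    induction j, hj using Int.leInduction with
    | base => rw [mul_one]
    | succ j hj ih =>
      rw [← ih, mul_add, mul_one]
      exact (hper _ (one_le_mul_of_one_le_of_one_le hG1 hj)).symm
  obtain ⟨T₁, hT₁⟩ := exists_mul_increment_le_eval hqdeg hqlead 0
    (C := 1) (M := 2 * (b * G)) (by norm_num) (by positivity)
  obtain ⟨j, hj⟩ : ∃ j, j = max T' T₁ := ⟨_, rfl⟩
  have hbG : 1 ≤ b * G := one_le_mul_of_one_le_of_one_le hb hG1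
  have hjle : j ≤ b * G * j := le_mul_of_one_le_left (by omega) hbG
  have hgrow := hT₁ (b * G * j) (by omega) _ le_rfl (by omega)
  obtain ⟨w, hw⟩ : ∃ w, w = j * p.divX.eval (a * b * (b * G * j)) - 1 := ⟨_, rfl⟩
  have hqw : b * G + b * G * w = q.eval (b * G * j) := by
    rw [hq, eval_scaleDiv, hw]
    ring
  have hw1 : 1 ≤ w := by
    rw [add_zero, sub_self, zero_add, ← hqw] at hgrow
    have hpos : 0 ≤ b * G * (b * G * j) := mul_nonneg (by omega) (by omega)
    have : b * G * 1 ≤ b * G * w := by linarith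
    exact le_of_mul_le_mul_left this (by omega)
  have hfinal := hnoq (b * G * j) (b * G) (b * G * w) (by omega) hbG
    (one_le_mul_of_one_le_of_one_le hbG hw1) hqw
  have e1 := hconstG b hb
  have e2 := hconstG (a * w) (one_le_mul_of_one_le_of_one_le ha hw1)
  have e3 := hconstG (a * b * j) (one_le_mul_of_one_le_of_one_le hab (by omega))
  rw [show b * (G * b) = b * (b * G) by ring] at e1
  rw [show b * (G * (a * w)) = a * (b * G * w) by ring] at e2
  rw [show b * (G * (a * b * j)) = a * b * (b * G * j) by ring] at e3
  tauto

/-- Let `a` and `b` be positive integers with `gcd(a,b) = 1`, and let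
`p(z) = a_D z^D + ⋯ + a_1 z` be an integer polynomial with zero constant term, degree `D ≥ 2`,
positive leading coefficient and `a_1 ≠ 0`. Then the equation `a·x + b·y = p(z)` is 2-Ramsey:
every 2-colouring of the positive integers admits infinitely many monochromatic solutions. -/
theorem stmt_0 (a b : ℕ) (ha : 0 < a) (hb : 0 < b) (hab : Nat.gcd a b = 1)
    (p : Polynomial ℤ) (hdeg : 2 ≤ p.natDegree) (hlead : 0 < p.leadingCoeff)
    (hconst : p.coeff 0 = 0) (hlin : p.coeff 1 ≠ 0) :
    ∀ φ : ℕ → Fin 2,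
      {w : ℕ × ℕ × ℕ | 0 < w.1 ∧ 0 < w.2.1 ∧ 0 < w.2.2 ∧
        φ w.1 = φ w.2.1 ∧ φ w.1 = φ w.2.2 ∧
        (a : ℤ) * w.1 + (b : ℤ) * w.2.1 = p.eval (w.2.2 : ℤ)}.Infinite := by
  intro φ hfin
  obtain ⟨T, hT⟩ := (hfin.image fun w => w.2.2).bddAbove
  obtain ⟨x, y, z, hx, hy, hz, h, hP⟩ := exists_monochromatic_solution
    (P := fun x => φ x.toNat = 0) (a := a) (b := b) (by omega) (by omega) hdeg hlead hconst (T + 1)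
  have hcol : φ x.toNat = φ y.toNat ∧ φ x.toNat = φ z.toNat := by
    omega
  have hmem : z.toNat ≤ T := hT ⟨(x.toNat, y.toNat, z.toNat),
    ⟨by dsimp only; omega, by dsimp only; omega, by dsimp only; omega, hcol.1, hcol.2, by
      simpa only [Int.toNat_of_nonneg (show 0 ≤ x by omega),
        Int.toNat_of_nonneg (show 0 ≤ y by omega), Int.toNat_of_nonneg (show 0 ≤ z by omega)]
        using h⟩, rfl⟩
  omega
end

section
/- Let a and n be positive integers with n ≥ 2. Then the equation a·x + y = z^n is 2-Ramsey. -/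
section

open Finset Filter

/-- Iterated forward difference of `f` at `b`, with the steps listed in the first argument. -/
def iterDiff : List ℕ → (ℕ → ℤ) → ℕ → ℤ
  | [], f, b => f b
  | u :: us, f, b => iterDiff us f (b + u) - iterDiff us f b

lemma iterDiff_sum_mul (us : List ℕ) (s : Finset ℕ) (c : ℕ → ℤ) (f : ℕ → ℕ → ℤ) (b : ℕ) :
    iterDiff us (fun z => ∑ j ∈ s, c j * f j z) b = ∑ j ∈ s, c j * iterDiff us (f j) b := by
  induction us generalizing b with
  | nil => rfl
  | cons u us ih => simp only [iterDiff, ih, ← Finset.sum_sub_distrib, mul_sub]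

lemma iterDiff_shift_sub (us : List ℕ) (f : ℕ → ℤ) (u b : ℕ) :
    iterDiff us f (b + u) - iterDiff us f b = iterDiff us (fun z => f (z + u) - f z) b := by
  induction us generalizing b with
  | nil => rfl
  | cons v us ih =>
    simp only [iterDiff, ← ih]
    rw [add_right_comm b u v]
    ring

lemma iterDiff_cons_pow (u : ℕ) (us : List ℕ) (n b : ℕ) :
    iterDiff (u :: us) (fun z => (z : ℤ) ^ n) b =
      ∑ j ∈ range n, ((u : ℤ) ^ (n - j) * n.choose j) *
        iterDiff us (fun z => (z : ℤ) ^ j) b := by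
  rw [← iterDiff_sum_mul us (range n) (fun j => (u : ℤ) ^ (n - j) * n.choose j)
    (fun j z => (z : ℤ) ^ j)]
  simp only [iterDiff]
  rw [iterDiff_shift_sub]
  congr 1
  funext z
  push_cast
  rw [add_pow, Finset.sum_range_succ]
  simp only [Nat.sub_self, pow_zero, mul_one, Nat.choose_self, Nat.cast_one, add_sub_cancel_right]
  exact Finset.sum_congr rfl fun j _ => by ring

lemma iterDiff_pow_nonneg (us : List ℕ) (n b : ℕ) :
    0 ≤ iterDiff us (fun z => (z : ℤ) ^ n) b := by
  induction us generalizing n with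
  | nil => simp only [iterDiff]; positivity
  | cons u us ih =>
    rw [iterDiff_cons_pow]
    exact Finset.sum_nonneg fun j _ => mul_nonneg (by positivity) (ih j)

lemma prod_mul_pow_le_iterDiff (us : List ℕ) (n b : ℕ) (h : us.length ≤ n) :
    (us.prod : ℤ) * (b : ℤ) ^ (n - us.length) ≤ iterDiff us (fun z => (z : ℤ) ^ n) b := by
  induction us generalizing n with
  | nil => simp [iterDiff]
  | cons u us ih =>
    obtain ⟨k, rfl⟩ : ∃ k, n = k + 1 := ⟨n - 1, by simp at h; omega⟩
    have hk : us.length ≤ k := by simpa using h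
    rw [iterDiff_cons_pow, Finset.sum_range_succ]
    have h1 : 0 ≤ ∑ j ∈ range k, ((u : ℤ) ^ (k + 1 - j) * (k + 1).choose j) *
        iterDiff us (fun z => (z : ℤ) ^ j) b :=
      Finset.sum_nonneg fun j _ => mul_nonneg (by positivity) (iterDiff_pow_nonneg us j b)
    have h2 := mul_le_mul_of_nonneg_left (ih k hk) (Nat.cast_nonneg (α := ℤ) u)
    have h3 : 0 ≤ (u : ℤ) * k * iterDiff us (fun z => (z : ℤ) ^ k) b :=
      mul_nonneg (by positivity) (iterDiff_pow_nonneg us k b)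
    have h4 : k + 1 - k = 1 := by omega
    simp only [List.prod_cons, List.length_cons, Nat.add_sub_add_right, h4, pow_one,
      Nat.choose_succ_self_right, Nat.cast_mul, Nat.cast_add, Nat.cast_one]
    nlinarith

lemma exists_iterDiff_pow_le (n i V : ℕ) :
    ∃ K : ℕ, ∀ us : List ℕ, us.length = i → (∀ u ∈ us, u ≤ V) → ∀ b : ℕ, 0 < b →
      iterDiff us (fun z => (z : ℤ) ^ n) b ≤ K * (b : ℤ) ^ (n - i) := by
  induction i generalizing n with
  | zero =>
    refine ⟨1, fun us hus _ b _ => ?_⟩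
    obtain rfl := List.length_eq_zero_iff.1 hus
    simp [iterDiff]
  | succ i ih =>
    choose K hK using ih
    refine ⟨∑ j ∈ range n, V ^ (n - j) * n.choose j * K j, fun us hus hV b hb => ?_⟩
    match us, hus with
    | u :: us, hus =>
      rw [iterDiff_cons_pow]
      push_cast
      rw [Finset.sum_mul]
      refine Finset.sum_le_sum fun j hj => ?_
      have hj' := Finset.mem_range.1 hj
      have h1 := hK j us (by simpa using hus) (fun v hv => hV v (by simp [hv])) b hb
      have hu : (u : ℤ) ≤ V := by exact_mod_cast hV u (by simp)
      have hb1 : (1 : ℤ) ≤ b := by exact_mod_cast hb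
      have h2 : (b : ℤ) ^ (j - i) ≤ (b : ℤ) ^ (n - (i + 1)) :=
        pow_le_pow_right₀ hb1 (by omega)
      have h3 := iterDiff_pow_nonneg us j b
      calc _ ≤ ((V : ℤ) ^ (n - j) * n.choose j) * (K j * (b : ℤ) ^ (n - (i + 1))) := by
            gcongr
            exact h1.trans (by gcongr)
        _ = _ := by ring

/-- `A` contains the Hilbert cube with base point `b` and steps `us`. -/
def HasCube (A : Set ℕ) (us : List ℕ) (b : ℕ) : Prop :=
  ∀ l : List ℕ, l.Sublist us → b + l.sum ∈ A

lemma HasCube.tail {A : Set ℕ} {u : ℕ} {us : List ℕ} {b : ℕ} (h : HasCube A (u :: us) b) :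
    HasCube A us b := fun l hl => h l (hl.cons u)

lemma HasCube.tail_shift {A : Set ℕ} {u : ℕ} {us : List ℕ} {b : ℕ}
    (h : HasCube A (u :: us) b) : HasCube A us (b + u) := fun l hl => by
  simpa [add_assoc] using h (u :: l) (hl.cons_cons u)

lemma HasCube.cons {A : Set ℕ} {u : ℕ} {us : List ℕ} {b : ℕ} (h : HasCube A us b)
    (h' : HasCube A us (b + u)) : HasCube A (u :: us) b := by
  intro l hl
  rcases List.sublist_cons_iff.1 hl with hl | ⟨r, rfl, hr⟩
  · exact h l hl
  · simpa [add_assoc] using h' r hr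

/-- If all sufficiently long intervals meet `A`, then `A` contains cubes with large steps, of
finitely many shapes, near any point. -/
lemma exists_cubes_of_syndetic {A : Set ℕ} {B N : ℕ}
    (hA : ∀ X, N ≤ X → ∃ z ∈ A, X ≤ z ∧ z ≤ X + B) (U i : ℕ) :
    ∃ (L : Finset (List ℕ)) (V : ℕ), (∀ us ∈ L, us.length = i ∧ ∀ u ∈ us, U ≤ u) ∧
      ∀ X, N ≤ X → ∃ us ∈ L, ∃ b, X ≤ b ∧ b ≤ X + V ∧ HasCube A us b := by
  classical
  induction i with
  | zero =>
    refine ⟨{[]}, B, by simp, fun X hX => ?_⟩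
    obtain ⟨z, hz, h1, h2⟩ := hA X hX
    refine ⟨[], by simp, z, h1, h2, fun l hl => ?_⟩
    obtain rfl := List.sublist_nil.1 hl
    simpa using hz
  | succ i ih =>
    obtain ⟨L, V, hL, hX⟩ := ih
    let R := #(range (V + 1) ×ˢ L)
    let s := V + U
    refine ⟨((range (R * s + 1)).filter (U ≤ ·) ×ˢ L).image fun p => p.1 :: p.2, R * s + V,
      ?_, fun X hNX => ?_⟩
    · simp only [Finset.mem_image, Finset.mem_product, Finset.mem_filter]
      rintro _ ⟨⟨u, us⟩, ⟨⟨-, hu⟩, hus⟩, rfl⟩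
      obtain ⟨h1, h2⟩ := hL us hus
      simp only [List.length_cons, h1, List.mem_cons, forall_eq_or_imp, true_and]
      exact ⟨hu, h2⟩
    · choose us hus b hb1 hb2 hb3 using fun t : ℕ => hX (X + t * s) (by omega)
      obtain ⟨t, ht, t', ht', hne, heq⟩ :=
        Finset.exists_ne_map_eq_of_card_lt_of_maps_to (s := range (R + 1))
          (t := range (V + 1) ×ˢ L) (f := fun t => (b t - (X + t * s), us t))
          (by simp [R]) (fun t _ => by
            have h1 := hb2 t
            simp only [Finset.coe_product, Set.mem_prod, Finset.mem_coe, Finset.mem_range]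
            exact ⟨by omega, hus t⟩)
      wlog hlt : t < t' generalizing t t'
      · exact this t' ht' t ht hne.symm heq.symm (by omega)
      simp only [Prod.mk.injEq] at heq
      have h1 := hb1 t
      have h2 := hb1 t'
      have h3 := hb2 t
      have h4 : t' * s ≤ R * s := Nat.mul_le_mul_right _ (by simp at ht'; omega)
      have h5 : t * s + s ≤ t' * s := by nlinarith
      have h6 : t * s ≤ t' * s := by omega
      refine ⟨(t' * s - t * s) :: us t, ?_, b t, by omega, by omega, ?_⟩
      · simp only [Finset.mem_image, Finset.mem_product, Finset.mem_filter, Finset.mem_range]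
        exact ⟨(t' * s - t * s, us t), ⟨⟨by omega, by omega⟩, hus t⟩, rfl⟩
      · refine (hb3 t).cons ?_
        have h7 : b t + (t' * s - t * s) = b t' := by omega
        rw [h7, heq.2]
        exact hb3 t'

lemma le_of_half_absorbed {Q X T P : ℕ} (hP : 0 < P) (hX : 2 * Q * X ≤ P) (hT : P ≤ Q * T) :
    X ≤ T ∧ P ≤ 2 * Q * (T - X) := by
  have hQ : 0 < Q := by
    rcases Nat.eq_zero_or_pos Q with rfl | h
    · simp at hT; omega
    · exact h
  have h : 2 * X ≤ T := by
    refine Nat.le_of_mul_le_mul_left ?_ hQ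
    linarith
  refine ⟨by omega, hT.trans ?_⟩
  calc Q * T ≤ Q * (2 * (T - X)) := Nat.mul_le_mul_left _ (by omega)
    _ = _ := by ring

lemma approx_succ {n i G : ℕ} {S : ℕ → AddSubmonoid ℕ} {m : ℕ → ℕ}
    (hm : Tendsto m atTop atTop) (hG : 0 < G) (hi : 1 ≤ i) (hin : i + 1 ≤ n)
    (hS : ∀ U, ∃ V, ∀ᶠ t in atTop, ∃ M E, M ∈ S t ∧ M + E ∈ S t ∧ 0 < E ∧
      E ≤ V * m t ^ (n - (i + 1)) ∧ M ≤ V * m t ^ (n - 1) ∧ U * M ≤ E * m t ^ i)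
    (hT : ∀ Q, ∃ C, ∀ᶠ t in atTop, ∀ T, G ∣ T → m t ^ n ≤ Q * T →
      ∃ s ∈ S t, ∃ r, T = s + r ∧ G ∣ r ∧ r ≤ C * m t ^ (n - i)) (Q : ℕ) :
    ∃ C, ∀ᶠ t in atTop, ∀ T, G ∣ T → m t ^ n ≤ Q * T →
      ∃ s ∈ S t, ∃ r, T = s + r ∧ G ∣ r ∧ r ≤ C * m t ^ (n - (i + 1)) := by
  obtain ⟨C, hC⟩ := hT (2 * Q)
  obtain ⟨V, hV⟩ := hS (4 * Q * G * (C + 1))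
  refine ⟨G * V, ?_⟩
  filter_upwards [hC, hV, hm.eventually_ge_atTop (4 * Q * G * V + 1)]
    with t hC ⟨M, E, hM, hME, hE0, hE, hMle, hU⟩ hmt T hGT hT
  have hm0 : 0 < m t := by omega
  set k := C * m t ^ (n - i) / E with hk
  have hkE : k * E ≤ C * m t ^ (n - i) := Nat.div_mul_le_self _ _
  have hpow : m t ^ (n - i) * m t ^ i = m t ^ n := by rw [← pow_add]; congr 1; omega
  have hpow' : m t ^ (n - 1) * m t = m t ^ n := by rw [← pow_succ]; congr 1; omega
  have hc1 : 4 * Q * G * (k * M) ≤ m t ^ n := by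
    refine Nat.le_of_mul_le_mul_left ?_ (Nat.succ_pos C)
    calc (C + 1) * (4 * Q * G * (k * M)) = k * (4 * Q * G * (C + 1) * M) := by ring
      _ ≤ k * (E * m t ^ i) := Nat.mul_le_mul_left _ hU
      _ = (k * E) * m t ^ i := by ring
      _ ≤ (C * m t ^ (n - i)) * m t ^ i := Nat.mul_le_mul_right _ hkE
      _ = C * m t ^ n := by rw [mul_assoc, hpow]
      _ ≤ (C + 1) * m t ^ n := Nat.mul_le_mul_right _ (by omega)
  have hc2 : 4 * Q * G * M ≤ m t ^ n := by
    calc 4 * Q * G * M ≤ 4 * Q * G * (V * m t ^ (n - 1)) := Nat.mul_le_mul_left _ hMle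
      _ = m t ^ (n - 1) * (4 * Q * G * V) := by ring
      _ ≤ m t ^ (n - 1) * m t := Nat.mul_le_mul_left _ (by omega)
      _ = _ := hpow'
  have hcost : 2 * Q * ((k + 1) * (G * M)) ≤ m t ^ n := by
    have : 2 * (2 * Q * ((k + 1) * (G * M))) = 4 * Q * G * (k * M) + 4 * Q * G * M := by ring
    omega
  obtain ⟨hX, hT'⟩ := le_of_half_absorbed (pow_pos hm0 n) hcost hT
  obtain ⟨s, hs, r, hTs, hGr, hr⟩ := hC (T - (k + 1) * (G * M))
    (Nat.dvd_sub hGT (Dvd.intro_left _ (by ring : (k + 1) * M * G = _) )) hT'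
  have hq : r / (G * E) ≤ k := by
    rw [hk]
    refine Nat.div_le_div hr ?_ (by omega)
    nlinarith
  have hrdiv := Nat.div_add_mod r (G * E)
  set q := r / (G * E)
  refine ⟨s + (q * G) • (M + E) + ((k + 1 - q) * G) • M,
    add_mem (add_mem hs (AddSubmonoid.nsmul_mem _ hME _)) (AddSubmonoid.nsmul_mem _ hM _),
    r % (G * E), ?_, ?_, ?_⟩
  · obtain ⟨d, hd⟩ : ∃ d, k + 1 = q + d := ⟨k + 1 - q, by omega⟩
    have h1 : T = s + r + (k + 1) * (G * M) := by omega
    have h2 : k + 1 - q = d := by omega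
    rw [h1, h2, hd, ← hrdiv, smul_eq_mul, smul_eq_mul, hrdiv]
    have : G * E * q + r % (G * E) = r := hrdiv
    nlinarith
  · exact (Nat.dvd_mod_iff (Dvd.intro _ rfl)).2 hGr
  · refine (Nat.mod_lt _ (by positivity)).le.trans ?_
    rw [mul_assoc]
    exact Nat.mul_le_mul_left _ hE

/-- If the monoids `S t` contain pairs of elements with differences of every order of magnitude
`m t ^ (n - i)`, cheaply compared to the difference, then `S t` contains all multiples of a fixed
number from a small proportion of `m t ^ n` on. -/
lemma exists_forall_dvd_mem {n : ℕ} {S : ℕ → AddSubmonoid ℕ} {m : ℕ → ℕ}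
    (hm : Tendsto m atTop atTop) (hn : 1 ≤ n)
    (hS : ∀ i U, 1 ≤ i → i ≤ n → ∃ V, ∀ᶠ t in atTop, ∃ M E, M ∈ S t ∧ M + E ∈ S t ∧ 0 < E ∧
      E ≤ V * m t ^ (n - i) ∧ M ≤ V * m t ^ (n - 1) ∧ (2 ≤ i → U * M ≤ E * m t ^ (i - 1))) :
    ∃ G, 0 < G ∧ ∀ Q, ∀ᶠ t in atTop, ∀ T, G ∣ T → m t ^ n ≤ Q * T → T ∈ S t := by
  obtain ⟨V, hV⟩ := hS n 0 hn le_rfl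
  refine ⟨V.factorial, V.factorial_pos, fun Q => ?_⟩
  have key : ∀ i, 1 ≤ i → i ≤ n → ∀ Q, ∃ C, ∀ᶠ t in atTop, ∀ T, V.factorial ∣ T →
      m t ^ n ≤ Q * T →
      ∃ s ∈ S t, ∃ r, T = s + r ∧ V.factorial ∣ r ∧ r ≤ C * m t ^ (n - i) := by
    intro i hi
    induction i, hi using Nat.le_induction with
    | base =>
      intro h1 Q
      obtain ⟨W, hW⟩ := hS 1 0 le_rfl h1
      refine ⟨V.factorial * (2 * W), ?_⟩
      filter_upwards [hW] with t ⟨M, E, hM, hME, hE0, hE, hMle, _⟩ T hGT _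
      refine ⟨(T / (V.factorial * (M + E)) * V.factorial) • (M + E),
        AddSubmonoid.nsmul_mem _ hME _, T % (V.factorial * (M + E)), ?_, ?_, ?_⟩
      · rw [smul_eq_mul]
        have := Nat.div_add_mod T (V.factorial * (M + E))
        nlinarith
      · exact (Nat.dvd_mod_iff (Dvd.intro _ rfl)).2 hGT
      · refine (Nat.mod_lt _ (Nat.mul_pos V.factorial_pos (by omega))).le.trans ?_
        rw [mul_assoc]
        exact Nat.mul_le_mul_left _ (by linarith)
    | succ i hi ih =>
      intro hin
      refine approx_succ hm V.factorial_pos hi hin (fun U => ?_) (ih (by omega))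
      obtain ⟨W, hW⟩ := hS (i + 1) U (by omega) hin
      refine ⟨W, ?_⟩
      filter_upwards [hW] with t ⟨M, E, hM, hME, hE0, hE, hMle, hU⟩
      exact ⟨M, E, hM, hME, hE0, hE, hMle, by simpa using hU (by omega)⟩
  obtain ⟨C, hC⟩ := key n hn le_rfl (2 * Q)
  filter_upwards [hC, hV, hm.eventually_ge_atTop (2 * Q * (V.factorial * C) * V + 1)]
    with t hC ⟨M, E, hM, hME, hE0, hE, hMle, _⟩ hmt T hGT hT
  simp only [Nat.sub_self, pow_zero, mul_one] at hE hC
  have hm0 : 0 < m t := by omega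
  have hEV : E ∣ V.factorial := Nat.dvd_factorial hE0 hE
  have hpow' : m t ^ (n - 1) * m t = m t ^ n := by rw [← pow_succ]; congr 1; omega
  have hcost : 2 * Q * (C * M * V.factorial) ≤ m t ^ n := by
    calc 2 * Q * (C * M * V.factorial)
        ≤ 2 * Q * (C * (V * m t ^ (n - 1)) * V.factorial) := by gcongr
      _ = m t ^ (n - 1) * (2 * Q * (V.factorial * C) * V) := by ring
      _ ≤ m t ^ (n - 1) * m t := Nat.mul_le_mul_left _ (by omega)
      _ = _ := hpow'
  obtain ⟨hX, hT'⟩ := le_of_half_absorbed (pow_pos hm0 n) hcost hT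
  obtain ⟨s, hs, r, hTs, hGr, hr⟩ := hC (T - C * M * V.factorial)
    (Nat.dvd_sub hGT (Dvd.intro_left _ rfl)) hT'
  obtain ⟨q, rfl⟩ := hEV.trans hGr
  have hq : q ≤ C * V.factorial :=
    calc q ≤ E * q := Nat.le_mul_of_pos_left _ hE0
      _ ≤ C := hr
      _ ≤ C * V.factorial := Nat.le_mul_of_pos_right _ V.factorial_pos
  obtain ⟨d, hd⟩ := Nat.exists_eq_add_of_le hq
  have h1 : T = s + q • (M + E) + d • M := by
    have h2 : C * M * V.factorial = (q + d) * M := by rw [← hd]; ring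
    have h3 : T = s + E * q + (q + d) * M := by omega
    rw [h3, smul_eq_mul, smul_eq_mul]
    ring
  rw [h1]
  exact add_mem (add_mem hs (AddSubmonoid.nsmul_mem _ hME _)) (AddSubmonoid.nsmul_mem _ hM _)

lemma iterDiff_const_mul (us : List ℕ) (f : ℕ → ℤ) (σ : ℤ) (b : ℕ) :
    iterDiff us (fun z => σ * f z) b = σ * iterDiff us f b := by
  induction us generalizing b with
  | nil => rfl
  | cons u us ih => simp only [iterDiff, ih, mul_sub]

lemma iterDiff_const_mul_sub {us : List ℕ} (hus : us ≠ []) (f : ℕ → ℤ) (σ k : ℤ) (b : ℕ) :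
    iterDiff us (fun z => σ * (f z - k)) b = σ * iterDiff us f b := by
  match us, hus with
  | u :: us, _ =>
    simp only [iterDiff]
    rw [iterDiff_shift_sub, iterDiff_shift_sub, ← iterDiff_const_mul]
    congr 1
    funext z
    ring

lemma exists_pair_of_hasCube {S : AddSubmonoid ℕ} {a X : ℕ} {A : Set ℕ} {f : ℕ → ℤ}
    (hA : ∀ z ∈ A, ∃ F ∈ S, (a : ℤ) * (F : ℤ) = f z ∧ F ≤ X) {us : List ℕ} {b : ℕ}
    (h : HasCube A us b) :
    ∃ P ∈ S, ∃ M ∈ S, (a : ℤ) * ((P : ℤ) - M) = iterDiff us f b ∧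
      P ≤ 2 ^ us.length * X ∧ M ≤ 2 ^ us.length * X := by
  induction us generalizing b with
  | nil =>
    obtain ⟨F, hF, hF1, hF2⟩ := hA b (by simpa using h [] (List.Sublist.refl _))
    exact ⟨F, hF, 0, zero_mem _, by simpa [iterDiff] using hF1, by simpa using hF2, by simp⟩
  | cons u us ih =>
    obtain ⟨P, hP, M, hM, h1, h2, h3⟩ := ih h.tail
    obtain ⟨P', hP', M', hM', h1', h2', h3'⟩ := ih h.tail_shift
    refine ⟨P' + M, add_mem hP' hM, M' + P, add_mem hM' hP, ?_, ?_, ?_⟩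
    · simp only [iterDiff, ← h1, ← h1']
      push_cast
      ring
    · rw [List.length_cons, pow_succ]
      linarith
    · rw [List.length_cons, pow_succ]
      linarith

lemma sum_le_length_mul_prod {us : List ℕ} (h : ∀ u ∈ us, 1 ≤ u) :
    us.sum ≤ us.length * us.prod := by
  induction us with
  | nil => simp
  | cons u us ih =>
    simp only [List.mem_cons, forall_eq_or_imp] at h
    have h1 := ih h.2
    have h2 : 1 ≤ us.prod := List.one_le_prod_of_one_le h.2
    simp only [List.sum_cons, List.length_cons, List.prod_cons]
    nlinarith [Nat.mul_le_mul_left u h2, Nat.mul_le_mul h.1 (le_refl (us.length * us.prod))]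

lemma mul_sum_le_length_mul_prod {us : List ℕ} {U : ℕ} (hU : 1 ≤ U) (h : ∀ u ∈ us, U ≤ u)
    (hlen : 2 ≤ us.length) : U ≤ us.prod ∧ U * us.sum ≤ us.length * us.prod := by
  match us, hlen with
  | u :: v :: us, _ =>
    have h1 : ∀ w ∈ v :: us, 1 ≤ w := fun w hw => hU.trans (h w (List.mem_cons_of_mem _ hw))
    have h2 := sum_le_length_mul_prod h1
    have h3 : 1 ≤ us.prod := List.one_le_prod_of_one_le fun w hw => h1 w (by simp [hw])
    have hu : U ≤ u := h u (by simp)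
    have hv : U ≤ (v :: us).prod := by
      rw [List.prod_cons]
      exact (h v (by simp)).trans (Nat.le_mul_of_pos_right _ h3)
    rw [List.prod_cons, List.sum_cons, List.length_cons]
    refine ⟨hv.trans (Nat.le_mul_of_pos_left _ (by omega)), ?_⟩
    have h4 := Nat.mul_le_mul hu h2
    have h5 := Nat.mul_le_mul_right u hv
    nlinarith

lemma mul_add_le_of_mul_le {Λ B i s p : ℕ} (hi : 0 < i) (h1 : Λ * (B + i) + 1 ≤ p)
    (h2 : (Λ * (B + i) + 1) * s ≤ i * p) : Λ * (B + s) ≤ p := by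
  refine Nat.le_of_mul_le_mul_left (c := B + i) ?_ (by omega)
  have h3 := Nat.mul_le_mul_left B h1
  calc (B + i) * (Λ * (B + s)) ≤ (B + i) * (Λ * (B + s)) + (B + s) := Nat.le_add_right _ _
    _ = B * (Λ * (B + i) + 1) + (Λ * (B + i) + 1) * s := by ring
    _ ≤ B * p + i * p := Nat.add_le_add h3 h2
    _ = (B + i) * p := by ring

/-- The cube criterion: if `S t` contains the numbers `±(z ^ n - w ^ n) / a` for `z` in cubes of
every dimension with large steps near some pivot `w`, then `S t` contains all multiples of a fixed
number from a small proportion of `m t ^ n` on. -/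
lemma exists_forall_dvd_mem_of_cubes {a n : ℕ} {S : ℕ → AddSubmonoid ℕ} {m : ℕ → ℕ}
    (hm : Tendsto m atTop atTop) (ha : 0 < a) (hn : 1 ≤ n)
    (hcube : ∃ B : ℕ, ∀ U i, ∃ V, ∀ᶠ t in atTop, ∃ (w b : ℕ) (us : List ℕ) (σ : ℤ),
      us.length = i ∧ (∀ u ∈ us, U ≤ u) ∧ us.sum ≤ V ∧ (σ = 1 ∨ σ = -1) ∧ w ≤ 3 * m t ∧
      HasCube {z | m t ≤ z ∧ z ≤ 3 * m t ∧ |(z : ℤ) - w| ≤ ((B + us.sum : ℕ) : ℤ) ∧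
        ∃ F ∈ S t, (a : ℤ) * (F : ℤ) = σ * ((z : ℤ) ^ n - (w : ℤ) ^ n)} us b) :
    ∃ G, 0 < G ∧ ∀ Q, ∀ᶠ t in atTop, ∀ T, G ∣ T → m t ^ n ≤ Q * T → T ∈ S t := by
  obtain ⟨B, hcube⟩ := hcube
  refine exists_forall_dvd_mem hm hn fun i U hi hin => ?_
  set Λ := a * U * 2 ^ i * n * 3 ^ (n - 1) with hΛ
  obtain ⟨V, hV⟩ := hcube (Λ * (B + i) + 1) i
  obtain ⟨K, hK⟩ := exists_iterDiff_pow_le n i V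
  refine ⟨K * 3 ^ n + 2 ^ i * ((B + V) * n * 3 ^ (n - 1)), ?_⟩
  filter_upwards [hV, hm.eventually_ge_atTop 1]
    with t ⟨w, b, us, σ, hlen, hus, hsum, hσ, hw, hc⟩ hm1
  have hb : m t ≤ b ∧ b ≤ 3 * m t := by
    have := hc [] (List.nil_sublist _)
    simp only [List.sum_nil, add_zero, Set.mem_ofPred_eq] at this
    exact ⟨this.1, this.2.1⟩
  have hus1 : ∀ u ∈ us, 1 ≤ u := fun u hu => le_trans (by omega) (hus u hu)
  have hne : us ≠ [] := by rintro rfl; simp at hlen; omega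
  set X := (B + us.sum) * n * (3 * m t) ^ (n - 1) with hX
  obtain ⟨P, hP, M, hM, hPM, hPX, hMX⟩ := exists_pair_of_hasCube (S := S t) (a := a) (X := X)
    (f := fun z : ℕ => σ * ((z : ℤ) ^ n - (w : ℤ) ^ n)) (by
      rintro z ⟨hz1, hz2, hz3, F, hF, hFz⟩
      refine ⟨F, hF, hFz, ?_⟩
      have h1 := abs_pow_sub_pow_le (α := ℤ) z w n
      have h2 : (a : ℤ) * F ≤ |(z : ℤ) ^ n - (w : ℤ) ^ n| := by
        rw [hFz]
        rcases hσ with rfl | rfl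
        · rw [one_mul]
          exact le_abs_self _
        · simpa using neg_le_abs ((z : ℤ) ^ n - (w : ℤ) ^ n)
      have h3 : max |(z : ℤ)| |(w : ℤ)| ≤ 3 * m t := by
        rw [Nat.abs_cast, Nat.abs_cast]
        exact max_le (by exact_mod_cast hz2) (by exact_mod_cast hw)
      have h4 : (F : ℤ) ≤ a * F := by
        exact_mod_cast Nat.le_mul_of_pos_left F ha
      have h5 : (F : ℤ) ≤ X := by
        refine (h4.trans h2).trans (h1.trans ?_)
        rw [hX, Nat.cast_mul, Nat.cast_mul, Nat.cast_pow, Nat.cast_mul 3]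
        gcongr
        exact_mod_cast h3
      exact_mod_cast h5) hc
  rw [iterDiff_const_mul_sub hne] at hPM
  rw [hlen] at hPX hMX
  obtain ⟨p, hp, q, hq, hpq, hqX⟩ : ∃ p ∈ S t, ∃ q ∈ S t,
      (a : ℤ) * ((p : ℤ) - q) = iterDiff us (fun z : ℕ => (z : ℤ) ^ n) b ∧ q ≤ 2 ^ i * X := by
    rcases hσ with rfl | rfl
    · exact ⟨P, hP, M, hM, by simpa using hPM, hMX⟩
    · exact ⟨M, hM, P, hP, by linarith, hPX⟩
  have hlow := prod_mul_pow_le_iterDiff us n b (by omega)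
  have hup := hK us hlen (fun u hu => (List.single_le_sum (by simp) u hu).trans hsum) b (by omega)
  rw [← hpq] at hlow hup
  rw [hlen] at hlow
  have hprod : 1 ≤ us.prod := List.one_le_prod_of_one_le hus1
  have hbm : (m t) ^ (n - i) ≤ b ^ (n - i) := Nat.pow_le_pow_left hb.1 _
  have hmpos : 1 ≤ m t ^ (n - i) := Nat.one_le_pow _ _ hm1
  have hlt : q < p := by
    by_contra hcon
    have h1 : (a : ℤ) * ((p : ℤ) - q) ≤ 0 :=
      mul_nonpos_of_nonneg_of_nonpos (by positivity) (by omega)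
    have h2 : (1 : ℤ) ≤ us.prod * (b : ℤ) ^ (n - i) := by
      exact_mod_cast Nat.mul_pos hprod (hmpos.trans hbm)
    linarith
  obtain ⟨E, rfl⟩ := Nat.exists_eq_add_of_le hlt.le
  have hE : ((q + E : ℕ) : ℤ) - q = E := by push_cast; ring
  rw [hE] at hlow hup
  norm_cast at hlow hup
  have hmn : m t ^ (n - i) * m t ^ (i - 1) = m t ^ (n - 1) := by
    rw [← pow_add]; congr 1; omega
  refine ⟨q, E, hq, hp, by omega, ?_, ?_, fun hi2 => ?_⟩
  · calc E ≤ a * E := Nat.le_mul_of_pos_left _ ha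
      _ ≤ K * b ^ (n - i) := hup
      _ ≤ K * (3 * m t) ^ (n - i) := by gcongr; exact hb.2
      _ = K * 3 ^ (n - i) * m t ^ (n - i) := by rw [mul_pow, mul_assoc]
      _ ≤ K * 3 ^ n * m t ^ (n - i) := by gcongr <;> omega
      _ ≤ _ := by gcongr; omega
  · calc q ≤ 2 ^ i * X := hqX
      _ ≤ 2 ^ i * ((B + V) * n * (3 * m t) ^ (n - 1)) := by rw [hX]; gcongr
      _ = 2 ^ i * ((B + V) * n * 3 ^ (n - 1)) * m t ^ (n - 1) := by rw [mul_pow]; ring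
      _ ≤ _ := by gcongr; omega
  · refine Nat.le_of_mul_le_mul_left ?_ ha
    obtain ⟨h1, h2⟩ := mul_sum_le_length_mul_prod (by omega) hus (by omega)
    rw [hlen] at h2
    have h3 := mul_add_le_of_mul_le (by omega) h1 h2
    calc a * (U * q) ≤ a * (U * (2 ^ i * X)) := by gcongr
      _ = Λ * (B + us.sum) * m t ^ (n - 1) := by rw [hX, hΛ, mul_pow]; ring
      _ ≤ us.prod * m t ^ (n - 1) := by gcongr
      _ = us.prod * m t ^ (n - i) * m t ^ (i - 1) := by rw [mul_assoc, hmn]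
      _ ≤ us.prod * b ^ (n - i) * m t ^ (i - 1) :=
        Nat.mul_le_mul_right _ (Nat.mul_le_mul_left _ hbm)
      _ ≤ a * E * m t ^ (i - 1) := Nat.mul_le_mul_right _ hlow
      _ = _ := by ring

/-- The colouring `φ` has no monochromatic solution of `a * x + y = z ^ n` with `N ≤ z`. -/
def NoMonoSol (a n N : ℕ) (φ : ℕ → Fin 2) : Prop :=
  ∀ x y z, 0 < x → 0 < y → N ≤ z → a * x + y = z ^ n → φ x = φ y → φ x ≠ φ z

lemma fin_two_eq_of_ne {u v c : Fin 2} (hu : u ≠ c) (hv : v ≠ c) : u = v := by omega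

lemma NoMonoSol.exists_dvd_color {a n N : ℕ} {φ : ℕ → Fin 2} (h : NoMonoSol a n N φ) (hn : 2 ≤ n)
    {q : ℕ} (hq : 0 < q) (c : Fin 2) (M : ℕ) : ∃ x, M ≤ x ∧ 0 < x ∧ q ∣ x ∧ φ x = c := by
  by_contra! hcon
  obtain ⟨z, hz, hqz⟩ : ∃ z, M + N + a + 1 ≤ z ∧ q ∣ z :=
    ⟨q * (M + N + a + 1), Nat.le_mul_of_pos_left _ hq, dvd_mul_right _ _⟩
  have h1 : z ≤ z ^ (n - 1) := Nat.le_self_pow (by omega) z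
  have h2 : z ≤ z * (z ^ (n - 1) - a) := Nat.le_mul_of_pos_right _ (by omega)
  have h3 : a * z + z * (z ^ (n - 1) - a) = z ^ n := by
    rw [mul_comm a z, ← mul_add, Nat.add_sub_cancel' (by omega), ← pow_succ']
    congr 1
    omega
  exact h z _ z (by omega) (by omega) (by omega) h3
    (fin_two_eq_of_ne (hcon z (by omega) (by omega) hqz)
      (hcon _ (by omega) (by omega) (hqz.mul_right _))) rfl

/-- The shifts that preserve the colour `c` below `m ^ n / a`. -/
def shiftMonoid (a n : ℕ) (φ : ℕ → Fin 2) (c : Fin 2) (m : ℕ) : AddSubmonoid ℕ where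
  carrier := {s | ∀ x, 0 < x → φ x = c → a * (x + s) ≤ m ^ n → φ (x + s) = c}
  zero_mem' := fun x _ hx _ => hx
  add_mem' := by
    intro s t hs ht x hx hc h
    rw [← add_assoc] at h ⊢
    exact ht (x + s) (by omega) (hs x hx hc (le_trans (Nat.mul_le_mul_left _ (by omega)) h)) h

lemma NoMonoSol.exists_mem_shiftMonoid {a n N : ℕ} {φ : ℕ → Fin 2} (h : NoMonoSol a n N φ)
    (ha : 0 < a) (hn : 2 ≤ n) {c : Fin 2} {m p q : ℕ} (hNp : N ≤ p) (hmp : m ≤ p) (hpq : p ≤ q)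
    (hap : a ∣ p) (haq : a ∣ q) (hp : φ p = c) (hq : φ q ≠ c) :
    ∃ F ∈ shiftMonoid a n φ c m, (a : ℤ) * (F : ℤ) = (q : ℤ) ^ n - (p : ℤ) ^ n := by
  have hle := Nat.pow_le_pow_left hpq n
  obtain ⟨F, hF⟩ : a ∣ q ^ n - p ^ n :=
    Nat.dvd_sub (haq.trans (dvd_pow_self _ (by omega))) (hap.trans (dvd_pow_self _ (by omega)))
  have hF' : a * F + p ^ n = q ^ n := by omega
  refine ⟨F, fun x hx hc hxF => ?_, by rw [eq_sub_iff_add_eq]; exact_mod_cast hF'⟩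
  rcases Nat.eq_zero_or_pos F with rfl | hFpos
  · exact hc
  have haF : 0 < a * F := Nat.mul_pos ha hFpos
  have hmpn := Nat.pow_le_pow_left hmp n
  rw [mul_add] at hxF
  have hy : φ (p ^ n - a * x) ≠ c := fun hy =>
    h x (p ^ n - a * x) p hx (by omega) hNp (by omega) (by rw [hc, hy]) (by rw [hc, hp])
  by_contra hcon
  exact h (x + F) (p ^ n - a * x) q (by omega) (by omega) (hNp.trans hpq)
    (by rw [mul_add]; omega) (fin_two_eq_of_ne hcon hy) (fin_two_eq_of_ne hcon hq)

lemma false_of_dvd_mem_shiftMonoid {a n G x x' m m' μ : ℕ} {φ : ℕ → Fin 2} {c c' : Fin 2}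
    (ha : 0 < a) (hcc : c ≠ c') (hx : 0 < x) (hx' : 0 < x') (hGx : G ∣ x) (hGx' : G ∣ x')
    (hc : φ x = c) (hc' : φ x' = c') (hμ : μ ≤ m) (hμ' : μ ≤ m')
    (hlarge : 2 * a * (x + x' + G) ≤ μ ^ n)
    (h : ∀ T, G ∣ T → μ ^ n ≤ 2 * a * T → T ∈ shiftMonoid a n φ c m)
    (h' : ∀ T, G ∣ T → μ ^ n ≤ 2 * a * T → T ∈ shiftMonoid a n φ c' m') : False := by
  set k := μ ^ n / (a * G)
  have hk : a * G * k + μ ^ n % (a * G) = μ ^ n := Nat.div_add_mod _ _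
  have h0 : 0 < a * G := Nat.mul_pos ha (Nat.pos_of_dvd_of_pos hGx hx)
  have hr := Nat.mod_lt (μ ^ n) h0
  have hY : a * (G * k) ≤ μ ^ n := by rw [← mul_assoc]; omega
  have hY' : μ ^ n ≤ a * (G * k) + a * G := by rw [← mul_assoc]; omega
  have key : ∀ (v : ℕ) (d : Fin 2) (l : ℕ), v ≤ x + x' → 0 < v → G ∣ v → φ v = d → μ ≤ l →
      (∀ T, G ∣ T → μ ^ n ≤ 2 * a * T → T ∈ shiftMonoid a n φ d l) → φ (G * k) = d := by
    intro v d l hv hv0 hGv hd hl hT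
    have hav := Nat.mul_le_mul_left a hv
    have hvY : v ≤ G * k := by
      by_contra! hlt
      have := Nat.mul_le_mul_left a hlt.le
      nlinarith
    have := hT (G * k - v) (Nat.dvd_sub (dvd_mul_right _ _) hGv) (by
      rw [Nat.mul_sub]
      have : 2 * a * v ≤ 2 * a * (G * k) := Nat.mul_le_mul_left _ hvY
      zify [this]
      zify at *
      nlinarith) v hv0 hd
    rw [Nat.add_sub_cancel' hvY] at this
    exact this (hY.trans (Nat.pow_le_pow_left hl n))
  exact hcc ((key x c m (by omega) hx hGx hc hμ h).symm.trans
    (key x' c' m' (by omega) hx' hGx' hc' hμ' h'))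

lemma NoMonoSol.exists_forall_dvd_mem_of_syndetic {a n N B N' : ℕ} {φ : ℕ → Fin 2}
    (h : NoMonoSol a n N φ) (ha : 0 < a) (hn : 2 ≤ n)
    (hsyn : ∀ X, N' ≤ X → ∀ c, ∃ z, X ≤ z ∧ z ≤ X + B ∧ a ∣ z ∧ φ z = c) (c : Fin 2) :
    ∃ G, 0 < G ∧ ∀ Q, ∀ᶠ t in atTop, ∀ T, G ∣ T → t ^ n ≤ Q * T →
      T ∈ shiftMonoid a n φ c t := by
  refine exists_forall_dvd_mem_of_cubes (m := fun t => t) tendsto_id ha (by omega)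
    ⟨B + 1, fun U i => ?_⟩
  obtain ⟨L, V, hL, hLX⟩ := exists_cubes_of_syndetic (A := {z | a ∣ z ∧ φ z = c + 1}) (B := B)
    (N := N') (fun X hX => by
      obtain ⟨z, h1, h2, h3, h4⟩ := hsyn X hX (c + 1)
      exact ⟨z, ⟨h3, h4⟩, h1, h2⟩) U i
  refine ⟨∑ us ∈ L, us.sum, ?_⟩
  filter_upwards [eventually_ge_atTop (N + N' + B + 1 + V + ∑ us ∈ L, us.sum)] with t ht
  obtain ⟨us, hus, b, hb1, hb2, hc⟩ := hLX (t + B + 1) (by omega)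
  obtain ⟨w, hw1, hw2, hw3, hw4⟩ := hsyn (b - B - 1) (by omega) c
  have hsum : us.sum ≤ ∑ us ∈ L, us.sum :=
    Finset.single_le_sum (f := List.sum) (fun _ _ => Nat.zero_le _) hus
  refine ⟨w, b, us, 1, (hL us hus).1, (hL us hus).2, hsum, Or.inl rfl, by omega, fun l hl => ?_⟩
  have hl' : l.sum ≤ us.sum := hl.sum_le_sum (by simp)
  obtain ⟨hz1, hz2⟩ := hc l hl
  refine ⟨by omega, by omega, ?_, ?_⟩
  · rw [abs_le]
    constructor <;> omega
  · rw [one_mul]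
    refine h.exists_mem_shiftMonoid ha hn (by omega) (by omega) (by omega) hw3 hz1 hw4 ?_
    rw [hz2]
    omega

lemma NoMonoSol.not_syndetic {a n N : ℕ} {φ : ℕ → Fin 2} (h : NoMonoSol a n N φ) (ha : 0 < a)
    (hn : 2 ≤ n) (B N' : ℕ) :
    ∃ X, N' ≤ X ∧ ∃ c, ∀ z, X ≤ z → z ≤ X + B → a ∣ z → φ z ≠ c := by
  by_contra! hsyn
  obtain ⟨G, hG, hGT⟩ := h.exists_forall_dvd_mem_of_syndetic ha hn hsyn 0
  obtain ⟨G', hG', hGT'⟩ := h.exists_forall_dvd_mem_of_syndetic ha hn hsyn 1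
  have hGG := Nat.mul_pos hG hG'
  obtain ⟨x, -, hx, hGx, hc⟩ := h.exists_dvd_color hn hGG 0 0
  obtain ⟨x', -, hx', hGx', hc'⟩ := h.exists_dvd_color hn hGG 1 0
  obtain ⟨t, ht, ht', hlarge⟩ := ((hGT (2 * a)).and ((hGT' (2 * a)).and
    (eventually_ge_atTop (2 * a * (x + x' + G * G'))))).exists
  exact false_of_dvd_mem_shiftMonoid ha (by decide) hx hx' hGx hGx' hc hc' le_rfl le_rfl
    (hlarge.trans (Nat.le_self_pow (by omega) t))
    (fun T hT => ht T ((dvd_mul_right _ _).trans hT))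
    (fun T hT => ht' T ((dvd_mul_left _ _).trans hT))

lemma NoMonoSol.exists_gap {a n N : ℕ} {φ : ℕ → Fin 2} (h : NoMonoSol a n N φ) (ha : 0 < a)
    (hn : 2 ≤ n) (t : ℕ) :
    ∃ (z₀ z₁ : ℕ) (c : Fin 2), t ≤ z₀ ∧ z₀ + t ≤ z₁ ∧ a ∣ z₀ ∧ a ∣ z₁ ∧ φ z₀ = c ∧ φ z₁ = c ∧
      ∀ z, z₀ < z → z < z₁ → a ∣ z → φ z ≠ c := by
  choose p hp1 hp2 hp3 hp4 using fun c => h.exists_dvd_color hn ha c t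
  obtain ⟨X, hX, c, hXc⟩ := h.not_syndetic ha hn t (∑ c, p c)
  have hpX : p c ≤ X := (Finset.single_le_sum (fun _ _ => Nat.zero_le _) (mem_univ c)).trans hX
  classical
  have hex : ∃ z, X ≤ z ∧ a ∣ z ∧ φ z = c := by
    obtain ⟨z, h1, -, h2, h3⟩ := h.exists_dvd_color hn ha c X
    exact ⟨z, h1, h2, h3⟩
  obtain ⟨hs1, hs2⟩ := Nat.findGreatest_spec (P := fun z => a ∣ z ∧ φ z = c) hpX ⟨hp3 c, hp4 c⟩
  obtain ⟨hf1, hf2, hf3⟩ := Nat.find_spec hex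
  have hge : p c ≤ Nat.findGreatest (fun z => a ∣ z ∧ φ z = c) X :=
    Nat.le_findGreatest hpX ⟨hp3 c, hp4 c⟩
  have hle : Nat.findGreatest (fun z => a ∣ z ∧ φ z = c) X ≤ X := Nat.findGreatest_le X
  have hgap : X + t < Nat.find hex := by
    by_contra! hcon
    exact hXc _ hf1 hcon hf2 hf3
  refine ⟨_, Nat.find hex, c, (hp1 c).trans hge, by omega, hs1, hf2, hs2, hf3, ?_⟩
  intro z hz1 hz2 haz hzc
  rcases le_or_gt z X with hzX | hzX
  · exact Nat.findGreatest_is_greatest hz1 hzX ⟨haz, hzc⟩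
  · exact Nat.find_min hex hz2 ⟨hzX.le, haz, hzc⟩

lemma dvd_sum_of_sublist_replicate {a i u : ℕ} {l : List ℕ}
    (hl : l.Sublist (List.replicate i (a * u))) : a ∣ l.sum :=
  List.dvd_sum fun x hx => by
    rw [List.eq_of_mem_replicate (hl.subset hx)]
    exact dvd_mul_right _ _

section Gap

variable {a n N : ℕ} {φ : ℕ → Fin 2} {z₀ z₁ : ℕ → ℕ} {c : ℕ → Fin 2}

lemma NoMonoSol.exists_forall_dvd_mem_left (h : NoMonoSol a n N φ) (ha : 0 < a) (hn : 2 ≤ n)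
    (ht : ∀ t, t ≤ z₀ t) (hlen : ∀ t, z₀ t + t ≤ z₁ t) (hd : ∀ t, a ∣ z₀ t)
    (hc : ∀ t, φ (z₀ t) = c t)
    (hgap : ∀ t z, z₀ t < z → z < z₁ t → a ∣ z → φ z ≠ c t) :
    ∃ G, 0 < G ∧ ∀ Q, ∀ᶠ t in atTop, ∀ T, G ∣ T → z₀ t ^ n ≤ Q * T →
      T ∈ shiftMonoid a n φ (c t) (z₀ t) := by
  refine exists_forall_dvd_mem_of_cubes (tendsto_atTop_mono ht tendsto_id) ha (by omega)
    ⟨a, fun U i => ⟨i * (a * U), ?_⟩⟩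
  filter_upwards [eventually_ge_atTop (N + a + i * (a * U) + 1)] with t htN
  have h1 := ht t
  have h2 := hlen t
  have hsum : (List.replicate i (a * U)).sum = i * (a * U) := by simp
  refine ⟨z₀ t, z₀ t + a, List.replicate i (a * U), 1, by simp, fun u hu => ?_, hsum.le,
    Or.inl rfl, by omega, fun l hl => ?_⟩
  · rw [List.eq_of_mem_replicate hu]
    exact Nat.le_mul_of_pos_left _ ha
  have hl' : l.sum ≤ (List.replicate i (a * U)).sum := hl.sum_le_sum (by simp)
  have haz : a ∣ z₀ t + a + l.sum :=
    dvd_add (dvd_add (hd t) dvd_rfl) (dvd_sum_of_sublist_replicate hl)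
  refine ⟨by omega, by omega, ?_, ?_⟩
  · rw [abs_le]
    constructor <;> omega
  · rw [one_mul]
    exact h.exists_mem_shiftMonoid ha hn (by omega) le_rfl (by omega) (hd t) haz (hc t)
      (hgap t _ (by omega) (by omega) haz)

lemma NoMonoSol.exists_forall_dvd_mem_right (h : NoMonoSol a n N φ) (ha : 0 < a) (hn : 2 ≤ n)
    (ht : ∀ t, t ≤ z₀ t) (hlen : ∀ t, z₀ t + t ≤ z₁ t) (hd : ∀ t, a ∣ z₁ t)
    (hc : ∀ t, φ (z₁ t) = c t)
    (hgap : ∀ t z, z₀ t < z → z < z₁ t → a ∣ z → φ z ≠ c t) :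
    ∃ G, 0 < G ∧ ∀ Q, ∀ᶠ t in atTop, ∀ T, G ∣ T → (z₁ t / 2) ^ n ≤ Q * T →
      T ∈ shiftMonoid a n φ (c t + 1) (z₁ t / 2) := by
  have hle : ∀ t, t ≤ z₁ t / 2 := fun t => by
    have := ht t
    have := hlen t
    omega
  refine exists_forall_dvd_mem_of_cubes (tendsto_atTop_mono hle tendsto_id) ha (by omega)
    ⟨a, fun U i => ⟨i * (a * U), ?_⟩⟩
  filter_upwards [eventually_ge_atTop (N + a + i * (a * U) + 1)] with t htN
  have h1 := ht t
  have h2 := hlen t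
  have hsum : (List.replicate i (a * U)).sum = i * (a * U) := by simp
  refine ⟨z₁ t, z₁ t - (a + i * (a * U)), List.replicate i (a * U), -1, by simp, fun u hu => ?_,
    hsum.le, Or.inr rfl, by omega, fun l hl => ?_⟩
  · rw [List.eq_of_mem_replicate hu]
    exact Nat.le_mul_of_pos_left _ ha
  have hl' : l.sum ≤ (List.replicate i (a * U)).sum := hl.sum_le_sum (by simp)
  have haz : a ∣ z₁ t - (a + i * (a * U)) + l.sum :=
    dvd_add (Nat.dvd_sub (hd t) (dvd_add dvd_rfl ((dvd_mul_right _ _).mul_left _)))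
      (dvd_sum_of_sublist_replicate hl)
  have hz := hgap t _ (by omega) (by omega) haz
  refine ⟨by omega, by omega, ?_, ?_⟩
  · rw [abs_le]
    constructor <;> omega
  · rw [neg_one_mul, neg_sub]
    refine h.exists_mem_shiftMonoid ha hn (by omega) (by omega) (by omega) haz (hd t) ?_ ?_
    · omega
    · rw [hc t]
      omega

end Gap

lemma NoMonoSol.false_of_dvd_mem_of_color {a n N G x z m : ℕ} {φ : ℕ → Fin 2} {c : Fin 2}
    (h : NoMonoSol a n N φ) (hn : 2 ≤ n) (hx : 0 < x) (hG : 0 < G) (hGx : G ∣ x)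
    (hc : φ x = c) (hN : N ≤ z) (hGz : G ∣ z) (hz : φ z = c) (hzm : z ≤ m) (hmz : m ≤ 2 * z)
    (hlarge : G * ((a + 1) * (a * a + 2 * x + 1)) ≤ z)
    (hT : ∀ T, G ∣ T → m ^ n ≤ 2 ^ n * (a + 1) * 2 * T → T ∈ shiftMonoid a n φ c m) : False := by
  obtain ⟨k, hk⟩ := hGz.trans (dvd_pow_self z (by omega : n ≠ 0))
  have hkl : (a + 1) * (a * a + 2 * x + 1) ≤ k := by
    refine Nat.le_of_mul_le_mul_left ?_ hG
    rw [← hk]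
    exact hlarge.trans (Nat.le_self_pow (by omega) z)
  obtain ⟨i, r, hr, rfl⟩ : ∃ i r, r ≤ a ∧ k = (a + 1) * i + r :=
    ⟨k / (a + 1), k % (a + 1), Nat.lt_succ_iff.1 (Nat.mod_lt _ (by omega)),
      (Nat.div_add_mod _ _).symm⟩
  have hi : a * a + 2 * x + 1 ≤ i := by
    by_contra! hcon
    have : (a + 1) * (i + 1) ≤ (a + 1) * (a * a + 2 * x + 1) := Nat.mul_le_mul_left _ hcon
    nlinarith
  have hzn := Nat.pow_le_pow_left hzm n
  have key : ∀ s, s ≤ a → φ (G * (i + s)) = c := by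
    intro s hs
    have hxi : 2 * x + G ≤ G * i := by nlinarith
    have hmono : G * i ≤ G * (i + s) := Nat.mul_le_mul_left _ (by omega)
    have hadd : x + (G * (i + s) - x) = G * (i + s) := by omega
    have := hT (G * (i + s) - x) (Nat.dvd_sub (dvd_mul_right _ _) hGx) (by
      calc m ^ n ≤ (2 * z) ^ n := Nat.pow_le_pow_left hmz n
        _ = 2 ^ n * (G * ((a + 1) * i + r)) := by rw [mul_pow, hk]
        _ ≤ 2 ^ n * (G * ((a + 1) * i + (a + 1))) := by gcongr; omega
        _ = 2 ^ n * (a + 1) * (G * i + G) := by ring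
        _ ≤ 2 ^ n * (a + 1) * (2 * (G * (i + s) - x)) := by gcongr; omega
        _ = _ := by ring) x hx hc
    rw [hadd] at this
    refine this (le_trans ?_ hzn)
    rw [hk]
    calc a * (G * (i + s)) = G * (a * i + a * s) := by ring
      _ ≤ G * (a * i + a * a) := by gcongr
      _ ≤ G * ((a + 1) * i + r) := by
        refine Nat.mul_le_mul_left _ ?_
        rw [add_mul]
        omega
  have hGi : 0 < G * i := Nat.mul_pos hG (by omega)
  refine h (G * (i + 0)) (G * (i + r)) z (by simpa using hGi) ?_ hN ?_ ?_ ?_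
  · exact hGi.trans_le (Nat.mul_le_mul_left _ (by omega))
  · rw [hk]
    ring
  · rw [key 0 (by omega), key r hr]
  · rw [key 0 (by omega), hz]

theorem not_noMonoSol {a n N : ℕ} {φ : ℕ → Fin 2} (ha : 0 < a) (hn : 2 ≤ n) :
    ¬ NoMonoSol a n N φ := by
  intro h
  choose z₀ z₁ c ht hlen hd₀ hd₁ hc₀ hc₁ hgap using h.exists_gap ha hn
  obtain ⟨G₀, hG₀, hGT₀⟩ := h.exists_forall_dvd_mem_left ha hn ht hlen hd₀ hc₀ hgap
  obtain ⟨G₁, hG₁, hGT₁⟩ := h.exists_forall_dvd_mem_right ha hn ht hlen hd₁ hc₁ hgap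
  obtain ⟨G, hG, haG, hGG₀, hGG₁⟩ : ∃ G, 0 < G ∧ a ∣ G ∧ G₀ ∣ G ∧ G₁ ∣ G :=
    ⟨a * G₀ * G₁, by positivity, ⟨G₀ * G₁, by ring⟩, ⟨a * G₁, by ring⟩, ⟨a * G₀, by ring⟩⟩
  choose x _ hx hGx hxc using fun c => h.exists_dvd_color hn hG c 0
  set K := G * ((a + 1) * (a * a + 2 * (x 0 + x 1) + 1)) with hK
  obtain ⟨t, hT₀, hT₁, hT₁', hlarge⟩ := ((hGT₀ (3 ^ n * (2 * a))).and
    ((hGT₁ (3 ^ n * (2 * a))).and ((hGT₁ (2 ^ n * (a + 1) * 2)).and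
    (eventually_ge_atTop (2 * a * (x 0 + x 1 + G) + N + 2 * G + K))))).exists
  have h1 := ht t
  have h2 := hlen t
  have hxs : ∀ d, x d ≤ x 0 + x 1 := Fin.forall_fin_two.2 ⟨by omega, by omega⟩
  have hne : c t ≠ c t + 1 := by omega
  rcases le_or_gt (z₁ t / 2) (3 * z₀ t) with hle | hlt
  · have hsum : x (c t) + x (c t + 1) = x 0 + x 1 := by
      generalize c t = d
      fin_cases d
      · rfl
      · exact add_comm _ _
    have hμ : 2 * a * (x 0 + x 1 + G) ≤ min (z₀ t) (z₁ t / 2) := by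
      rw [le_min_iff]
      omega
    have hpow : ∀ l T, l ≤ 3 * min (z₀ t) (z₁ t / 2) →
        min (z₀ t) (z₁ t / 2) ^ n ≤ 2 * a * T → l ^ n ≤ 3 ^ n * (2 * a) * T := by
      intro l T hl hT
      calc l ^ n ≤ (3 * min (z₀ t) (z₁ t / 2)) ^ n := Nat.pow_le_pow_left hl n
        _ = 3 ^ n * min (z₀ t) (z₁ t / 2) ^ n := mul_pow _ _ _
        _ ≤ 3 ^ n * (2 * a * T) := Nat.mul_le_mul_left _ hT
        _ = _ := by ring
    exact false_of_dvd_mem_shiftMonoid ha hne (hx _) (hx _) (hGx _) (hGx _) (hxc _) (hxc _)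
      (min_le_left _ _) (min_le_right _ _)
      (by rw [hsum]; exact hμ.trans (Nat.le_self_pow (by omega) _))
      (fun T hT hle => hT₀ T (hGG₀.trans hT) (hpow _ T (by omega) hle))
      (fun T hT hle => hT₁ T (hGG₁.trans hT) (hpow _ T (by omega) hle))
  · have hdm := Nat.div_add_mod (z₁ t / 2) G
    have hmod := Nat.mod_lt (z₁ t / 2) hG
    have hGz : G ∣ G * (z₁ t / 2 / G) := dvd_mul_right _ _
    have hz := hgap t (G * (z₁ t / 2 / G)) (by omega) (by omega) (haG.trans hGz)
    have hKle : G * ((a + 1) * (a * a + 2 * x (c t + 1) + 1)) ≤ K := by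
      rw [hK]
      gcongr
      exact hxs _
    exact h.false_of_dvd_mem_of_color hn (hx _) hG (hGx _) (hxc (c t + 1)) (by omega) hGz
      (by omega) (by omega) (by omega) (by omega) fun T hT => hT₁' T (hGG₁.trans hT)

end

/-- Let `a` and `n` be positive integers with `n ≥ 2`. Then the equation
`a·x + y = z^n` is 2-Ramsey: every 2-colouring of the positive integers admits infinitely many
monochromatic solutions. -/
theorem stmt_1 (a n : ℕ) (ha : 0 < a) (hn : 2 ≤ n) :
    ∀ φ : ℕ → Fin 2,
      {w : ℕ × ℕ × ℕ | 0 < w.1 ∧ 0 < w.2.1 ∧ 0 < w.2.2 ∧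
        φ w.1 = φ w.2.1 ∧ φ w.1 = φ w.2.2 ∧
        a * w.1 + w.2.1 = w.2.2 ^ n}.Infinite := by
  intro φ hfin
  obtain ⟨N, hN⟩ := (hfin.image fun w => w.2.2).bddAbove
  refine not_noMonoSol (N := N + 1) (φ := φ) ha hn fun x y z hx hy hz hxyz hxy hxz => ?_
  have : z ≤ N := hN ⟨(x, y, z), ⟨hx, hy, by change 0 < z; omega, hxy, hxz, hxyz⟩, rfl⟩
  omega
end

section
/- Let p ∈ ℤ[z] be a polynomial of degree at least 2 with positive leading coefficient, and let a, b be positive integers with gcd(a,b) = 1. Suppose there exist positive integers d and u and integers t and v such that: (1) (a+b)·t ≡ p(t) (mod d); (2) for every integer k with k ≡ t (mod d), a divides p(k+d) − p(k); (3) for every integer k with k ≡ t (mod d), setting m = (p(k+d) − p(k))/a, one has u ∣ m, and setting m' = m/u, m' is odd and gcd(a, m') = gcd(b, m') = gcd(u, m') = 1; (4) p(v) ≡ (a+b)·v (mod u); (5) for every integer k with k ≡ t (mod d), p(k) ≡ (a+b)·v (mod u); (6) for all integers j, k with j ≡ v (mod u) and k ≡ t (mod d), b divides p(k) − a·j. Then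 the equation a·x + b·y = p(z) is 2-Ramsey. -/
/-- A subset of an interval of `A + B` consecutive integers that is closed under adding `B` and
under subtracting `A` is a union of residue classes modulo `gcd A B` in that interval. -/
theorem of_dvd_sub_of_window {P : ℤ → Prop} {A B s : ℤ} (hA : 0 < A) (hB : 0 < B)
    (hadd : ∀ i, s ≤ i → i + B < s + (A + B) → P i → P (i + B))
    (hsub : ∀ i, s ≤ i → i + A < s + (A + B) → P (i + A) → P i)
    {i j : ℤ} (hi : s ≤ i) (hi' : i < s + (A + B)) (hj : s ≤ j) (hj' : j < s + (A + B))
    (h : (Int.gcd A B : ℤ) ∣ j - i) (hP : P i) : P j := by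
  have hAB : 0 < A + B := by omega
  have walk : ∀ n : ℕ, P (s + (i - s + n * B) % (A + B)) := by
    intro n
    induction n with
    | zero =>
      rw [Nat.cast_zero, zero_mul, add_zero, Int.emod_eq_of_lt (by omega) (by omega)]
      simpa using hP
    | succ n ih =>
      set r := (i - s + n * B) % (A + B) with hr
      have h0 : 0 ≤ r := Int.emod_nonneg _ hAB.ne'
      have h1 : r < A + B := Int.emod_lt_of_pos _ hAB
      have h2 : (i - s + ((n + 1 : ℕ) : ℤ) * B) % (A + B) = (r + B) % (A + B) := by
        rw [hr, Int.emod_add_emod]; push_cast; ring_nf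
      rw [h2]
      by_cases hrA : r < A
      · rw [Int.emod_eq_of_lt (by omega) (by omega), ← add_assoc]
        exact hadd _ (by omega) (by omega) ih
      · have h3 : (r + B) % (A + B) = r - A := by
          rw [show r + B = (r - A) + (A + B) by ring, Int.add_emod_right,
            Int.emod_eq_of_lt (by omega) (by omega)]
        rw [h3]
        refine hsub _ (by omega) (by omega) ?_
        rwa [show s + (r - A) + A = s + r by ring]
  obtain ⟨e, he⟩ := h
  rw [Int.gcd_eq_gcd_ab] at he
  set y := e * (Int.gcdB A B - Int.gcdA A B)
  obtain ⟨n, hn⟩ : ∃ n : ℕ, (n : ℤ) = y % (A + B) :=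
    ⟨(y % (A + B)).toNat, Int.toNat_of_nonneg (Int.emod_nonneg _ hAB.ne')⟩
  have key : (i - s + n * B) % (A + B) = j - s := by
    have hmod : (j - s) % (A + B) = j - s := Int.emod_eq_of_lt (by omega) (by omega)
    refine Eq.trans (Int.ModEq.symm (Int.modEq_iff_dvd.2 ?_)) hmod
    have h1 := Int.mul_ediv_add_emod y (A + B)
    refine ⟨- e * Int.gcdA A B - B * (y / (A + B)), ?_⟩
    have h2 : (n : ℤ) = y - (A + B) * (y / (A + B)) := by rw [hn]; linarith
    rw [h2]
    have : j - s = i - s + (j - i) := by ring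
    rw [this, he]
    simp only [y]
    ring
  have := walk n
  rwa [key, show s + (j - s) = j by ring] at this

/-- A subset of `[0, M)` closed under adding `B` and under subtracting `A` is, when `A + B ≤ M`,
a union of residue classes modulo `gcd A B` in that interval. -/
theorem of_dvd_sub_of_closed {P : ℤ → Prop} {A B M : ℤ} (hA : 0 < A) (hB : 0 < B)
    (hM : A + B ≤ M)
    (hadd : ∀ i, 0 ≤ i → i + B < M → P i → P (i + B))
    (hsub : ∀ i, 0 ≤ i → i + A < M → P (i + A) → P i)
    {i j : ℤ} (hi : 0 ≤ i) (hi' : i < M) (hj : 0 ≤ j) (hj' : j < M)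
    (h : (Int.gcd A B : ℤ) ∣ j - i) (hP : P i) : P j := by
  have hg : 0 < (Int.gcd A B : ℤ) := by
    exact_mod_cast Int.gcd_pos_of_ne_zero_left _ hA.ne'
  have hgA : (Int.gcd A B : ℤ) ≤ A := Int.le_of_dvd hA (Int.gcd_dvd_left ..)
  set g : ℤ := (Int.gcd A B : ℤ) with hgdef
  have near : ∀ i j : ℤ, 0 ≤ i → i < M → 0 ≤ j → j < M → |j - i| ≤ g → g ∣ j - i →
      P i → P j := by
    intro i j hi hi' hj hj' hij hd hPi
    rw [abs_le] at hij
    have hs : ∃ s, 0 ≤ s ∧ s + (A + B) ≤ M ∧ s ≤ i ∧ i < s + (A + B) ∧ s ≤ j ∧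
        j < s + (A + B) := by
      refine ⟨min (min i j) (M - (A + B)), ?_⟩
      omega
    obtain ⟨s, h1, h2, h3, h4, h5, h6⟩ := hs
    exact of_dvd_sub_of_window hA hB (fun i hi hi' => hadd i (by omega) (by omega))
      (fun i hi hi' => hsub i (by omega) (by omega)) h3 h4 h5 h6 hd hPi
  have up : ∀ n : ℕ, ∀ i, 0 ≤ i → i + n * g < M → (P i ↔ P (i + n * g)) := by
    intro n
    induction n with
    | zero => simp
    | succ n ih =>
      intro i hi hi'
      push_cast at hi' ⊢
      have hn : 0 ≤ (n : ℤ) * g := by positivity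
      have e : i + (n + 1) * g = i + n * g + g := by ring
      rw [e] at hi' ⊢
      rw [ih i hi (by omega)]
      constructor
      · exact near _ _ (by omega) (by omega) (by omega) (by omega)
          (by rw [abs_le]; omega) ⟨1, by ring⟩
      · exact near _ _ (by omega) (by omega) (by omega) (by omega)
          (by rw [abs_le]; omega) ⟨-1, by ring⟩
  obtain ⟨e, he⟩ := h
  obtain ⟨n, rfl | rfl⟩ := e.eq_nat_or_neg
  · have : j = i + n * g := by linarith
    subst this
    exact (up n i hi hj').1 hP
  · have : i = j + n * g := by linarith
    subst this
    exact (up n j hj hi').2 hP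

/-- In `ZMod g` with `g` odd and `a`, `b` units, some solution of `a r + b s = E` has both
entries in, or both outside, a given set. -/
theorem not_forall_iff_not_of_odd {g : ℕ} (hg : Odd g) {a b : ZMod g} (ha : IsUnit a)
    (hb : IsUnit b) (E : ZMod g) (Q : ZMod g → Prop) :
    ¬ ∀ r s, a * r + b * s = E → (Q r ↔ ¬ Q s) := by
  classical
  intro h
  have : NeZero g := ⟨by rintro rfl; simp at hg⟩
  obtain ⟨a, rfl⟩ := ha
  obtain ⟨b, rfl⟩ := hb
  let σ : ZMod g ≃ ZMod g :=
    (Units.mulLeft a).trans ((Equiv.subLeft E).trans (Units.mulLeft b⁻¹))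
  have hσ : ∀ r, Q r ↔ ¬ Q (σ r) := fun r => h r (σ r) (by simp [σ])
  have hcard : Fintype.card {r // Q r} = Fintype.card {r // ¬ Q r} :=
    Fintype.card_congr (σ.subtypeEquiv fun r => hσ r)
  have := Fintype.card_subtype_compl Q
  have h2 := Fintype.card_subtype_le Q
  rw [ZMod.card] at this h2
  obtain ⟨w, hw⟩ := hg
  omega

open Polynomial in
/-- A polynomial of degree at least two with positive leading coefficient is eventually strictly
increasing. -/
theorem exists_forall_eval_lt_eval (p : Polynomial ℤ) (hdeg : 2 ≤ p.natDegree)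
    (hlead : 0 < p.leadingCoeff) :
    ∃ K : ℤ, ∀ x y, K ≤ x → x < y → p.eval x < p.eval y := by
  set P : Polynomial ℝ := p.map (Int.castRingHom ℝ) with hP
  have hinj : Function.Injective (Int.castRingHom ℝ) := Int.cast_injective
  have hPdeg : P.natDegree = p.natDegree := natDegree_map_eq_of_injective hinj p
  have hPlead : P.leadingCoeff = p.leadingCoeff := by
    rw [hP, leadingCoeff_map_of_injective hinj]; simp
  have hd : P.derivative.natDegree = p.natDegree - 1 := by
    rw [← hPdeg, natDegree_derivative]
  have hl : 0 ≤ P.derivative.leadingCoeff := by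
    rw [leadingCoeff, hd, coeff_derivative, ← hPdeg, Nat.sub_add_cancel (by omega),
      coeff_natDegree, hPlead]
    have : (0 : ℝ) ≤ p.leadingCoeff := by exact_mod_cast hlead.le
    positivity
  have ht := P.derivative.tendsto_atTop_of_leadingCoeff_nonneg
    (natDegree_pos_iff_degree_pos.1 (by omega)) hl
  obtain ⟨K, hK⟩ := Filter.eventually_atTop.1 (ht.eventually_gt_atTop 0)
  refine ⟨⌈K⌉, fun x y hx hxy => ?_⟩
  have hmono : StrictMonoOn (fun x => P.eval x) (Set.Ici K) := by
    refine strictMonoOn_of_deriv_pos (convex_Ici K) P.continuous.continuousOn fun z hz => ?_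
    rw [interior_Ici] at hz
    rw [Polynomial.deriv]
    exact hK z (le_of_lt hz)
  have hx' : K ≤ x := Int.ceil_le.1 hx
  have hxy' : (x : ℝ) < y := by exact_mod_cast hxy
  have := hmono (Set.mem_Ici.2 hx') (Set.mem_Ici.2 (hx'.trans hxy'.le)) hxy'
  simp only [hP] at this
  rw [eval_intCast_map, eval_intCast_map] at this
  simpa using this

open Polynomial in
/-- A polynomial of degree at least two with positive leading coefficient eventually grows faster
than any linear function. -/
theorem exists_forall_mul_sub_lt_eval_sub_eval (p : Polynomial ℤ) (hdeg : 2 ≤ p.natDegree)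
    (hlead : 0 < p.leadingCoeff) (c : ℤ) :
    ∃ K : ℤ, ∀ x y, K ≤ x → x < y → c * (y - x) < p.eval y - p.eval x := by
  have hlt : (C c * X).degree < p.degree := by
    refine (degree_C_mul_X_le c).trans_lt ?_
    rw [degree_eq_natDegree (by rintro rfl; simp at hdeg)]
    exact_mod_cast hdeg
  obtain ⟨K, hK⟩ := exists_forall_eval_lt_eval (p - C c * X)
    (by rwa [natDegree_eq_of_degree_eq (degree_sub_eq_left_of_degree_lt hlt)])
    (by rwa [leadingCoeff_sub_of_degree_lt hlt])
  refine ⟨K, fun x y hx hxy => ?_⟩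
  have := hK x y hx hxy
  simp only [eval_sub, eval_mul, eval_C, eval_X] at this
  linarith

theorem exists_forall_abs_eval_le (q : Polynomial ℤ) {n : ℕ} (hq : q.natDegree ≤ n) :
    ∃ c : ℤ, 0 ≤ c ∧ ∀ x, 1 ≤ x → |q.eval x| ≤ c * x ^ n := by
  refine ⟨∑ i ∈ Finset.range (n + 1), |q.coeff i|,
    Finset.sum_nonneg fun _ _ => abs_nonneg _, fun x hx => ?_⟩
  rw [Polynomial.eval_eq_sum_range' (Nat.lt_succ_of_le hq), Finset.sum_mul]
  refine (Finset.abs_sum_le_sum_abs _ _).trans (Finset.sum_le_sum fun i hi => ?_)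
  rw [abs_mul, abs_pow, abs_of_nonneg (show 0 ≤ x by omega)]
  exact mul_le_mul_of_nonneg_left
    (pow_le_pow_right₀ hx (Nat.lt_succ_iff.1 (Finset.mem_range.1 hi))) (abs_nonneg _)

open Polynomial in
/-- The increments of `p` over steps of length `d` near `k` are negligible against `p(k)`. -/
theorem exists_forall_mul_increment_le (p : Polynomial ℤ) (hdeg : 2 ≤ p.natDegree)
    (hlead : 0 < p.leadingCoeff) (d c r : ℤ) (hc : 0 ≤ c) :
    ∃ K : ℤ, ∀ k k', K ≤ k → k ≤ k' → k' ≤ r * k →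
      c * (1 + k + (p.eval (k' + d) - p.eval k')) ≤ p.eval k := by
  obtain ⟨n, hn⟩ : ∃ n, p.natDegree = n + 1 := ⟨p.natDegree - 1, by omega⟩
  have hp0 : p ≠ 0 := by rintro rfl; simp at hdeg
  have hq : (taylor d p - p).natDegree ≤ n := by
    have h1 : (taylor d p - p).degree < p.degree :=
      degree_sub_lt_right (degree_taylor p d) hp0 (leadingCoeff_taylor d p)
    rw [degree_eq_natDegree hp0, hn] at h1
    exact natDegree_le_of_degree_le (Order.le_of_lt_succ h1)
  obtain ⟨c₁, hc₁, hinc⟩ := exists_forall_abs_eval_le _ hq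
  obtain ⟨c₂, hc₂, herase⟩ := exists_forall_abs_eval_le p.eraseLead (n := n)
    (by have := eraseLead_natDegree_le p; omega)
  refine ⟨|c₂| + c * (2 + c₁ * |r| ^ n) + 1, fun k k' hk hkk' hk' => ?_⟩
  have hr0 : 0 ≤ c * (2 + c₁ * |r| ^ n) := by positivity
  have hk1 : 1 ≤ k := by have := abs_nonneg c₂; linarith
  have hkn : 1 ≤ k ^ n := one_le_pow₀ hk1
  have hkn' : k ≤ k ^ n := by
    calc k = k ^ 1 := (pow_one k).symm
      _ ≤ k ^ n := pow_le_pow_right₀ hk1 (by omega)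
  have hlow : k ^ n * (k - c₂) ≤ p.eval k := by
    have h := (abs_le.1 (herase k hk1)).1
    have e : p.eval k = p.eraseLead.eval k + p.leadingCoeff * k ^ (n + 1) := by
      conv_lhs => rw [← eraseLead_add_C_mul_X_pow p]
      simp [hn]
    have h2 : k ^ (n + 1) ≤ p.leadingCoeff * k ^ (n + 1) :=
      le_mul_of_one_le_left (by positivity) hlead
    rw [e]
    have e2 : k ^ n * (k - c₂) = k ^ (n + 1) - c₂ * k ^ n := by ring
    rw [e2]
    linarith
  have hup : p.eval (k' + d) - p.eval k' ≤ c₁ * |r| ^ n * k ^ n := by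
    have h := (abs_le.1 (hinc k' (by omega))).2
    rw [eval_sub, taylor_eval] at h
    refine h.trans ?_
    rw [mul_assoc, ← mul_pow]
    have : k' ≤ |r| * k := hk'.trans (mul_le_mul_of_nonneg_right (le_abs_self r) (by omega))
    gcongr
    omega
  calc c * (1 + k + (p.eval (k' + d) - p.eval k'))
      ≤ c * (k ^ n + k ^ n + c₁ * |r| ^ n * k ^ n) := by gcongr
    _ = k ^ n * (c * (2 + c₁ * |r| ^ n)) := by ring
    _ ≤ k ^ n * (k - c₂) := by
        gcongr
        have := le_abs_self c₂
        linarith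
    _ ≤ p.eval k := hlow

/-- A colouring that changes between two points of a progression changes at some step. -/
theorem exists_switch_s2 {c : ℤ → Bool} {t d x y : ℤ} (hd : 0 < d) (hx : d ∣ x - t)
    (hy : d ∣ y - t) (hxy : x < y) (hc : c x ≠ c y) :
    ∃ k, d ∣ k - t ∧ x ≤ k ∧ k + d ≤ y ∧ c k = c x ∧ c (k + d) = c y := by
  obtain ⟨i, hi⟩ := dvd_sub hy hx
  have e : y = x + d * i := by linarith
  have hi0 : 0 < i := by
    by_contra! h
    nlinarith
  lift i to ℕ using hi0.le
  have key : ∀ n : ℕ, c (x + d * n) ≠ c x → ∃ j : ℕ, j < n ∧ c (x + d * j) = c x ∧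
      c (x + d * j + d) ≠ c x := by
    intro n
    induction n with
    | zero => simp
    | succ n ih =>
      intro h
      by_cases hn : c (x + d * n) = c x
      · refine ⟨n, by omega, hn, ?_⟩
        rwa [show x + d * n + d = x + d * ((n + 1 : ℕ) : ℤ) by push_cast; ring]
      · obtain ⟨j, h1, h2⟩ := ih hn
        exact ⟨j, by omega, h2⟩
  obtain ⟨j, h1, h2, h3⟩ := key i (by rw [← e]; exact hc.symm)
  refine ⟨x + d * j, ?_, ?_, ?_, h2, ?_⟩
  · rw [show x + d * j - t = (x - t) + d * j by ring]
    exact dvd_add hx (dvd_mul_right ..)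
  · have : 0 ≤ d * (j : ℤ) := by positivity
    linarith
  · rw [e]
    have : (j : ℤ) + 1 ≤ i := by exact_mod_cast h1
    nlinarith
  · revert h3 hc
    cases c (x + d * j + d) <;> cases c x <;> cases c y <;> simp

/-- Solutions of `a x + b y = n` with `x`, `y` in given residue classes modulo `d` can be found
with `x` in any interval of length `b d`. -/
theorem exists_solution_in_class {a b d t t' n : ℤ} (hb : 0 < b) (hd : 0 < d)
    (hab : IsCoprime a b) (hn : d ∣ n - (a * t + b * t')) (L : ℤ) :
    ∃ x y, d ∣ x - t ∧ d ∣ y - t' ∧ a * x + b * y = n ∧ L ≤ x ∧ x < L + b * d := by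
  obtain ⟨e, he⟩ := hn
  obtain ⟨s, w, hsw⟩ := hab
  have hbd : 0 < b * d := by positivity
  set x₀ := t + d * (s * e) with hx₀
  set q := (x₀ - L) / (b * d) with hq
  have h1 := Int.mul_ediv_add_emod (x₀ - L) (b * d)
  have h2 := Int.emod_nonneg (x₀ - L) hbd.ne'
  have h3 := Int.emod_lt_of_pos (x₀ - L) hbd
  rw [← hq] at h1
  refine ⟨x₀ - b * d * q, t' + d * (w * e) + a * d * q, ⟨s * e - b * q, ?_⟩,
    ⟨w * e + a * q, ?_⟩, ?_, by linarith, by linarith⟩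
  · rw [hx₀]; ring
  · ring
  · rw [hx₀]
    linear_combination d * e * hsw - he

theorem Bool.eq_of_ne_of_ne {p q r : Bool} (hp : p ≠ r) (hq : q ≠ r) : p = q := by
  revert p q r
  decide

/-- Solutions of `a i + b j = n` in given residue classes modulo `g`, balanced so that
both entries are close to `n / (a + b)`. -/
theorem exists_balanced_solution {a b g r s n : ℤ} (ha : 0 < a) (hb : 0 < b) (hg : 0 < g)
    (hab : IsCoprime a b) (hn : g ∣ n - (a * r + b * s)) :
    ∃ i j, g ∣ i - r ∧ g ∣ j - s ∧ a * i + b * j = n ∧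
      |(a + b) * i - n| ≤ (a + b) ^ 2 * g ∧ |(a + b) * j - n| ≤ (a + b) ^ 2 * g := by
  obtain ⟨i, j, hi, hj, hij, hL, hU⟩ := exists_solution_in_class hb hg hab hn (n / (a + b))
  have hs : 0 < a + b := by omega
  have h1 := Int.mul_ediv_add_emod n (a + b)
  have h2 := Int.emod_nonneg n hs.ne'
  have h3 := Int.emod_lt_of_pos n hs
  set L := n / (a + b)
  -- `(a + b) i - n = b (i - j)`
  have e1 : (a + b) * i - n = b * (i - j) := by linear_combination hij
  have e2 : (a + b) * j - n = -(a * (i - j)) := by linear_combination hij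
  have lo : -(a + b) < b * (i - j) := by nlinarith
  have hi' : b * (i - j) < (a + b) * (b * g) := by nlinarith
  have lo' : -(a + b) ≤ i - j := by nlinarith
  have up' : i - j ≤ (a + b) * g := by nlinarith
  have hsg : a + b ≤ (a + b) * g := by nlinarith
  have habs : |i - j| ≤ (a + b) * g := abs_le.2 ⟨by linarith, up'⟩
  have hsg0 : 0 ≤ (a + b) * g := by positivity
  refine ⟨i, j, hi, hj, hij, ?_, ?_⟩
  · rw [e1, abs_mul, abs_of_pos hb]
    calc b * |i - j| ≤ (a + b) * ((a + b) * g) := by gcongr; omega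
      _ = _ := by ring
  · rw [e2, abs_neg, abs_mul, abs_of_pos ha]
    calc a * |i - j| ≤ (a + b) * ((a + b) * g) := by gcongr; omega
      _ = _ := by ring

/-- The entries of a balanced solution stay in the range in which the colouring is controlled. -/
theorem nonneg_and_lt_of_abs_le {a b u v m m' g F E E' i : ℤ} (ha : 0 < a) (hb : 0 < b)
    (hu : 0 < u) (hvu : v ≤ u) (hv : 0 < v) (hm : 0 < m) (hm' : 0 < m') (hg : g ≤ m)
    (hE : F - (a + b) * v = u * E) (hbig : 4 * (a + b) ^ 3 * u * (1 + m + m') ≤ F)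
    (hl : E ≤ E') (hE' : E' ≤ E + a * m) (hi : |(a + b) * i - E'| ≤ (a + b) ^ 2 * g) :
    0 ≤ i ∧ a * u * (i + 1) < F := by
  obtain ⟨s, hs⟩ : ∃ s, s = a + b := ⟨_, rfl⟩
  rw [← hs] at hE hbig hi
  rw [abs_le] at hi
  have hs1 : 1 ≤ s := by omega
  have has : a ≤ s := by omega
  have hsg : s ^ 2 * g ≤ s ^ 2 * m := by gcongr
  have hss : s ≤ s ^ 2 := by nlinarith only [hs1]
  have h7 : 0 < s ^ 3 * u * m' := by positivity
  have h8 : 0 < s ^ 3 * u * m := by positivity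
  have h9 : 0 < s ^ 3 * u := by positivity
  have hF : 4 * (s ^ 3 * u) + 4 * (s ^ 3 * u * m) < F := by linarith
  have hs23 : s ^ 2 ≤ s ^ 3 := pow_le_pow_right₀ hs1 (by norm_num)
  constructor
  · have h1 : u * E ≤ u * (s * i + s ^ 2 * m) := by gcongr; linarith
    have h2 : s * v ≤ s ^ 3 * u := by
      gcongr
      linarith
    have h3 : s ^ 2 * (u * m) ≤ s ^ 3 * (u * m) := by gcongr
    have h4 : 0 < u * s * i := by linarith
    exact (pos_of_mul_pos_right h4 (by positivity)).le
  · have h1 : a * (u * (s * i)) ≤ a * (u * (E + a * m + s ^ 2 * m)) := by gcongr; linarith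
    have h3 : a * u * (a * m) ≤ s * u * (s ^ 2 * m) := by
      gcongr
      linarith
    have h4 : a * u * (s ^ 2 * m) ≤ s * u * (s ^ 2 * m) := by gcongr
    have h5 : a * u * s ≤ s * u * s ^ 2 := by gcongr
    have h6 : F ≤ b * F := le_mul_of_one_le_left (by linarith) hb
    have h10 : 0 < a * (s * v) := by positivity
    have h11 : s * (a * u * (i + 1)) < s * F := by
      have e : s * F = a * F + b * F := by rw [hs]; ring
      have e' : a * (u * E) = a * F - a * (s * v) := by rw [← hE]; ring
      linarith
    exact lt_of_mul_lt_mul_left h11 (by omega)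

/-- A colouring without large monochromatic solutions cannot switch in opposite directions at two
comparable places `k` and `k'`. -/
theorem not_opposite_switches {f : ℤ → ℤ} {c : ℤ → Bool} {a b d u v N k k' m m' : ℤ}
    (ha : 0 < a) (hb : 0 < b) (hab : IsCoprime a b) (hu : 0 < u) (hv : 0 < v) (hvu : v ≤ u)
    (hN : ∀ x y z, 0 < x → 0 < y → N ≤ z → a * x + b * y = f z → ¬ (c x = c y ∧ c x = c z))
    (hk : N ≤ k) (hkd : N ≤ k + d) (hk' : N ≤ k') (hkd' : N ≤ k' + d)
    (hm : f (k + d) - f k = a * (u * m)) (hm0 : 0 < m) (hm2 : ¬ 2 ∣ m)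
    (ham : IsCoprime a m) (hbm : IsCoprime b m)
    (hm' : f (k' + d) - f k' = a * (u * m')) (hm0' : 0 < m')
    (h5 : u ∣ f k - (a + b) * v)
    (h6 : ∀ j, u ∣ j - v → b ∣ f k - a * j) (h6' : ∀ j, u ∣ j - v → b ∣ f k' - a * j)
    (hkk' : f k ≤ f k') (hbig : 4 * (a + b) ^ 3 * u * (1 + m + m') ≤ f k)
    (hc : c (k + d) ≠ c k) (hc' : c k' = c (k + d)) : c (k' + d) ≠ c k := by
  intro hc''
  set s := a + b with hs
  have hs2 : 2 ≤ s := by omega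
  have hau : 0 < a * u := by positivity
  set M := (f k - 1) / (a * u) with hM
  have hMle : a * u * M ≤ f k - 1 := by rw [hM]; exact Int.mul_ediv_self_le hau.ne'
  have hMof : ∀ i, a * u * i < f k → i ≤ M := by
    intro i hi
    rw [hM, Int.le_ediv_iff_mul_le hau]
    linarith [mul_comm (a * u) i]
  have hs3 : a * u ≤ s ^ 3 * u := by
    gcongr; nlinarith [pow_pos (show 0 < s by omega) 2]
  have hmul : a * u * (1 + m + m') ≤ s ^ 3 * u * (1 + m + m') := by gcongr
  have hpos : 0 < s ^ 3 * u * (1 + m + m') := by positivity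
  have hsum : m + m' < M := by
    have := hMof (1 + m + m') (by linarith)
    omega
  have hrange : ∀ i, 0 ≤ i → i < M → 0 < v + u * i ∧ a * (v + u * i) < f k := by
    intro i hi hiM
    refine ⟨by positivity, ?_⟩
    have : a * u * (i + 1) ≤ a * u * M := by gcongr; omega
    nlinarith
  -- the colour opposite to that of `k`, on the class of `v`
  set P : ℤ → Prop := fun i => c (v + u * i) ≠ c k with hP
  have hadd : ∀ i, 0 ≤ i → i + m' < M → P i → P (i + m') := by
    intro i hi hiM hPi hcon
    obtain ⟨hx, hxk⟩ := hrange i hi (by omega)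
    obtain ⟨y, hy⟩ := h6' (v + u * i) ⟨i, by ring⟩
    have hy0 : 0 < y := by by_contra! h; nlinarith
    have n1 := hN _ y k' hx hy0 hk' (by linarith)
    have n2 := hN (v + u * (i + m')) y (k' + d) (by positivity) hy0 hkd' (by linarith)
    have hxk' : c (v + u * i) = c k' := (Bool.eq_of_ne_of_ne hPi hc).trans hc'.symm
    have hyk : c y = c k :=
      Bool.eq_of_ne_of_ne (fun h => n1 ⟨h.symm, hxk'⟩) (Ne.symm hPi)
    exact n2 ⟨hcon.trans hyk.symm, hcon.trans hc''.symm⟩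
  have hsub : ∀ i, 0 ≤ i → i + m < M → P (i + m) → P i := by
    intro i hi hiM hPi hcon
    obtain ⟨hx, hxk⟩ := hrange i hi (by omega)
    obtain ⟨y, hy⟩ := h6 (v + u * i) ⟨i, by ring⟩
    have hy0 : 0 < y := by by_contra! h; nlinarith
    have n1 := hN _ y k hx hy0 hk (by linarith)
    have n2 := hN (v + u * (i + m)) y (k + d) (by positivity) hy0 hkd (by linarith)
    have hyk : c y ≠ c k := fun h => n1 ⟨hcon.trans h.symm, hcon⟩
    exact n2 ⟨Bool.eq_of_ne_of_ne hPi hyk, Bool.eq_of_ne_of_ne hPi hc⟩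
  have hper : ∀ i j, 0 ≤ i → i < M → 0 ≤ j → j < M → (Int.gcd m m' : ℤ) ∣ i - j →
      (P i ↔ P j) := fun i j h1 h2 h3 h4 h =>
    ⟨of_dvd_sub_of_closed hm0 hm0' hsum.le hadd hsub h1 h2 h3 h4 ((dvd_sub_comm).1 h),
      of_dvd_sub_of_closed hm0 hm0' hsum.le hadd hsub h3 h4 h1 h2 h⟩
  set g := Int.gcd m m' with hg
  have hgm : (g : ℤ) ∣ m := Int.gcd_dvd_left ..
  have hg0 : 0 < (g : ℤ) := by exact_mod_cast Int.gcd_pos_of_ne_zero_left _ hm0.ne'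
  have hgle : (g : ℤ) ≤ m := Int.le_of_dvd hm0 hgm
  have : NeZero g := ⟨by rintro h; rw [h] at hg0; simp at hg0⟩
  have hodd : Odd g := by
    rw [← Nat.not_even_iff_odd, even_iff_two_dvd]
    exact fun h => hm2 ((Int.natCast_dvd_natCast.2 h).trans hgm)
  have hunit : ∀ w : ℤ, IsCoprime w m → IsUnit (w : ZMod g) := fun w hw => by
    obtain ⟨α, β, h⟩ := hw.of_isCoprime_of_dvd_right hgm
    refine IsUnit.of_mul_eq_one_right (α : ZMod g) ?_
    have := congrArg (Int.cast : ℤ → ZMod g) h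
    simpa using this
  obtain ⟨E, hE⟩ := h5
  have hcount : ∀ E' : ℤ, (g : ℤ) ∣ E' - E → E ≤ E' → E' ≤ E + a * m → ∀ r w : ZMod g,
      a * r + b * w = E → ∃ i j : ℤ, 0 < v + u * i ∧ 0 < v + u * j ∧ a * i + b * j = E' ∧
        (P r.val ↔ P i) ∧ (P w.val ↔ P j) := by
    intro E' hE' hl hu' r w hrw
    have hdiv : (g : ℤ) ∣ E' - (a * (r.val : ℤ) + b * (w.val : ℤ)) := by
      have h0 : (g : ℤ) ∣ E - (a * (r.val : ℤ) + b * (w.val : ℤ)) := by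
        rw [← ZMod.intCast_zmod_eq_zero_iff_dvd]
        simp [← hrw]
      have := dvd_add hE' h0
      rwa [sub_add_sub_cancel] at this
    obtain ⟨i, j, hi, hj, hij, hbi, hbj⟩ := exists_balanced_solution ha hb hg0 hab hdiv
    have hrM : (r.val : ℤ) < M := by have := ZMod.val_lt r; omega
    have hwM : (w.val : ℤ) < M := by have := ZMod.val_lt w; omega
    have bound : ∀ i, |s * i - E'| ≤ s ^ 2 * g → 0 ≤ i ∧ i < M := by
      intro i hi
      have h := nonneg_and_lt_of_abs_le ha hb hu hvu hv hm0 hm0' hgle hE hbig hl hu' hi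
      exact ⟨h.1, by have := hMof _ h.2; omega⟩
    obtain ⟨hi0, hiM⟩ := bound i hbi
    obtain ⟨hj0, hjM⟩ := bound j hbj
    exact ⟨i, j, by positivity, by positivity, hij,
      hper _ _ (by positivity) hrM hi0 hiM ((dvd_sub_comm).1 hi),
      hper _ _ (by positivity) hwM hj0 hjM ((dvd_sub_comm).1 hj)⟩
  refine not_forall_iff_not_of_odd hodd (hunit a ham) (hunit b hbm) (E : ZMod g)
    (fun r => P r.val) fun r w hrw => ?_
  obtain ⟨i, j, hi, hj, hij, hri, hwj⟩ := hcount E (by simp) le_rfl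
    (by have : 0 < a * m := by positivity
        omega) r w hrw
  obtain ⟨i', j', hi', hj', hij', hri', hwj'⟩ := hcount (E + a * m)
    (by simpa using hgm.mul_left a) (by have : 0 < a * m := by positivity
                                        omega) le_rfl r w hrw
  have n1 := hN _ _ k hi hj hk (by linear_combination u * hij - hE)
  have n2 := hN _ _ (k + d) hi' hj' hkd (by linear_combination u * hij' - hE - hm)
  refine ⟨fun hr hw => ?_, fun hw => ?_⟩
  · have h1 : c (v + u * i') ≠ c k := hri'.1 hr
    have h2 : c (v + u * j') ≠ c k := hwj'.1 hw
    exact n2 ⟨Bool.eq_of_ne_of_ne h1 h2, Bool.eq_of_ne_of_ne h1 hc⟩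
  · refine hri.2 fun h1 => n1 ⟨?_, h1⟩
    rw [h1]
    by_contra h2
    exact hw (hwj.2 (Ne.symm h2))

/-- In a colouring without large monochromatic solutions, no three comparable points of the class
of `t` have alternating colours. -/
theorem exists_forall_not_alternating (p : Polynomial ℤ) (hdeg : 2 ≤ p.natDegree)
    (hlead : 0 < p.leadingCoeff) {a b d u t v N : ℤ} (ha : 0 < a) (hb : 0 < b)
    (hab : IsCoprime a b) (hd : 0 < d) (hu : 0 < u)
    (h3 : ∀ k : ℤ, d ∣ k - t → ∃ m' : ℤ, p.eval (k + d) - p.eval k = a * (u * m') ∧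
      ¬ (2 ∣ m') ∧ IsCoprime a m' ∧ IsCoprime b m' ∧ IsCoprime u m')
    (h5 : ∀ k : ℤ, d ∣ k - t → u ∣ p.eval k - (a + b) * v)
    (h6 : ∀ j k : ℤ, u ∣ j - v → d ∣ k - t → b ∣ p.eval k - a * j) {c : ℤ → Bool}
    (hN : ∀ x y z, 0 < x → 0 < y → N ≤ z → a * x + b * y = p.eval z →
      ¬ (c x = c y ∧ c x = c z)) {r : ℤ} (hr : 1 ≤ r) :
    ∃ K : ℤ, ∀ x₁ x₂ x₃, d ∣ x₁ - t → d ∣ x₂ - t → d ∣ x₃ - t → K ≤ x₁ → x₁ < x₂ → x₂ < x₃ →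
      x₃ ≤ r * x₁ → c x₁ = c x₃ → c x₂ = c x₁ := by
  obtain ⟨v', hv0, hvu, hvv⟩ : ∃ v', 0 < v' ∧ v' ≤ u ∧ u ∣ v' - v := by
    have h1 := Int.emod_nonneg (v - 1) hu.ne'
    have h2 := Int.emod_lt_of_pos (v - 1) hu
    refine ⟨(v - 1) % u + 1, by omega, by omega, -((v - 1) / u), ?_⟩
    linarith [Int.mul_ediv_add_emod (v - 1) u]
  obtain ⟨K₁, hK₁⟩ := exists_forall_mul_sub_lt_eval_sub_eval p hdeg hlead 0
  obtain ⟨K₂, hK₂⟩ := exists_forall_mul_increment_le p hdeg hlead d (8 * (a + b) ^ 3 * u) r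
    (by positivity)
  refine ⟨max (max N 1) (max K₁ K₂), fun x₁ x₂ x₃ d₁ d₂ d₃ hK h12 h23 hle hc => ?_⟩
  simp only [max_le_iff] at hK
  obtain ⟨⟨hKN, hK0⟩, hKK₁, hKK₂⟩ := hK
  by_contra hne
  obtain ⟨k, hkt, hk1, hk2, hck, hckd⟩ := exists_switch_s2 hd d₁ d₂ h12 (Ne.symm hne)
  obtain ⟨k', hkt', hk1', hk2', hck', hckd'⟩ := exists_switch_s2 hd d₂ d₃ h23 (hc ▸ hne)
  obtain ⟨m, hm, hm2, ham, hbm, -⟩ := h3 k hkt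
  obtain ⟨m', hm', -⟩ := h3 k' hkt'
  have hau : 1 ≤ a * u := Order.one_le_iff_pos.2 (by positivity)
  have hΔ : 0 < a * (u * m) := by
    have := hK₁ k (k + d) (by omega) (by omega)
    linarith
  have hΔ' : 0 < a * (u * m') := by
    have := hK₁ k' (k' + d) (by omega) (by omega)
    linarith
  rw [← mul_assoc] at hΔ hΔ'
  have hm0 : 0 < m := pos_of_mul_pos_right hΔ (by omega)
  have hm0' : 0 < m' := pos_of_mul_pos_right hΔ' (by omega)
  have hmΔ : m ≤ a * u * m := le_mul_of_one_le_left hm0.le hau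
  have hmΔ' : m' ≤ a * u * m' := le_mul_of_one_le_left hm0'.le hau
  have hrk : r * x₁ ≤ r * k := by gcongr
  have hkk' : p.eval k ≤ p.eval k' := by
    have := hK₁ k k' (by omega) (by omega)
    linarith
  have hbig : 4 * (a + b) ^ 3 * u * (1 + m + m') ≤ p.eval k := by
    have b₁ := hK₂ k k (by omega) le_rfl (le_mul_of_one_le_left (by omega) hr)
    have b₂ := hK₂ k k' (by omega) (by omega) (by omega)
    rw [hm] at b₁
    rw [hm'] at b₂
    have : 4 * (a + b) ^ 3 * u * (1 + m + m') ≤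
        4 * (a + b) ^ 3 * u * ((1 + k + a * (u * m)) + (1 + k + a * (u * m'))) := by
      refine mul_le_mul_of_nonneg_left ?_ (by positivity)
      linarith
    linarith
  have h6v : ∀ k, d ∣ k - t → ∀ j, u ∣ j - v' → b ∣ p.eval k - a * j := fun k hk j hj =>
    h6 j k (by have := dvd_add hj hvv; rwa [sub_add_sub_cancel] at this) hk
  have h5v : u ∣ p.eval k - (a + b) * v' := by
    have := dvd_sub (h5 k hkt) (hvv.mul_left (a + b))
    rwa [show p.eval k - (a + b) * v - (a + b) * (v' - v) = p.eval k - (a + b) * v' by ring]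
      at this
  refine not_opposite_switches (f := fun x => p.eval x) ha hb hab hu hv0 hvu hN (by omega)
    (by omega) (by omega) (by omega) hm hm0 hm2 ham hbm hm' hm0' h5v (h6v k hkt) (h6v k' hkt')
    hkk' hbig ?_ ?_ ?_
  · rw [hck, hckd]; exact hne
  · rw [hck', hckd]
  · rw [hckd', hck, hc]

/-- Every colouring of the integers by two colours admits monochromatic solutions with `z`
arbitrarily large. -/
theorem not_forall_large_not_monochromatic (p : Polynomial ℤ) (hdeg : 2 ≤ p.natDegree)
    (hlead : 0 < p.leadingCoeff) {a b d u t v N : ℤ} (ha : 0 < a) (hb : 0 < b)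
    (hab : IsCoprime a b) (hd : 0 < d) (hu : 0 < u)
    (h1 : d ∣ p.eval t - (a + b) * t)
    (h3 : ∀ k : ℤ, d ∣ k - t → ∃ m' : ℤ, p.eval (k + d) - p.eval k = a * (u * m') ∧
      ¬ (2 ∣ m') ∧ IsCoprime a m' ∧ IsCoprime b m' ∧ IsCoprime u m')
    (h5 : ∀ k : ℤ, d ∣ k - t → u ∣ p.eval k - (a + b) * v)
    (h6 : ∀ j k : ℤ, u ∣ j - v → d ∣ k - t → b ∣ p.eval k - a * j) (c : ℤ → Bool) :
    ¬ ∀ x y z, 0 < x → 0 < y → N ≤ z → a * x + b * y = p.eval z →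
      ¬ (c x = c y ∧ c x = c z) := by
  intro hN
  obtain ⟨s, hs⟩ : ∃ s, s = a + b := ⟨_, rfl⟩
  have hs2 : 2 ≤ s := by omega
  obtain ⟨K, hK⟩ := exists_forall_not_alternating p hdeg hlead ha hb hab hd hu h3 h5 h6 hN
    (r := 4 * s) (by omega)
  obtain ⟨K₁, hK₁⟩ := exists_forall_mul_sub_lt_eval_sub_eval p hdeg hlead (a * (1 + 2 * b))
  obtain ⟨W, hW⟩ : ∃ W, W = 1 + s + b + 2 * s ^ 2 * d + b * s ^ 2 * d + s * a := ⟨_, rfl⟩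
  have hsd : 0 < s ^ 2 * d := by positivity
  have hbsd : 0 < b * s ^ 2 * d := by positivity
  have hsa : 0 < s * a := by positivity
  have hbd : 0 < b * d := by positivity
  obtain ⟨K₂, hK₂⟩ := exists_forall_mul_increment_le p hdeg hlead d W 1 (by linarith)
  have hclass : ∀ z, d ∣ z - t → d ∣ p.eval z - (a * t + b * t) := fun z hz => by
    have := dvd_add (hz.trans (Polynomial.sub_dvd_eval_sub z t p)) h1
    rwa [show p.eval z - p.eval t + (p.eval t - (a + b) * t) = p.eval z - (a * t + b * t) by ring]
      at this
  have hinc : ∀ k, max K₁ 0 ≤ k → a * (1 + 2 * b) * d < p.eval (k + d) - p.eval k := by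
    intro k hk
    have := hK₁ k (k + d) (by omega) (by omega)
    rwa [add_sub_cancel_left] at this
  have hinc0 : ∀ k, max K₁ 0 ≤ k → 0 < p.eval (k + d) - p.eval k := fun k hk =>
    lt_trans (by positivity) (hinc k hk)
  have hgrow : ∀ k, max (max K₁ 0) K₂ ≤ k → ∀ α β γ, α ≤ W → β ≤ W → γ ≤ W →
      α + β * k + γ * (p.eval (k + d) - p.eval k) ≤ p.eval k := by
    intro k hk α β γ hα hβ hγ
    have h0 : 0 ≤ k := by omega
    have hΔ := (hinc0 k (by omega)).le
    calc α + β * k + γ * (p.eval (k + d) - p.eval k)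
        ≤ W + W * k + W * (p.eval (k + d) - p.eval k) := by gcongr
      _ = W * (1 + k + (p.eval (k + d) - p.eval k)) := by ring
      _ ≤ p.eval k := hK₂ k k (by omega) le_rfl (by omega)
  -- balanced solutions in the class of `t`
  have hbal : ∀ z, max (max K₁ 0) K₂ ≤ z → d ∣ z - t → ∃ x y, d ∣ x - t ∧ d ∣ y - t ∧
      a * x + b * y = p.eval z ∧ |s * x - p.eval z| ≤ s ^ 2 * d ∧
      |s * y - p.eval z| ≤ s ^ 2 * d ∧ z < x ∧ z < y := by
    intro z hz hzt
    obtain ⟨x, y, hx, hy, hxy, bx, hby⟩ := exists_balanced_solution ha hb hd hab (hclass z hzt)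
    rw [← hs] at bx hby
    have hg := hgrow z hz (s ^ 2 * d + 1) s 0 (by linarith) (by linarith) (by linarith)
    have lt : ∀ w, |s * w - p.eval z| ≤ s ^ 2 * d → z < w := fun w hw => by
      rw [abs_le] at hw
      have : s * z < s * w := by linarith
      exact lt_of_mul_lt_mul_left this (by omega)
    exact ⟨x, y, hx, hy, hxy, bx, hby, lt x bx, lt y hby⟩
  obtain ⟨B, hB⟩ : ∃ B, B = max (max (max K₁ 0) K₂) (max N K) + 2 * (b * d) + d := ⟨_, rfl⟩
  by_cases hconst : ∃ k, d ∣ k - t ∧ B ≤ k ∧ c (k + d) ≠ c k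
  · obtain ⟨k, hkt, hkB, hck⟩ := hconst
    have hkt' : d ∣ k + d - t := by
      rw [show k + d - t = (k - t) + d by ring]
      exact dvd_add hkt dvd_rfl
    have hr : ∀ x, 0 < x → 2 * x ≤ 4 * s * x := fun x hx => by nlinarith
    obtain ⟨x₁, y₁, hx₁, hy₁, e₁, l₁, l₁'⟩ :=
      exists_solution_in_class hb hd hab (hclass k hkt) (k - b * d + 1)
    obtain ⟨x₂, y₂, hx₂, hy₂, e₂, l₂, l₂'⟩ :=
      exists_solution_in_class hb hd hab (hclass (k + d) hkt') (k + d)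
    have hΔ := hinc k (by omega)
    have hΔ0 := hinc0 k (by omega)
    have hΔ' := hinc0 (k + d) (by omega)
    have hck₁ : c x₁ = c k := by
      by_contra hne
      rcases eq_or_lt_of_le (show x₁ ≤ k by omega) with h | h
      · exact hne (by rw [h])
      · exact hne (hK x₁ k (k + d) hx₁ hkt hkt' (by omega) h (by omega)
          (by have := hr x₁ (by omega); omega) (Bool.eq_of_ne_of_ne hne hck)).symm
    have hck₂ : c x₂ = c (k + d) := by
      rcases eq_or_lt_of_le l₂ with h | h
      · rw [← h]
      · refine Bool.eq_of_ne_of_ne (r := c k) (fun heq => hck ?_) hck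
        exact hK k (k + d) x₂ hkt hkt' hx₂ (by omega) (by omega) h
          (by have := hr k (by omega); omega) heq.symm
    have ax₁ : a * x₁ ≤ a * k := by gcongr; omega
    have g₁ := hgrow k (by omega) (b * s ^ 2 * d + 1) (s * a) b (by linarith) (by linarith)
      (by linarith)
    have hpk : 0 < p.eval k := by
      have : 0 ≤ s * a * k := mul_nonneg hsa.le (by omega)
      have : 0 < b * (p.eval (k + d) - p.eval k) := by positivity
      linarith
    have hapk : p.eval k ≤ a * p.eval k := le_mul_of_one_le_left hpk.le ha
    have hy₁0 : 0 < y₁ := by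
      have : a * k ≤ s * a * k := by
        have : 0 ≤ a * k := mul_nonneg ha.le (by omega)
        nlinarith
      have h : 0 < b * y₁ := by nlinarith
      exact pos_of_mul_pos_right h hb.le
    have hy₁₂ : y₁ < y₂ := by
      have : a * (x₂ - x₁) ≤ a * ((1 + 2 * b) * d) := by gcongr; linarith
      have h : b * y₁ < b * y₂ := by linarith
      exact lt_of_mul_lt_mul_left h hb.le
    have hcy₁ : c y₁ ≠ c k := fun h =>
      hN x₁ y₁ k (by omega) hy₁0 (by omega) e₁ ⟨hck₁.trans h.symm, hck₁⟩
    have hcy₂ : c y₂ ≠ c (k + d) := fun h =>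
      hN x₂ y₂ (k + d) (by omega) (by omega) (by omega) e₂ ⟨hck₂.trans h.symm, hck₂⟩
    obtain ⟨x, y, hx, hy, e, bx, hby, lx, ly⟩ := hbal (k + d) (by omega) hkt'
    have key : ∀ w, d ∣ w - t → |s * w - p.eval (k + d)| ≤ s ^ 2 * d → k + d < w →
        c w = c (k + d) := by
      intro w hw bw lw
      rw [abs_le] at bw
      by_contra hne
      have g₂ := hgrow (k + d) (by omega) (2 * (s ^ 2 * d)) 0 0 (by linarith) (by linarith)
        (by linarith)
      have hw₁ : w < y₁ := by
        have e₃ : s * p.eval k = a * p.eval k + b * p.eval k := by rw [hs]; ring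
        have h₁ : b * (s * w) ≤ b * (p.eval (k + d) + s ^ 2 * d) := by gcongr; linarith
        have h₂ : s * (p.eval k - a * k) ≤ s * (b * y₁) := by gcongr; linarith
        have h : b * s * w < b * s * y₁ := by linarith
        exact lt_of_mul_lt_mul_left h (by positivity)
      have hw₂ : y₂ ≤ 4 * s * w := by
        have h₁ : y₂ ≤ b * y₂ := le_mul_of_one_le_left (by omega) hb
        have h₂ : 0 < a * x₂ := mul_pos ha (by omega)
        linarith
      have := hK w y₁ y₂ hw hy₁ hy₂ (by omega) hw₁ hy₁₂ hw₂ (Bool.eq_of_ne_of_ne hne hcy₂)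
      exact hne (this ▸ Bool.eq_of_ne_of_ne hcy₁ hck)
    have cx := key x hx bx lx
    have cy := key y hy hby ly
    exact hN x y (k + d) (by omega) (by omega) (by omega) e ⟨cx.trans cy.symm, cx⟩
  · push Not at hconst
    have hsame : ∀ x y, d ∣ x - t → d ∣ y - t → B ≤ x → x < y → c x = c y := by
      intro x y hx hy hBx hxy
      by_contra hne
      obtain ⟨k, h1, h2, -, h3, h4⟩ := exists_switch_s2 hd hx hy hxy hne
      exact hne (by rw [← h3, ← h4, hconst k h1 (by omega)])
    obtain ⟨z, hzt, hz⟩ : ∃ z, d ∣ z - t ∧ B ≤ z := by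
      refine ⟨t + d * (|B| + |t|), ⟨|B| + |t|, by ring⟩, ?_⟩
      have : |B| + |t| ≤ d * (|B| + |t|) := le_mul_of_one_le_left (by positivity) hd
      have := le_abs_self B
      have := neg_abs_le t
      linarith
    obtain ⟨x, y, hx, hy, e, -, -, lx, ly⟩ := hbal z (by omega) hzt
    have cx := hsame z x hzt hx hz lx
    have cy := hsame z y hzt hy hz ly
    exact hN x y z (by omega) (by omega) (by omega) e ⟨cx.symm.trans cy, cx.symm⟩

/-- **Main theorem.** Let `p ∈ ℤ[z]` have degree at least 2 and positive leading
coefficient, and let `a, b` be positive coprime integers. Suppose there exist positive integers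
`d, u` and integers `t, v` satisfying the six technical conditions (1)–(6) of the paper. Then
the equation `a·x + b·y = p(z)` is 2-Ramsey. Condition (3), that `m = (p(k+d) − p(k))/a` is
divisible by `u` with `m' = m/u` odd and coprime to `a`, `b` and `u`, is expressed via the
existence of such an `m'` with `p(k+d) − p(k) = a·(u·m')`. -/
theorem stmt_2 (p : Polynomial ℤ) (hdeg : 2 ≤ p.natDegree) (hlead : 0 < p.leadingCoeff)
    (a b : ℤ) (ha : 0 < a) (hb : 0 < b) (hab : IsCoprime a b)
    (d u : ℤ) (hd : 0 < d) (hu : 0 < u) (t v : ℤ)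
    (h1 : d ∣ p.eval t - (a + b) * t)
    (h2 : ∀ k : ℤ, d ∣ k - t → a ∣ p.eval (k + d) - p.eval k)
    (h3 : ∀ k : ℤ, d ∣ k - t → ∃ m' : ℤ, p.eval (k + d) - p.eval k = a * (u * m') ∧
      ¬ (2 ∣ m') ∧ IsCoprime a m' ∧ IsCoprime b m' ∧ IsCoprime u m')
    (h4 : u ∣ p.eval v - (a + b) * v)
    (h5 : ∀ k : ℤ, d ∣ k - t → u ∣ p.eval k - (a + b) * v)
    (h6 : ∀ j k : ℤ, u ∣ j - v → d ∣ k - t → b ∣ p.eval k - a * j) :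
    ∀ φ : ℕ → Fin 2,
      {w : ℕ × ℕ × ℕ | 0 < w.1 ∧ 0 < w.2.1 ∧ 0 < w.2.2 ∧
        φ w.1 = φ w.2.1 ∧ φ w.1 = φ w.2.2 ∧
        a * w.1 + b * w.2.1 = p.eval (w.2.2 : ℤ)}.Infinite := by
  intro φ hfin
  obtain ⟨N, hN⟩ := (hfin.image fun w => w.2.2).bddAbove
  refine not_forall_large_not_monochromatic p hdeg hlead ha hb hab hd hu h1 h3 h5 h6
    (N := N + 1) (fun x => decide (φ x.toNat = 0)) fun x y z hx hy hz hxyz hc => ?_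
  lift x to ℕ using hx.le
  lift y to ℕ using hy.le
  lift z to ℕ using by omega
  simp only [Int.toNat_natCast, decide_eq_decide] at hc
  have hx' : 0 < x := by omega
  have hy' : 0 < y := by omega
  have hz' : 0 < z := by omega
  have hxy : φ x = φ y := by omega
  have hxz : φ x = φ z := by omega
  have hmem : z ≤ N := hN ⟨(x, y, z), ⟨hx', hy', hz', hxy, hxz, hxyz⟩, rfl⟩
  omega
end

section
/- Let a, b, c be positive integers with gcd(a,b) = 1, and let p be a prime with p ∤ a. Write b = p^{pn−ε}·B where ν_p(b) = pn − ε with n a nonnegative integer and ε ∈ {0, 1, ..., p−1}, and B = b / p^{ν_p(b)}. Suppose gcd(a,c) = 1, gcd(B,c) = 1, and there exists an integer t such that t ≡ 0 (mod p^n), c·t^{p−1} ≡ a (mod B), and c·t^{p−1} ≡ b (mod a). Then the equation a·x + b·y = c·z^p is 2-Ramsey. -/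
/-- A set of integers in `[0, R]` that is closed under short moves staying in `[0, R]` is closed
under every sum of such moves that ends in `[0, R]`. -/
lemma add_multiset_sum_mem {M S : Set ℤ} {R D : ℤ} (hD : 2 * D ≤ R) (hM : ∀ m ∈ M, |m| ≤ D)
    (hS : ∀ x ∈ S, ∀ m ∈ M, 0 ≤ x + m → x + m ≤ R → x + m ∈ S)
    (hSR : ∀ x ∈ S, 0 ≤ x ∧ x ≤ R) (s : Multiset ℤ) (hs : ∀ m ∈ s, m ∈ M) :
    ∀ x ∈ S, 0 ≤ x + s.sum → x + s.sum ≤ R → x + s.sum ∈ S := by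
  induction hn : s.card generalizing s with
  | zero => simp_all
  | succ n ih =>
    intro x hx h0 hR
    have key : ∀ m ∈ s, 0 ≤ x + m → x + m ≤ R → x + s.sum ∈ S := by
      intro m hm h1 h2
      obtain ⟨s', rfl⟩ := Multiset.exists_cons_of_mem hm
      simp only [Multiset.card_cons, Nat.add_right_cancel_iff] at hn
      rw [Multiset.sum_cons, ← add_assoc] at h0 hR ⊢
      exact ih s' (fun k hk => hs k (Multiset.mem_cons_of_mem hk)) hn _
        (hS x hx m (hs m hm) h1 h2) h0 hR
    by_contra hcon
    obtain ⟨hx0, hxR⟩ := hSR x hx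
    obtain ⟨m₀, hm₀⟩ : ∃ m, m ∈ s := Multiset.card_pos_iff_exists_mem.mp (by omega)
    have hpos : ∀ m ∈ s, 0 ≤ m → R < x + m := fun m hm h => by
      by_contra! h'
      exact hcon (key m hm (by omega) h')
    have hneg : ∀ m ∈ s, m < 0 → x + m < 0 := fun m hm h => by
      by_contra! h'
      exact hcon (key m hm h' (by omega))
    have hbd : ∀ m ∈ s, -D ≤ m ∧ m ≤ D := fun m hm => abs_le.mp (hM m (hs m hm))
    obtain ⟨s', rfl⟩ := Multiset.exists_cons_of_mem hm₀
    rw [Multiset.sum_cons] at h0 hR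
    rcases le_or_gt 0 m₀ with h | h
    · have h1 := hpos m₀ hm₀ h
      have : 0 ≤ s'.sum := Multiset.sum_nonneg fun m hm => by
        by_contra! h'
        have h2 := hneg m (Multiset.mem_cons_of_mem hm) h'
        have h3 := hbd m (Multiset.mem_cons_of_mem hm)
        have h4 := hbd m₀ hm₀
        omega
      omega
    · have h1 := hneg m₀ hm₀ h
      have : 0 ≤ (s'.map (fun m => -m)).sum := Multiset.sum_nonneg fun k hk => by
        obtain ⟨m, hm, rfl⟩ := Multiset.mem_map.mp hk
        by_contra! h'
        have h2 := hpos m (Multiset.mem_cons_of_mem hm) (by omega)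
        have h3 := hbd m (Multiset.mem_cons_of_mem hm)
        have h4 := hbd m₀ hm₀
        omega
      rw [Multiset.sum_map_neg'] at this
      omega

/-- A set of integers with a positive and a negative element generates the same additive
submonoid and additive subgroup. -/
lemma mem_submonoid_closure_of_mem_subgroup_closure {M : Set ℤ} {d e : ℤ} (hd : d ∈ M)
    (hd0 : 0 < d) (he : e ∈ M) (he0 : e < 0) {h : ℤ} (hh : h ∈ AddSubgroup.closure M) :
    h ∈ AddSubmonoid.closure M := by
  have hsub : ∀ m ∈ M, ∀ k : ℤ, 0 ≤ k → k * m ∈ AddSubmonoid.closure M := by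
    intro m hm k hk
    lift k to ℕ using hk
    simpa using AddSubmonoid.nsmul_mem _ (AddSubmonoid.subset_closure hm) k
  have hneg : ∀ m ∈ M, -m ∈ AddSubmonoid.closure M := by
    intro m hm
    rcases le_or_gt 0 m with h | h
    · have := add_mem (hsub m hm (-e - 1) (by omega)) (hsub e he m h)
      convert this using 1
      ring
    · have := add_mem (hsub m hm (d - 1) (by omega)) (hsub d hd (-m) (by omega))
      convert this using 1
      ring
  rw [← AddSubgroup.mem_toAddSubmonoid, AddSubgroup.closure_toAddSubmonoid] at hh
  refine (AddSubmonoid.closure_le.mpr ?_) hh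
  rintro x (hx | hx)
  · exact AddSubmonoid.subset_closure hx
  · simpa using hneg (-x) hx

/-- An integer divisible by every common divisor of `M` lies in the subgroup generated by `M`. -/
lemma mem_subgroup_closure_of_forall_dvd {M : Set ℤ} {n : ℤ}
    (h : ∀ g : ℤ, (∀ m ∈ M, g ∣ m) → g ∣ n) : n ∈ AddSubgroup.closure M := by
  obtain ⟨g, hg⟩ := Int.subgroup_cyclic (AddSubgroup.closure M)
  rw [hg, ← AddSubgroup.zmultiples_eq_closure, Int.mem_zmultiples_iff]
  refine h g fun m hm => ?_
  have : m ∈ AddSubgroup.closure M := AddSubgroup.subset_closure hm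
  rwa [hg, ← AddSubgroup.zmultiples_eq_closure, Int.mem_zmultiples_iff] at this

lemma Fin.eq_of_ne_of_ne_two {x y r : Fin 2} (hx : x ≠ r) (hy : y ≠ r) : x = y := by
  omega

section Colouring

variable {α β : ℕ → Fin 2} {P : ℕ → ℕ} {a b N : ℕ}

/-- If `u + v = P Z` has no monochromatic solution, then shifting by `P w - P z`, where `z` has
colour `r` and `w` has not, preserves the colour `r`. -/
lemma colour_shift
    (hno : ∀ Z ≥ N, ∀ u v, u + v = P Z → α u = α (a * Z) → β v = α (a * Z) → False)
    {r : Fin 2} {z w u u' : ℕ} (hz : N ≤ z) (hw : N ≤ w) (hzr : α (a * z) = r)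
    (hwr : α (a * w) ≠ r) (hu : u ≤ P z) (h : u' + P z = u + P w) (hur : α u = r) :
    α u' = r := by
  by_contra hu'
  have hv : β (P z - u) ≠ r := fun hv =>
    hno z hz u (P z - u) (by omega) (hur.trans hzr.symm) (hv.trans hzr.symm)
  exact hno w hw u' (P z - u) (by omega) (Fin.eq_of_ne_of_ne_two hu' hwr)
    (Fin.eq_of_ne_of_ne_two hv hwr)

/-- Two opposite colour changes at `L` and `K` that are close enough make the colouring periodic
on `[0, P L]`. -/
lemma colour_periodic
    (hno : ∀ Z ≥ N, ∀ u v, u + v = P Z → α u = α (a * Z) → β v = α (a * Z) → False)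
    (hP : StrictMono P) {n W : ℕ} {r : Fin 2} {K L : ℕ} (hW : 1 ≤ W)
    (hn : ∀ g : ℤ, (∀ i ≤ W, g ∣ (P (K + i) : ℤ) - P K) → g ∣ n)
    (hL : N ≤ L) (hLK : L ≤ K) (hL0 : α (a * L) ≠ r) (hL1 : α (a * (L + 1)) = r)
    (hK0 : α (a * K) = r) (hK1 : α (a * (K + 1)) ≠ r)
    (hsize : 2 * (P (K + W) + P (L + 1)) ≤ P L + 2 * (P K + P L))
    {x y : ℕ} (hx : x ≤ P L) (hy : y ≤ P L) (hxy : (n : ℤ) ∣ y - x) (hxr : α x = r) :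
    α y = r := by
  set D : ℤ := (P (K + W) : ℤ) - P K + (P (L + 1) - P L) with hDdef
  let M : Set ℤ := {m | |m| ≤ D ∧ ∃ z w, L ≤ z ∧ L ≤ w ∧ α (a * z) = r ∧ α (a * w) ≠ r ∧
    m = (P w : ℤ) - P z}
  let S : Set ℤ := {m | ∃ u : ℕ, m = u ∧ u ≤ P L ∧ α u = r}
  have hLL : P L < P (L + 1) := hP (by omega)
  have hKW : ∀ i ≤ W, P K ≤ P (K + i) ∧ P (K + i) ≤ P (K + W) := fun i hi =>
    ⟨hP.monotone (by omega), hP.monotone (by omega)⟩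
  have hKK : P K < P (K + 1) := hP (by omega)
  have hdM : (P (K + 1) : ℤ) - P K ∈ M := by
    refine ⟨?_, K, K + 1, by omega, by omega, hK0, hK1, rfl⟩
    have := hKW 1 hW
    rw [abs_le]; omega
  have heM : (P L : ℤ) - P (L + 1) ∈ M := by
    refine ⟨?_, L + 1, L, by omega, by omega, hL1, hL0, rfl⟩
    have := hKW 1 hW
    rw [abs_le]; omega
  have hnM : (n : ℤ) ∈ AddSubgroup.closure M := by
    refine mem_subgroup_closure_of_forall_dvd fun g hg => hn g fun i hi => ?_
    have h1 := hKW 1 hW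
    have h2 := hKW i hi
    by_cases hc : α (a * (K + i)) = r
    · have h3 : (P (K + 1) : ℤ) - P (K + i) ∈ M :=
        ⟨by rw [abs_le]; omega, K + i, K + 1, by omega, by omega, hc, hK1, rfl⟩
      simpa using dvd_sub (hg _ hdM) (hg _ h3)
    · exact hg _ ⟨by rw [abs_le]; omega, K, K + i, by omega, by omega, hK0, hc, rfl⟩
  have hyx : (y : ℤ) - x ∈ AddSubgroup.closure M := by
    obtain ⟨k, hk⟩ := hxy
    rw [hk, mul_comm]
    simpa using AddSubgroup.zsmul_mem _ hnM k
  obtain ⟨s, hs, hsum⟩ := AddSubmonoid.exists_multiset_of_mem_closure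
    (mem_submonoid_closure_of_mem_subgroup_closure hdM (by omega) heM (by omega) hyx)
  have hmem : (x : ℤ) + s.sum ∈ S := by
    refine add_multiset_sum_mem (R := P L) (D := D) (by omega) (fun m hm => hm.1) ?_ ?_ s hs x
      ⟨x, rfl, hx, hxr⟩ (by omega) (by omega)
    · rintro _ ⟨u, rfl, hu, hur⟩ m ⟨-, z, w, hz, hw, hzr, hwr, rfl⟩ h0 hR
      have hzL : P L ≤ P z := hP.monotone hz
      refine ⟨u + P w - P z, by omega, by omega, ?_⟩
      exact colour_shift hno (hL.trans hz) (hL.trans hw) hzr hwr (by omega) (by omega) hur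
    · rintro _ ⟨u, rfl, hu, -⟩
      omega
  obtain ⟨u, hu, -, hur⟩ := hmem
  obtain rfl : u = y := by omega
  exact hur

/-- A predicate that fails at `x` and holds at `y > x` starts to hold somewhere in between. -/
lemma exists_switch_s3 {Q : ℕ → Prop} {x y : ℕ} (hxy : x ≤ y) (hx : ¬ Q x) (hy : Q y) :
    ∃ k, x ≤ k ∧ k < y ∧ ¬ Q k ∧ Q (k + 1) := by
  induction y, hxy using Nat.le_induction with
  | base => exact absurd hy hx
  | succ y hxy ih =>
    by_cases h : Q y
    · obtain ⟨k, h1, h2, h3⟩ := ih h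
      exact ⟨k, h1, by omega, h3⟩
    · exact ⟨y, hxy, by omega, h, hy⟩

/-- Every window of length `b` contains a solution of `a * X ≡ n` modulo `b`. -/
lemma exists_mem_window_dvd (hab : Nat.Coprime a b) (hb : 0 < b) (n q : ℕ) :
    ∃ X, q ≤ X ∧ X < q + b ∧ (b : ℤ) ∣ n - a * X := by
  obtain ⟨k, hk0, hkn⟩ := Nat.chineseRemainder hab 0 n
  obtain ⟨X₀, rfl⟩ := (Nat.modEq_zero_iff_dvd).mp hk0
  have h1 := Int.emod_nonneg ((X₀ : ℤ) - q) (b := b) (by omega)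
  have h2 := Int.emod_lt_of_pos ((X₀ : ℤ) - q) (b := b) (by omega)
  have h3 := Int.mul_ediv_add_emod ((X₀ : ℤ) - q) b
  refine ⟨q + (((X₀ : ℤ) - q) % b).toNat, by omega, by omega, ?_⟩
  have h4 : (b : ℤ) ∣ n - (a * X₀ : ℕ) := hkn.dvd
  push_cast at h4 ⊢
  rw [Int.toNat_of_nonneg h1]
  have h5 : (n : ℤ) - a * (q + ((X₀ : ℤ) - q) % b) =
      (n - a * X₀) + b * (a * (((X₀ : ℤ) - q) / b)) := by
    linear_combination (-(a : ℤ)) * h3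
  rw [h5]
  exact dvd_add h4 (dvd_mul_right _ _)

/-- A representation `a * X + b * Y = n` with `X` and `Y` both close to `n / (a + b)`. -/
lemma exists_balanced (hab : Nat.Coprime a b) (ha : 0 < a) (hb : 0 < b) {n q : ℕ}
    (hqn : (a + b) * q ≤ n) (hnq : n < (a + b) * (q + 1)) (hq : a ≤ q) :
    ∃ X Y, a * X + b * Y = n ∧ q ≤ X + a ∧ X ≤ q + a + b ∧ q ≤ Y + a ∧ Y ≤ q + a + b := by
  obtain ⟨X, hX1, hX2, Y, hY⟩ := exists_mem_window_dvd hab hb n q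
  have hX1' : (q : ℤ) ≤ X := by exact_mod_cast hX1
  have hX2' : (X : ℤ) + 1 ≤ q + b := by exact_mod_cast hX2
  have hqn' : ((a : ℤ) + b) * q ≤ n := by exact_mod_cast hqn
  have hnq' : (n : ℤ) + 1 ≤ (a + b) * (q + 1) := by exact_mod_cast hnq
  have ha' : (1 : ℤ) ≤ a := by exact_mod_cast ha
  have hb' : (1 : ℤ) ≤ b := by exact_mod_cast hb
  have h1 : (q : ℤ) - a ≤ Y := by
    have : (b : ℤ) * (q - a) ≤ b * Y := by nlinarith
    exact le_of_mul_le_mul_left this (by omega)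
  have h2 : Y ≤ q + a + b := by
    have : (b : ℤ) * Y ≤ b * (q + a + b) := by nlinarith
    exact le_of_mul_le_mul_left this (by omega)
  lift Y to ℕ using by omega
  refine ⟨X, Y, ?_, by omega, by omega, by omega, by omega⟩
  zify
  linear_combination -hY

/-- If colours change twice between `x₁` and `x₃ ≤ C * x₁`, a monochromatic solution exists. -/
lemma no_close_alternation (hab : Nat.Coprime a b) (ha : 0 < a) (hb : 0 < b)
    (hαβ : ∀ Z, α (a * Z) = β (b * Z))
    (hno : ∀ Z ≥ N, ∀ u v, u + v = P Z → α u = α (a * Z) → β v = α (a * Z) → False)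
    (hstep : ∀ K, P K + K < P (K + 1)) {n W : ℕ} (hn0 : 0 < n) (hW : 1 ≤ W)
    (hgrow : ∀ A C, ∃ N', ∀ L ≥ N', ∀ K ≤ C * L, A * P (K + W) ≤ P L + A * P K)
    (hn : ∀ (K : ℕ) (g : ℤ), (∀ i ≤ W, g ∣ (P (K + i) : ℤ) - P K) → g ∣ n)
    (hPn : ∀ j, n ∣ P (n * j)) (C : ℕ) :
    ∃ N₁, ∀ x₁ x₂ x₃ r, N₁ ≤ x₁ → x₁ < x₂ → x₂ < x₃ → x₃ ≤ C * x₁ → α (a * x₁) ≠ r →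
      α (a * x₂) = r → α (a * x₃) ≠ r → False := by
  have hP : StrictMono P := strictMono_nat_of_lt_succ fun K => by have := hstep K; omega
  have hPle : ∀ K, K ≤ P K := fun _ => hP.le_apply
  set Z := n * (N + (a + b) * a) with hZ
  obtain ⟨q, hq⟩ := hPn (N + (a + b) * a)
  rw [← hZ] at hq
  have hqle : N + (a + b) * a ≤ q := by
    have := hPle Z
    rw [hq, hZ] at this
    exact Nat.le_of_mul_le_mul_left this hn0
  obtain ⟨X, Y, hXY, -⟩ := exists_balanced hab ha hb (n := q) (q := q / (a + b))
    (Nat.mul_div_le _ _) (Nat.lt_mul_div_succ _ (by omega))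
    ((Nat.le_div_iff_mul_le (by omega)).mpr (by nlinarith))
  obtain ⟨N', hN'⟩ := hgrow 4 (C + 1)
  refine ⟨N + N' + a * (n * X) + a * (n * Y) + a * Z, ?_⟩
  intro x₁ x₂ x₃ r hx₁ h12 h23 hC hr₁ hr₂ hr₃
  obtain ⟨L, hL1, hL2, hL3, hL4⟩ :=
    exists_switch_s3 (Q := fun x => α (a * x) = r) h12.le hr₁ hr₂
  obtain ⟨K, hK1, hK2, hK3, hK4⟩ :=
    exists_switch_s3 (Q := fun x => α (a * x) ≠ r) h23.le (by simpa using hr₂) hr₃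
  simp only [ne_eq, not_not] at hK3 hK4
  have hLP := hPle L
  have hKL : K ≤ (C + 1) * L := by nlinarith
  have hsK := hN' L (by omega) K hKL
  have hsL := hN' L (by omega) L (by nlinarith)
  have hLW : P (L + 1) ≤ P (L + W) := hP.monotone (by omega)
  have hper : ∀ x y : ℕ, x ≤ P L → y ≤ P L → n ∣ x → n ∣ y → α x = r → α y = r :=
    fun x y hx hy hnx hny hxr => colour_periodic hno hP hW (hn K) (by omega) (by omega) hL3 hL4
      hK3 hK4 (by omega) hx hy
      (dvd_sub (Int.natCast_dvd_natCast.mpr hny) (Int.natCast_dvd_natCast.mpr hnx)) hxr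
  have heq : ∀ x y : ℕ, x ≤ P L → y ≤ P L → n ∣ x → n ∣ y → α x = α y := by
    intro x y hx hy hnx hny
    by_cases h : α x = r
    · rw [h, hper x y hx hy hnx hny h]
    · exact Fin.eq_of_ne_of_ne_two h fun h' => h (hper y x hy hx hny hnx h')
  have hnX : n ∣ a * (n * X) := ⟨a * X, by ring⟩
  have hnY : n ∣ a * (n * Y) := ⟨a * Y, by ring⟩
  have hnZ : n ∣ a * Z := ⟨a * (N + (a + b) * a), by rw [hZ]; ring⟩
  refine hno Z ((Nat.le_add_right _ _).trans (Nat.le_mul_of_pos_left _ hn0)) (a * (n * X)) (b * (n * Y)) (by rw [hq, ← hXY]; ring)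
    (heq _ _ (by omega) (by omega) hnX hnZ) ?_
  rw [← hαβ]
  exact heq _ _ (by omega) (by omega) hnY hnZ

/-- For `u + v = P Z` with `P` growing like a polynomial of degree at least two, two colours cannot
avoid monochromatic solutions with `Z` large. -/
theorem exists_monochromatic (hab : Nat.Coprime a b) (ha : 0 < a) (hb : 0 < b)
    (hαβ : ∀ Z, α (a * Z) = β (b * Z))
    (hstep : ∀ K, P K + K < P (K + 1)) {n W : ℕ} (hn0 : 0 < n) (hW : 1 ≤ W)
    (hgrow : ∀ A C, ∃ N', ∀ L ≥ N', ∀ K ≤ C * L, A * P (K + W) ≤ P L + A * P K)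
    (hn : ∀ (K : ℕ) (g : ℤ), (∀ i ≤ W, g ∣ (P (K + i) : ℤ) - P K) → g ∣ n)
    (hPn : ∀ j, n ∣ P (n * j)) (N : ℕ) :
    ∃ Z ≥ N, ∃ u v, u + v = P Z ∧ α u = α (a * Z) ∧ β v = α (a * Z) := by
  by_contra! hcon
  have hno : ∀ Z ≥ N, ∀ u v, u + v = P Z → α u = α (a * Z) → β v = α (a * Z) → False :=
    fun Z hZ u v h1 h2 h3 => hcon Z hZ u v h1 h2 h3
  have hP : StrictMono P := strictMono_nat_of_lt_succ fun K => by have := hstep K; omega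
  have hPle : ∀ K, K ≤ P K := fun _ => hP.le_apply
  set s := a + b with hs
  have hs0 : 0 < s := by omega
  have hbal : ∀ K, s * (a + 1) ≤ K → ∃ X Y, a * X + b * Y = P K ∧ P K / s ≤ X + a ∧
      X ≤ P K / s + s ∧ P K / s ≤ Y + a ∧ Y ≤ P K / s + s := by
    intro K hK
    obtain ⟨X, Y, h, h1, h2, h3, h4⟩ := exists_balanced hab ha hb (n := P K) (q := P K / s)
      (Nat.mul_div_le _ _) (Nat.lt_mul_div_succ _ hs0)
      ((Nat.le_div_iff_mul_le hs0).mpr (by have := hPle K; nlinarith))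
    exact ⟨X, Y, h, h1, by omega, h3, by omega⟩
  have hsol : ∀ Z ≥ N, ∀ X Y, a * X + b * Y = P Z → α (a * X) = α (a * Z) →
      α (a * Y) ≠ α (a * Z) := fun Z hZ X Y h hX hY =>
    hno Z hZ _ _ h hX (by rw [← hαβ, hY])
  obtain ⟨N₁, hN₁⟩ := no_close_alternation hab ha hb hαβ hno hstep hn0 hW hgrow hn hPn (2 * s)
  obtain ⟨N₂, hN₂⟩ := hgrow (a + b * s + s * 4) 1
  -- beyond this bound all the size comparisons below hold
  obtain ⟨T, hT⟩ : ∃ T, T = N + N₁ + N₂ + 8 * (s * s) + 8 * (s * (N₁ + s)) := ⟨_, rfl⟩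
  have hchange : ∃ K ≥ T, α (a * (K + 1)) ≠ α (a * K) := by
    by_contra! hc
    have hconst : ∀ Z ≥ T, α (a * Z) = α (a * T) := fun Z hZ => by
      induction Z, hZ using Nat.le_induction with
      | base => rfl
      | succ k hk ih => rw [hc k hk, ih]
    have hle : T ≤ s * (T + a + 1) := by nlinarith
    obtain ⟨X, Y, h, h1, -, h3, -⟩ := hbal (s * (T + a + 1)) (by nlinarith)
    have hdiv : T + a + 1 ≤ P (s * (T + a + 1)) / s :=
      (Nat.le_div_iff_mul_le hs0).mpr (by rw [mul_comm]; exact hPle _)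
    exact hsol _ (by omega) X Y h ((hconst X (by omega)).trans (hconst _ hle).symm)
      ((hconst Y (by omega)).trans (hconst _ hle).symm)
  obtain ⟨K, hKT, hK⟩ := hchange
  have hss : s * (a + 1) ≤ s * s := Nat.mul_le_mul_left _ (by omega)
  have hsK : 8 * (s * s) ≤ K := by omega
  have hs2 : 2 * s ≤ s * s := Nat.mul_le_mul_right _ (by omega)
  have hsN : s * (N₁ + s) ≤ K := by omega
  have hNs : N₁ + s ≤ s * (N₁ + s) := Nat.le_mul_of_pos_left _ hs0
  have hPK := hPle K
  have hstK := hstep K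
  obtain ⟨X₁, hX₁, hX₁l, hX₁u⟩ : ∃ X, α (a * X) ≠ α (a * K) ∧ P K / s ≤ X + a ∧
      X ≤ P K / s + s := by
    obtain ⟨X, Y, h, h1, h2, h3, h4⟩ := hbal K (by omega)
    by_cases hX : α (a * X) = α (a * K)
    · exact ⟨Y, hsol K (by omega) X Y h hX, h3, h4⟩
    · exact ⟨X, hX, h1, h2⟩
  obtain ⟨X₂, hX₂, hX₂l, hX₂u⟩ : ∃ X, α (a * X) = α (a * K) ∧ P (K + 1) / s ≤ X + a ∧
      X ≤ P (K + 1) / s + s := by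
    obtain ⟨X, Y, h, h1, h2, h3, h4⟩ := hbal (K + 1) (by omega)
    by_cases hX : α (a * X) = α (a * K)
    · exact ⟨X, hX, h1, h2⟩
    · refine ⟨Y, ?_, h3, h4⟩
      by_contra hY
      exact hsol (K + 1) (by omega) X Y h (Fin.eq_of_ne_of_ne_two hX hK)
        (Fin.eq_of_ne_of_ne_two hY hK)
  have hbefore : ∀ Y, K < Y + a → Y ≤ K → α (a * Y) = α (a * K) := by
    intro Y h1 h2
    by_contra h
    have hYK : Y ≠ K := fun h' => h (by rw [h'])
    have hY2 : 2 * Y ≤ 2 * s * Y := Nat.mul_le_mul_right _ (by omega)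
    exact hN₁ Y K (K + 1) (α (a * K)) (by omega) (by omega) (by omega) (by omega) h rfl hK
  obtain ⟨Y, hY1, hY2, X₃, hX₃⟩ := exists_mem_window_dvd hab.symm ha (P K) (K + 1 - a)
  have hYK : Y ≤ K := by omega
  have hgK := hN₂ K (by omega) K (by omega)
  have hKW : P (K + 1) ≤ P (K + W) := hP.monotone (by omega)
  have hbig : (a + b * s + s * 4) * P (K + 1) ≤ P K + (a + b * s + s * 4) * P K :=
    (Nat.mul_le_mul_left _ hKW).trans hgK
  have hbY : b * Y ≤ b * K := Nat.mul_le_mul_left _ hYK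
  obtain ⟨D, hD⟩ : ∃ D, P (K + 1) = P K + D := ⟨P (K + 1) - P K, by omega⟩
  have hKD : K < D := by omega
  have hDP : (a + b * s + s * 4) * D ≤ P K := by
    rw [hD, mul_add] at hbig
    omega
  have hexp : (a + b * s + s * 4) * D = a * D + b * s * D + 4 * (s * D) := by ring
  have hbsK : b * s * K ≤ b * s * D := Nat.mul_le_mul_left _ hKD.le
  have hbK : b * K ≤ b * s * K := Nat.mul_le_mul_right _ (Nat.le_mul_of_pos_right _ hs0)
  have hX₃0 : 0 ≤ X₃ := by
    have : 0 ≤ (a : ℤ) * X₃ := by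
      rw [← hX₃]
      have : b * Y ≤ P K := by omega
      zify at this
      linarith
    exact nonneg_of_mul_nonneg_right this (by exact_mod_cast ha)
  lift X₃ to ℕ using hX₃0
  have hX₃' : a * X₃ + b * Y = P K := by
    zify
    linear_combination -hX₃
  have hX₃r : α (a * X₃) ≠ α (a * K) := fun h =>
    hsol K (by omega) X₃ Y hX₃' h (hbefore Y (by omega) hYK)
  have hq₁ : N₁ + s ≤ P K / s := (Nat.le_div_iff_mul_le hs0).mpr (by rw [mul_comm]; omega)
  have hq₁' : 8 * s ≤ P K / s := (Nat.le_div_iff_mul_le hs0).mpr (by rw [mul_assoc]; omega)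
  have hq₁u : P K < s * (P K / s + 1) := Nat.lt_mul_div_succ _ hs0
  have hq₂l : P K / s + 4 * s ≤ P (K + 1) / s := by
    rw [Nat.le_div_iff_mul_le hs0, add_mul]
    have := Nat.div_mul_le_self (P K) s
    rw [mul_assoc]
    omega
  have hq₂u : s * (P (K + 1) / s) ≤ P (K + 1) := Nat.mul_div_le _ _
  refine hN₁ X₁ X₂ X₃ (α (a * K)) (by omega) (by omega) ?_ ?_ hX₁ hX₂ hX₃r
  · by_contra! h
    have h1 : s * (a * X₃) ≤ a * P (K + 1) + a * (s * s) :=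
      calc s * (a * X₃) ≤ s * (a * (P (K + 1) / s + s)) := by gcongr; omega
        _ = a * (s * (P (K + 1) / s)) + a * (s * s) := by ring
        _ ≤ _ := by gcongr
    have h2 : s * P K ≤ s * (a * X₃) + b * s * K := by
      have : s * (b * Y) ≤ s * (b * K) := Nat.mul_le_mul_left _ hbY
      rw [← hX₃', mul_add, mul_comm b s, mul_assoc]
      omega
    have h3 : a * (s * s) ≤ s * K := Nat.mul_le_mul (by omega) (by omega)
    have h4 : s * K ≤ s * D := Nat.mul_le_mul_left _ hKD.le
    have h5 : P K ≤ b * P K := Nat.le_mul_of_pos_left _ hb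
    have h6 : 0 < s * D := Nat.mul_pos hs0 (by omega)
    have h7 : s * P K = a * P K + b * P K := by rw [hs, add_mul]
    rw [hD, mul_add] at h1
    omega
  · have h1 : X₃ ≤ a * X₃ := Nat.le_mul_of_pos_left _ ha
    have h2 : s * (P K / s + 1) ≤ s * (2 * X₁) := Nat.mul_le_mul_left _ (by omega)
    have h3 : 2 * s * X₁ = s * (2 * X₁) := by ring
    omega

end Colouring

/-- The `p`-th finite difference of `x ↦ x ^ p` with step `m`. -/
lemma sum_alternating_choose_mul_pow (p : ℕ) (k m : ℤ) (hm : m ≠ 0) :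
    ∑ i ∈ Finset.range (p + 1), ((-1 : ℤ) ^ (p - i) * p.choose i) * (k + m * i) ^ p =
      p.factorial * m ^ p := by
  have h := fwdDiff_iter_eq_sum_shift (1 : ℚ) (fun r : ℚ => r ^ p) p ((k : ℚ) / m)
  rw [fwdDiff_iter_eq_factorial] at h
  have hm' : (m : ℚ) ≠ 0 := by exact_mod_cast hm
  have h2 : ((∑ i ∈ Finset.range (p + 1),
      ((-1 : ℤ) ^ (p - i) * p.choose i) * (k + m * i) ^ p : ℤ) : ℚ) =
      ((p.factorial * m ^ p : ℤ) : ℚ) := by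
    push_cast
    have h3 : (p.factorial : ℚ) = _ := h
    rw [h3, Finset.sum_mul]
    refine Finset.sum_congr rfl fun i _ => ?_
    have h4 : (k : ℚ) + m * i = (k / m + i) * m := by field_simp
    rw [h4, mul_pow]
    simp
    ring
  exact_mod_cast h2

/-- A common divisor of all `f i - f 0` divides the `p`-th finite difference of `f`. -/
lemma dvd_sum_alternating_choose_mul {p : ℕ} (hp : p ≠ 0) {f : ℕ → ℤ} {g : ℤ}
    (hf : ∀ i ≤ p, g ∣ f i - f 0) :
    g ∣ ∑ i ∈ Finset.range (p + 1), ((-1 : ℤ) ^ (p - i) * p.choose i) * f i := by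
  have h0 : ∑ i ∈ Finset.range (p + 1), ((-1 : ℤ) ^ (p - i) * p.choose i) = 0 := by
    have h := add_pow (1 : ℤ) (-1) p
    simpa [hp] using h.symm
  have h1 : ∑ i ∈ Finset.range (p + 1), ((-1 : ℤ) ^ (p - i) * p.choose i) * f i =
      ∑ i ∈ Finset.range (p + 1), ((-1 : ℤ) ^ (p - i) * p.choose i) * (f i - f 0) := by
    simp_rw [mul_sub, Finset.sum_sub_distrib, ← Finset.sum_mul, h0]
    simp
  rw [h1]
  exact Finset.dvd_sum fun i hi =>
    dvd_mul_of_dvd_right (hf i (by have := Finset.mem_range.mp hi; omega)) _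

/-- Every positive integer divides the product of an integer coprime to `m` and a power of `m`. -/
lemma exists_coprime_dvd_mul_pow (m : ℕ) (N : ℕ) (hN : 0 < N) :
    ∃ n, 0 < n ∧ n.Coprime m ∧ ∃ j, N ∣ n * m ^ j := by
  induction N using Nat.strong_induction_on with
  | _ N ih =>
    by_cases hc : N.Coprime m
    · exact ⟨N, hN, hc, 0, by simp⟩
    · obtain ⟨N', hN'⟩ := Nat.gcd_dvd_left N m
      have hd : 1 < N.gcd m := by
        have := Nat.gcd_pos_of_pos_left m hN
        rw [Nat.Coprime] at hc
        omega
      have hN'0 : 0 < N' := Nat.pos_of_ne_zero fun h => by simp [h] at hN'; omega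
      obtain ⟨n, hn0, hnm, j, hj⟩ := ih N' (by nlinarith) hN'0
      refine ⟨n, hn0, hnm, j + 1, ?_⟩
      have := mul_dvd_mul (Nat.gcd_dvd_right N m) hj
      rw [← hN'] at this
      rwa [pow_succ', mul_left_comm]

section PowerSequence

variable {P : ℕ → ℕ} {c e m p t : ℕ}

lemma powerSequence_step (hP : ∀ Z, m * P Z + e = c * (t + m * Z) ^ p) (hm : 0 < m) (hc : 0 < c)
    (ht : 0 < t) (hp : 2 ≤ p) (K : ℕ) : P K + K < P (K + 1) := by
  obtain ⟨q, rfl⟩ : ∃ q, p = q + 2 := ⟨p - 2, by omega⟩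
  set x := t + m * K with hx
  have hxK : K < x := by
    have : K ≤ m * K := Nat.le_mul_of_pos_left _ hm
    omega
  have h1 : x ^ (q + 2) + m * (K + 1) ≤ (x + m) ^ (q + 2) :=
    calc x ^ (q + 2) + m * (K + 1) ≤ x ^ (q + 1) * x + m * x ^ (q + 1) := by
          rw [pow_succ]
          have : K + 1 ≤ x ^ (q + 1) := hxK.trans_le (Nat.le_self_pow (by omega) x)
          gcongr
      _ = x ^ (q + 1) * (x + m) := by ring
      _ ≤ (x + m) ^ (q + 1) * (x + m) := by gcongr; omega
      _ = (x + m) ^ (q + 2) := (pow_succ _ _).symm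
  have h2 := hP K
  have h3 := hP (K + 1)
  have h4 : t + m * (K + 1) = x + m := by rw [hx]; ring
  rw [← hx] at h2
  rw [h4] at h3
  have h5 : c * x ^ (q + 2) + m * (K + 1) ≤ c * (x + m) ^ (q + 2) := by
    have : m * (K + 1) ≤ c * (m * (K + 1)) := Nat.le_mul_of_pos_left _ hc
    have := Nat.mul_le_mul_left c h1
    rw [mul_add] at this
    omega
  have h6 : m * (P K + (K + 1)) ≤ m * P (K + 1) := by
    rw [mul_add]
    omega
  have := Nat.le_of_mul_le_mul_left h6 hm
  omega

lemma pow_le_powerSequence (hP : ∀ Z, m * P Z + e = c * (t + m * Z) ^ p) (hm : 0 < m)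
    (hc : 0 < c) (hp : 2 ≤ p) (L : ℕ) : L ^ p ≤ P L := by
  have h0 := hP 0
  have hL := hP L
  have h1 : t ^ p + (m * L) ^ p ≤ (t + m * L) ^ p :=
    pow_add_pow_le (Nat.zero_le _) (Nat.zero_le _) (by omega)
  have h2 : m * L ^ p ≤ c * (m * L) ^ p := by
    rw [mul_pow]
    calc m * L ^ p ≤ m ^ p * L ^ p := by gcongr; exact Nat.le_self_pow (by omega) m
      _ ≤ _ := Nat.le_mul_of_pos_left _ hc
  have h3 := Nat.mul_le_mul_left c h1
  rw [mul_add] at h3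
  simp only [mul_zero, add_zero] at h0
  exact Nat.le_of_mul_le_mul_left (by omega) hm

lemma pow_le_pow_add_mul (x d q : ℕ) :
    (x + d) ^ (q + 1) ≤ x ^ (q + 1) + (q + 1) * d * (x + d) ^ q := by
  induction q with
  | zero => simp
  | succ q ih =>
    calc (x + d) ^ (q + 1 + 1) = (x + d) ^ (q + 1) * x + d * (x + d) ^ (q + 1) := by ring
      _ ≤ (x ^ (q + 1) + (q + 1) * d * (x + d) ^ q) * x + d * (x + d) ^ (q + 1) := by gcongr
      _ = x ^ (q + 1 + 1) + (q + 1) * d * ((x + d) ^ q * x) + d * (x + d) ^ (q + 1) := by ring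
      _ ≤ x ^ (q + 1 + 1) + (q + 1) * d * ((x + d) ^ q * (x + d)) + d * (x + d) ^ (q + 1) := by
          gcongr; omega
      _ = _ := by ring

lemma powerSequence_growth (hP : ∀ Z, m * P Z + e = c * (t + m * Z) ^ p) (hm : 0 < m)
    (hc : 0 < c) (hp : 2 ≤ p) (A C : ℕ) :
    ∃ N, ∀ L ≥ N, ∀ K ≤ C * L, A * P (K + p) ≤ P L + A * P K := by
  obtain ⟨q, rfl⟩ : ∃ q, p = q + 1 := ⟨p - 1, by omega⟩
  set w := q + 1 with hw
  set G := t + m * C + m * w with hG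
  refine ⟨A * (c * (w * w * G ^ q)) + 1, fun L hL K hK => ?_⟩
  have hL1 : 1 ≤ L := by omega
  have hx : t + m * K + m * w ≤ G * L := by
    have h1 : t ≤ t * L := Nat.le_mul_of_pos_right _ hL1
    have h2 : m * K ≤ m * (C * L) := Nat.mul_le_mul_left _ hK
    have h3 : m * w ≤ m * w * L := Nat.le_mul_of_pos_right _ hL1
    have h4 : G * L = t * L + m * (C * L) + m * w * L := by rw [hG]; ring
    omega
  have h1 : c * (t + m * K + m * w) ^ w ≤
      c * (t + m * K) ^ w + m * (c * (w * w * G ^ q) * L ^ q) :=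
    calc c * (t + m * K + m * w) ^ w
        ≤ c * ((t + m * K) ^ w + w * (m * w) * (t + m * K + m * w) ^ q) := by
          gcongr; exact pow_le_pow_add_mul _ _ _
      _ ≤ c * ((t + m * K) ^ w + w * (m * w) * (G * L) ^ q) := by gcongr
      _ = _ := by rw [mul_pow]; ring
  have h2 := hP K
  have h3 := hP (K + w)
  have h4 : t + m * (K + w) = t + m * K + m * w := by ring
  rw [h4] at h3
  have h5 : P (K + w) ≤ P K + c * (w * w * G ^ q) * L ^ q := by
    refine Nat.le_of_mul_le_mul_left ?_ hm
    rw [mul_add]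
    omega
  calc A * P (K + w) ≤ A * (P K + c * (w * w * G ^ q) * L ^ q) := by gcongr
    _ = L ^ q * (A * (c * (w * w * G ^ q))) + A * P K := by ring
    _ ≤ L ^ q * L + A * P K := by gcongr; omega
    _ = L ^ w + A * P K := by rw [hw, pow_succ]
    _ ≤ P L + A * P K := by gcongr; exact pow_le_powerSequence hP hm hc hp L

/-- Common divisors of the differences of `P` divide its `p`-th finite difference. -/
lemma dvd_of_dvd_powerSequence_sub (hP : ∀ Z, m * P Z + e = c * (t + m * Z) ^ p) (hm : 0 < m)
    (hp : 1 ≤ p) {K : ℕ} {g : ℤ} (hg : ∀ i ≤ p, g ∣ (P (K + i) : ℤ) - P K) :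
    g ∣ ((p.factorial * c * m ^ (p - 1) : ℕ) : ℤ) := by
  have hm' : (m : ℤ) ≠ 0 := by exact_mod_cast hm.ne'
  have h1 : ∀ i ≤ p, m * g ∣ (c * (t + m * K + m * (i : ℤ)) ^ p : ℤ) -
      c * (t + m * K + m * ((0 : ℕ) : ℤ)) ^ p := by
    intro i hi
    have h2 : (m * P K + e : ℤ) = c * (t + m * K) ^ p := by exact_mod_cast hP K
    have h3 : (m * P (K + i) + e : ℤ) = c * (t + m * (K + i)) ^ p := by exact_mod_cast hP (K + i)
    have h4 : (c * (t + m * K + m * (i : ℤ)) ^ p : ℤ) -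
        c * (t + m * K + m * ((0 : ℕ) : ℤ)) ^ p = m * ((P (K + i) : ℤ) - P K) := by
      have h5 : (t + m * K + m * (i : ℤ) : ℤ) = t + m * (K + i) := by ring
      rw [h5, ← h3, Nat.cast_zero, mul_zero, add_zero, ← h2]
      ring
    rw [h4]
    exact mul_dvd_mul_left _ (hg i hi)
  have h6 := dvd_sum_alternating_choose_mul (by omega)
    (f := fun i => (c * (t + m * K + m * (i : ℤ)) ^ p : ℤ)) h1
  have h7 := sum_alternating_choose_mul_pow p (t + m * K) m hm'
  simp_rw [mul_left_comm _ (c : ℤ)] at h6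
  rw [← Finset.mul_sum, h7] at h6
  refine (mul_dvd_mul_iff_left hm').mp (h6.trans (dvd_of_eq ?_))
  obtain ⟨q, rfl⟩ : ∃ q, p = q + 1 := ⟨p - 1, by omega⟩
  push_cast
  ring

/-- The first difference of `P` modulo a divisor `d` of the step. -/
lemma powerSequence_sub_modEq (hP : ∀ Z, m * P Z + e = c * (t + m * Z) ^ p) (hm : 0 < m)
    {d : ℤ} (hd : d ∣ m) (K : ℕ) :
    (P (K + 1) : ℤ) - P K ≡ p * (c * t ^ (p - 1)) [ZMOD d] := by
  have h2 : (m * P K + e : ℤ) = c * (t + m * K) ^ p := by exact_mod_cast hP K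
  have h3 : (m * P (K + 1) + e : ℤ) = c * (t + m * (K + 1)) ^ p := by exact_mod_cast hP (K + 1)
  have hm' : (m : ℤ) ≠ 0 := by exact_mod_cast hm.ne'
  obtain ⟨k, hk⟩ := Polynomial.powAddExpansion (t + m * K : ℤ) m p
  have h4 : (P (K + 1) : ℤ) - P K = p * (c * (t + m * K) ^ (p - 1)) + m * (c * k) := by
    apply mul_left_cancel₀ hm'
    have h5 : (t + m * (K + 1) : ℤ) = t + m * K + m := by ring
    rw [h5, hk] at h3
    linear_combination h3 - h2
  have hm0 : (m : ℤ) ≡ 0 [ZMOD d] := (Int.modEq_zero_iff_dvd).mpr hd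
  rw [h4]
  calc (p * (c * (t + m * K) ^ (p - 1)) + m * (c * k) : ℤ)
      ≡ p * (c * (t + 0 * K) ^ (p - 1)) + 0 * (c * k) [ZMOD d] := by gcongr
    _ = p * (c * t ^ (p - 1)) := by ring

end PowerSequence

/-- **Corollary for `a·x + b·y = c·z^p`.** Let `a, b, c` be positive integers with
`gcd(a,b) = 1`, and let `p` be a prime with `p ∤ a`. Write `ν_p(b) = p·n − ε` with `n ≥ 0` and
`0 ≤ ε ≤ p − 1` (encoded as `ν_p(b) + ε = p·n`), and let `B = b / p^{ν_p(b)}` (encoded as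
`b = p^{ν_p(b)} · B`). Suppose `gcd(a,c) = 1`, `gcd(B,c) = 1`, and there is an integer `t` with
`t ≡ 0 (mod p^n)`, `c·t^{p−1} ≡ a (mod B)` and `c·t^{p−1} ≡ b (mod a)`. Then the equation
`a·x + b·y = c·z^p` is 2-Ramsey. -/
theorem stmt_3 (a b c : ℕ) (ha : 0 < a) (hb : 0 < b) (hc : 0 < c)
    (hab : Nat.gcd a b = 1) (p : ℕ) (hp : p.Prime) (hpa : ¬ p ∣ a)
    (n ε B : ℕ) (hε : ε ≤ p - 1) (hν : padicValNat p b + ε = p * n)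
    (hB : b = p ^ padicValNat p b * B)
    (hac : Nat.gcd a c = 1) (hBc : Nat.gcd B c = 1)
    (ht : ∃ t : ℤ, (p : ℤ) ^ n ∣ t ∧ (B : ℤ) ∣ (c : ℤ) * t ^ (p - 1) - a ∧
      (a : ℤ) ∣ (c : ℤ) * t ^ (p - 1) - b) :
    ∀ φ : ℕ → Fin 2,
      {w : ℕ × ℕ × ℕ | 0 < w.1 ∧ 0 < w.2.1 ∧ 0 < w.2.2 ∧
        φ w.1 = φ w.2.1 ∧ φ w.1 = φ w.2.2 ∧
        a * w.1 + b * w.2.1 = c * w.2.2 ^ p}.Infinite := by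
  intro φ
  have hp1 : 1 ≤ p := hp.one_lt.le
  have hpB : ¬ p ∣ B := by
    rintro ⟨B', rfl⟩
    have := Fact.mk hp
    refine pow_succ_padicValNat_not_dvd (p := p) hb.ne' ⟨B', ?_⟩
    rw [pow_succ, mul_assoc]
    exact hB
  have hBb : B ∣ b := ⟨p ^ padicValNat p b, by rw [mul_comm]; exact hB⟩
  have haB : a.Coprime B := Nat.Coprime.coprime_dvd_right hBb hab
  have hpaB : p.Coprime (a * B) :=
    Nat.Coprime.mul_right ((Nat.Prime.coprime_iff_not_dvd hp).mpr hpa)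
      ((Nat.Prime.coprime_iff_not_dvd hp).mpr hpB)
  have hm : 0 < a * b := Nat.mul_pos ha hb
  obtain ⟨n, hn0, hnaB, j, hj⟩ := exists_coprime_dvd_mul_pow (a * B)
    (p.factorial * c * (a * b) ^ (p - 1)) (by positivity)
  have hEaB : (n * p ^ padicValNat p b).Coprime (a * B) :=
    Nat.Coprime.mul_left hnaB (hpaB.pow_left _)
  obtain ⟨t, htab, hEt, htaB⟩ : ∃ t : ℕ, a + b ≤ t ∧ n * p ^ padicValNat p b ∣ t ∧
      (c : ℤ) * t ^ (p - 1) ≡ a + b [ZMOD (a * B : ℕ)] := by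
    obtain ⟨t₀, -, hB₀, ha₀⟩ := ht
    have hB0 : 0 < B := Nat.pos_of_dvd_of_pos hBb hb
    have hB0' : (0 : ℤ) < (a * B : ℕ) := by exact_mod_cast Nat.mul_pos ha hB0
    obtain ⟨t₁, h₁, h₂⟩ := Nat.chineseRemainder hEaB 0 (t₀ % (a * B : ℕ)).toNat
    have h₃ : (t₁ : ℤ) ≡ t₀ [ZMOD (a * B : ℕ)] := by
      have := (Int.natCast_modEq_iff).mpr h₂
      rw [Int.toNat_of_nonneg (Int.emod_nonneg _ hB0'.ne')] at this
      exact this.trans (Int.mod_modEq _ _)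
    refine ⟨t₁ + n * p ^ padicValNat p b * (a * B) * (a + b), ?_, ?_, ?_⟩
    · have : 0 < n * p ^ padicValNat p b * (a * B) :=
        Nat.mul_pos (Nat.mul_pos hn0 (pow_pos hp.pos _)) (Nat.mul_pos ha hB0)
      have := Nat.le_mul_of_pos_left (a + b) this
      omega
    · exact dvd_add ((Nat.modEq_zero_iff_dvd).mp h₁) ⟨a * B * (a + b), by ring⟩
    · have h₄ : ((t₁ + n * p ^ padicValNat p b * (a * B) * (a + b) : ℕ) : ℤ) ≡ t₀
          [ZMOD (a * B : ℕ)] := by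
        refine Int.ModEq.trans ?_ h₃
        refine (Int.modEq_iff_dvd.mpr ⟨n * p ^ padicValNat p b * (a + b), ?_⟩).symm
        push_cast
        ring
      refine ((h₄.pow (p - 1)).mul_left (c : ℤ)).trans (Int.modEq_iff_dvd.mpr ?_).symm
      have hcop : IsCoprime (a : ℤ) B := Nat.isCoprime_iff_coprime.mpr haB
      rw [Nat.cast_mul]
      refine hcop.mul_dvd ?_ ?_
      · rw [add_comm (a : ℤ), ← sub_sub]
        exact dvd_sub ha₀ dvd_rfl
      · rw [← sub_sub]
        exact dvd_sub hB₀ (Int.natCast_dvd_natCast.mpr hBb)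
  have ht0 : 0 < t := by omega
  have htdvd : ((a * b * n : ℕ) : ℤ) ∣ c * t ^ p - (a + b) * t := by
    have h1 : ((a * b * n : ℕ) : ℤ) = (a * B : ℕ) * (n * p ^ padicValNat p b : ℕ) := by
      conv_lhs => rw [hB]
      push_cast
      ring
    have h2 : (c * t ^ p - (a + b) * t : ℤ) = (c * t ^ (p - 1) - (a + b)) * t := by
      obtain ⟨q, rfl⟩ : ∃ q, p = q + 1 := ⟨p - 1, by omega⟩
      rw [Nat.add_sub_cancel]
      ring
    rw [h1, h2]
    exact mul_dvd_mul htaB.symm.dvd (Int.natCast_dvd_natCast.mpr hEt)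
  have hle : ∀ Z, (a + b) * t ≤ c * (t + a * b * Z) ^ p := fun Z =>
    calc (a + b) * t ≤ t * t := Nat.mul_le_mul_right _ htab
      _ = t ^ 2 := (sq t).symm
      _ ≤ t ^ p := Nat.pow_le_pow_right ht0 hp.two_le
      _ ≤ (t + a * b * Z) ^ p := by gcongr; omega
      _ ≤ c * (t + a * b * Z) ^ p := Nat.le_mul_of_pos_left _ hc
  have hdvd : ∀ k Z, k ∣ n → k ∣ Z → a * b * k ∣ c * (t + a * b * Z) ^ p - (a + b) * t := by
    rintro k _ hk ⟨Z, rfl⟩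
    zify [hle]
    have h1 : (a * b * k : ℤ) ∣ (t + a * b * (k * Z)) ^ p - t ^ p := by
      refine dvd_trans ⟨Z, ?_⟩ (sub_dvd_pow_sub_pow _ _ p)
      ring
    have h2 : (a * b * k : ℤ) ∣ c * t ^ p - (a + b) * t :=
      dvd_trans (by exact_mod_cast Nat.mul_dvd_mul_left (a * b) hk) htdvd
    have := dvd_add (h1.mul_left c) h2
    refine this.trans (dvd_of_eq ?_)
    ring
  choose P hP using fun Z => (by simpa using hdvd 1 Z (one_dvd _) (one_dvd _) :
    a * b ∣ c * (t + a * b * Z) ^ p - (a + b) * t)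
  have hPeq : ∀ Z, a * b * P Z + (a + b) * t = c * (t + a * b * Z) ^ p := fun Z => by
    have := hP Z
    have := hle Z
    omega
  have hPn : ∀ i, n ∣ P (n * i) := fun i => by
    have := hdvd n (n * i) dvd_rfl (dvd_mul_right _ _)
    rw [hP] at this
    exact Nat.dvd_of_mul_dvd_mul_left hm this
  have hn : ∀ (K : ℕ) (g : ℤ), (∀ i ≤ p, g ∣ (P (K + i) : ℤ) - P K) → g ∣ n := by
    intro K g hg
    have hcop : IsCoprime g ((a * B : ℕ) : ℤ) := by
      have h1 : (P (K + 1) : ℤ) - P K ≡ p * (a + b) [ZMOD (a * B : ℕ)] :=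
        (powerSequence_sub_modEq hPeq hm
          (Int.natCast_dvd_natCast.mpr (Nat.mul_dvd_mul_left a hBb)) K).trans
          (htaB.mul_left (p : ℤ))
      have h2 : IsCoprime ((p : ℤ) * (a + b)) ((a * B : ℕ) : ℤ) := by
        have h3 : (p * (a + b)).Coprime (a * B) := by
          refine Nat.Coprime.mul_left hpaB (Nat.Coprime.mul_right ?_ ?_)
          · simpa using Nat.Coprime.symm hab
          · obtain ⟨w, hw⟩ := hBb
            rw [hw]
            simpa using haB
        exact_mod_cast Nat.isCoprime_iff_coprime.mpr h3
      obtain ⟨k, hk⟩ := h1.symm.dvd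
      have h4 : (P (K + 1) : ℤ) - P K = p * (a + b) + (a * B : ℕ) * k := by
        linear_combination hk
      refine IsCoprime.of_isCoprime_of_dvd_left ?_ (hg 1 hp1)
      rw [h4]
      exact h2.add_mul_left_left k
    have h5 := (dvd_of_dvd_powerSequence_sub hPeq hm hp1 hg).trans
      (Int.natCast_dvd_natCast.mpr hj)
    push_cast at h5 hcop
    exact (hcop.pow_right (n := j)).dvd_of_dvd_mul_right h5
  refine Set.Infinite.of_image (fun w => w.2.2) (Set.infinite_of_forall_exists_gt fun M => ?_)
  obtain ⟨Z, hZ, u, v, huv, hu, hv⟩ := exists_monochromatic (α := fun u => φ (t + b * u))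
    (β := fun v => φ (t + a * v)) hab ha hb (fun Z => by simp only [mul_left_comm])
    (powerSequence_step hPeq hm hc ht0 hp.two_le) hn0 hp1
    (powerSequence_growth hPeq hm hc hp.two_le) hn hPn M
  have hz : t + b * (a * Z) = t + a * b * Z := by ring
  simp only [hz] at hu hv
  refine ⟨t + a * b * Z, ⟨(t + b * u, t + a * v, t + a * b * Z), ⟨by positivity, by positivity,
    by positivity, hu.trans hv.symm, hu, ?_⟩, rfl⟩, ?_⟩
  · simp only
    rw [← hPeq, ← huv]
    ring
  · have : Z ≤ a * b * Z := Nat.le_mul_of_pos_left _ hm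
    omega
end

section
/- Let a, b, c be positive integers such that gcd(a,b) = 1, gcd(a,c) is a power of 2, and gcd(b,c) is a power of 2. Then the equation a·x + b·y = c·z² is 2-Ramsey. -/
/-- `Avoids a b m B P` says that the two classes `P` and `¬ P` contain no solution
`(b * S, a * T, Z)` with `S + T = m * Z ^ 2`, `S` and `T` positive, and `Z > B`. -/
def Avoids (a b m B : ℕ) (P : ℕ → Prop) : Prop :=
  ∀ S T Z : ℕ, 0 < S → 0 < T → B < Z → S + T = m * Z ^ 2 →
    ¬ (P (b * S) ∧ P (a * T) ∧ P Z) ∧ ¬ (¬ P (b * S) ∧ ¬ P (a * T) ∧ ¬ P Z)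

theorem Avoids.not {a b m B : ℕ} {P : ℕ → Prop} (h : Avoids a b m B P) :
    Avoids a b m B (fun n => ¬ P n) := by
  intro S T Z hS hT hZ e
  have := h S T Z hS hT hZ e
  simp only [not_not]
  exact ⟨this.2, this.1⟩

/-- The rotation by `p` on `p + q` residues comes back from `p` to `0`. -/
theorem rotation_returns {p q : ℕ} (hp : 0 < p) (hq : 0 < q) (G : ℕ → Prop) (hGp : G p)
    (hup : ∀ r, r < q → G r → G (r + p)) (hdown : ∀ r, q ≤ r → r < p + q → G r → G (r - q)) :
    G 0 := by
  have key : ∀ k, G ((p + k * p) % (p + q)) := by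
    intro k
    induction k with
    | zero =>
      rw [Nat.zero_mul, Nat.add_zero, Nat.mod_eq_of_lt (by omega)]
      exact hGp
    | succ k ih =>
      have hlt : (p + k * p) % (p + q) < p + q := Nat.mod_lt _ (by omega)
      have e : (p + (k + 1) * p) % (p + q) = ((p + k * p) % (p + q) + p) % (p + q) := by
        rw [Nat.mod_add_mod]; congr 1; ring
      rw [e]
      generalize (p + k * p) % (p + q) = r at ih hlt
      by_cases hr : r < q
      · rw [Nat.mod_eq_of_lt (by omega)]
        exact hup r hr ih
      · have e2 : r + p = (r - q) + (p + q) := by omega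
        rw [e2, Nat.add_mod_right, Nat.mod_eq_of_lt (by omega)]
        exact hdown r (by omega) hlt ih
  have h := key (p + q - 1)
  have e : p + (p + q - 1) * p = (p + q) * p := by
    obtain ⟨t, ht⟩ : ∃ t, p + q = t + 1 := ⟨p + q - 1, by omega⟩
    rw [ht, Nat.add_sub_cancel]; ring
  rwa [e, Nat.mul_mod_right] at h

/-- Two opposite colour changes at `z < w` with `w` at most a small multiple of `z ^ 2`. -/
theorem Avoids.false_of_close_changes {a b e B z w : ℕ} {P : ℕ → Prop} (ha : 0 < a) (hb : 0 < b)
    (he : 0 < e) (h : Avoids a b (2 * (a + b) * e) B P) (hB : B < z) (hzw : z < w)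
    (hsmall : 4 * (a + b) * (w + 1) ≤ z ^ 2)
    (hz : P z) (hz' : ¬ P (z + 1)) (hw : ¬ P w) (hw' : P (w + 1)) : False := by
  obtain ⟨m, hm⟩ : ∃ m, m = 2 * (a + b) * e := ⟨_, rfl⟩
  obtain ⟨T₀, hT₀⟩ : ∃ t, t = 2 * b * e * z ^ 2 := ⟨_, rfl⟩
  obtain ⟨S₀, hS₀⟩ : ∃ t, t = 2 * a * e * z ^ 2 := ⟨_, rfl⟩
  rw [← hm] at h
  have hzpos : 0 < z := by omega
  have hmpos : 0 < m := by rw [hm]; positivity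
  have hTpos : 0 < T₀ := by rw [hT₀]; positivity
  have hSpos : 0 < S₀ := by rw [hS₀]; positivity
  have hST : S₀ + T₀ = m * z ^ 2 := by rw [hS₀, hT₀, hm]; ring
  have hbST : b * S₀ = a * T₀ := by rw [hS₀, hT₀]; ring
  obtain ⟨p, hp⟩ : ∃ p, p = m * (2 * z + 1) := ⟨_, rfl⟩
  obtain ⟨q, hq⟩ : ∃ q, q = m * (2 * w + 1) := ⟨_, rfl⟩
  have hpz : m * (z + 1) ^ 2 = m * z ^ 2 + p := by rw [hp]; ring
  have hqw : m * (w + 1) ^ 2 = m * w ^ 2 + q := by rw [hq]; ring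
  have hppos : 0 < p := by rw [hp]; positivity
  have hqpos : 0 < q := by rw [hq]; positivity
  have hrange : T₀ + p + q ≤ m * z ^ 2 := by
    have h1 : p + q ≤ m * (4 * (w + 1)) := by
      rw [hp, hq, ← mul_add]
      exact Nat.mul_le_mul_left _ (by omega)
    have h2 : m * (4 * (w + 1)) ≤ 2 * e * z ^ 2 := by
      calc m * (4 * (w + 1)) = 2 * e * (4 * (a + b) * (w + 1)) := by rw [hm]; ring
        _ ≤ _ := Nat.mul_le_mul_left _ hsmall
    have h3 : 2 * e * z ^ 2 ≤ S₀ := by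
      rw [hS₀]
      exact Nat.mul_le_mul_right _ (by nlinarith)
    omega
  have hwz : m * z ^ 2 ≤ m * w ^ 2 := by gcongr
  have hT₀P : ¬ P (a * T₀) := fun hP =>
    (h S₀ T₀ z hSpos hTpos hB hST).1 ⟨hbST ▸ hP, hP, hz⟩
  refine hT₀P (rotation_returns (p := p) (q := q) hppos hqpos
    (fun r => P (a * (T₀ + r))) ?_ ?_ ?_)
  · by_contra hn
    exact (h S₀ (T₀ + p) (z + 1) hSpos (by omega) (by omega) (by omega)).2
      ⟨hbST ▸ hT₀P, hn, hz'⟩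
  · intro r hr hP
    by_contra hn
    have h1 := (h (m * z ^ 2 - (T₀ + r)) (T₀ + r) z (by omega) (by omega) hB (by omega)).1
    have h2 := (h (m * z ^ 2 - (T₀ + r)) (T₀ + (r + p)) (z + 1) (by omega) (by omega)
      (by omega) (by omega)).2
    exact h2 ⟨fun hS => h1 ⟨hS, hP, hz⟩, hn, hz'⟩
  · intro r hr hr' hP
    by_contra hn
    have h1 := (h (m * (w + 1) ^ 2 - (T₀ + r)) (T₀ + r) (w + 1) (by omega) (by omega)
      (by omega) (by omega)).1
    have h2 := (h (m * (w + 1) ^ 2 - (T₀ + r)) (T₀ + (r - q)) w (by omega) (by omega)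
      (by omega) (by omega)).2
    exact h2 ⟨fun hS => h1 ⟨hS, hP, hw'⟩, hn, hw⟩

/-- A number of the form `s ^ 2 + (n - K) ^ 2` slightly above `n ^ 2`. -/
theorem exists_sq_add_sq_near {z n K H : ℕ} (hK : 0 < K) (hH : 0 < H) (hz : z ^ 2 ≤ K * n)
    (hn : 42 * K * H ^ 2 < n) :
    ∃ s E, s ^ 2 + K ^ 2 = 2 * K * n + E ∧ z < E ∧ H * E < n ∧ z < s ∧ s + z < n ∧ K ≤ s := by
  have hKn : K < n := by nlinarith [pow_pos hH 2]
  have hKn2 : K ^ 2 ≤ K * n := by rw [sq]; gcongr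
  obtain ⟨N, hN⟩ : ∃ N, N + K ^ 2 = 2 * K * n + z :=
    ⟨2 * K * n + z - K ^ 2, Nat.sub_add_cancel (by nlinarith)⟩
  obtain ⟨r, hr⟩ : ∃ r, r = Nat.sqrt N := ⟨_, rfl⟩
  have hr1 : r ^ 2 ≤ N := by rw [hr, sq]; exact Nat.sqrt_le N
  have hr2 : N < (r + 1) ^ 2 := by rw [hr, sq]; exact Nat.lt_succ_sqrt N
  have hD : H * (z + 2 * r + 1) < n := by
    have hzz : z ≤ z ^ 2 := Nat.le_self_pow two_ne_zero z
    have h1 : (z + 2 * r + 1) ^ 2 ≤ 3 * (z ^ 2 + 4 * r ^ 2 + 1) := by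
      zify
      nlinarith [sq_nonneg ((z : ℤ) - 2 * r), sq_nonneg ((z : ℤ) - 1), sq_nonneg (2 * (r : ℤ) - 1)]
    have hpos : 0 < K * n := by apply Nat.mul_pos <;> omega
    have h2 : (z + 2 * r + 1) ^ 2 ≤ 42 * (K * n) := by nlinarith
    refine lt_of_pow_lt_pow_left₀ 2 (Nat.zero_le n) ?_
    calc (H * (z + 2 * r + 1)) ^ 2 = H ^ 2 * (z + 2 * r + 1) ^ 2 := by ring
      _ ≤ H ^ 2 * (42 * (K * n)) := Nat.mul_le_mul_left _ h2
      _ = (42 * K * H ^ 2) * n := by ring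
      _ < n * n := Nat.mul_lt_mul_of_pos_right hn (by omega)
      _ = n ^ 2 := by ring
  have hDle : z + 2 * r + 1 ≤ H * (z + 2 * r + 1) := Nat.le_mul_of_pos_left _ hH
  obtain ⟨E, hE⟩ : ∃ E, (r + 1) ^ 2 + K ^ 2 = 2 * K * n + E :=
    ⟨(r + 1) ^ 2 + K ^ 2 - 2 * K * n, by omega⟩
  have hr3 : (r + 1) ^ 2 = r ^ 2 + 2 * r + 1 := by ring
  refine ⟨r + 1, E, hE, by omega, ?_, ?_, by omega, ?_⟩
  · exact (Nat.mul_le_mul_left H (by omega)).trans_lt hD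
  · exact lt_of_pow_lt_pow_left₀ 2 (Nat.zero_le _) (by nlinarith)
  · exact (lt_of_pow_lt_pow_left₀ 2 (Nat.zero_le _) (by nlinarith)).le

/-- A long constant block `(z, w]` followed by a colour change at `w + 1`. -/
theorem Avoids.false_of_long_block {a b e B z w : ℕ} {P : ℕ → Prop} (ha : 0 < a) (hb : 0 < b)
    (he : 0 < e) (h : Avoids a b (2 * (a + b) * e) B P) (hB : B < z)
    (hlong : z ^ 2 ≤ 4 * (a + b) * (w + 1))
    (hlarge : 42 * (4 * (a + b)) * ((a + b) ^ 2 * e) ^ 2 < w + 1)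
    (hblock : ∀ t, z < t → t ≤ w → ¬ P t) (hw : P (w + 1)) : False := by
  obtain ⟨s, E, hE, hzE, hEn, hzs, hsn, hKs⟩ :=
    exists_sq_add_sq_near (by omega) (by positivity) hlong hlarge
  obtain ⟨K, hK⟩ : ∃ K, K = 4 * (a + b) := ⟨_, rfl⟩
  obtain ⟨n, hn⟩ : ∃ n, n = w + 1 := ⟨_, rfl⟩
  rw [← hK, ← hn] at hE
  rw [← hK] at hKs
  rw [← hn] at hEn hsn hw
  obtain ⟨d, hd⟩ : ∃ d, n = d + K := ⟨n - K, by omega⟩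
  obtain ⟨A, hA⟩ : ∃ A, A = (a + b) * e * E := ⟨_, rfl⟩
  obtain ⟨m, hm⟩ : ∃ m, m = 2 * (a + b) * e := ⟨_, rfl⟩
  rw [← hm] at h
  have h2A : 2 * A = m * E := by rw [hA, hm]; ring
  have hmpos : 0 < m := by rw [hm]; positivity
  have hApos : 0 < A := by
    have : 0 < E := by omega
    rw [hA]
    positivity
  have hEA : E ≤ A := by rw [hA]; exact Nat.le_mul_of_pos_left _ (by positivity)
  have hABn : (a + b) * A < n := by
    calc (a + b) * A = (a + b) ^ 2 * e * E := by rw [hA]; ring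
      _ < n := hEn
  have hsum : s ^ 2 + d ^ 2 = n ^ 2 + E := by rw [hd] at hE ⊢; nlinarith
  have hzd : z < d := by omega
  have hAs : A < m * s ^ 2 := by
    have hdn : d ^ 2 ≤ n ^ 2 := Nat.pow_le_pow_left (by omega) 2
    have := Nat.mul_le_mul_left m (show E ≤ s ^ 2 by omega)
    omega
  have hAd : A < m * d ^ 2 := by
    have hsn' : s ^ 2 ≤ n ^ 2 := Nat.pow_le_pow_left (by omega) 2
    have := Nat.mul_le_mul_left m (show E ≤ d ^ 2 by omega)
    omega
  have hin : ∀ k, 0 < k → k ≤ a + b → ¬ P (k * A) := by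
    intro k hk hkab
    have h1 : A ≤ k * A := Nat.le_mul_of_pos_left _ hk
    have h2 : k * A ≤ (a + b) * A := Nat.mul_le_mul_right _ hkab
    exact hblock _ (by omega) (by omega)
  have hS : P (b * (m * s ^ 2 - A)) := by
    by_contra hS
    exact (h (m * s ^ 2 - A) A s (by omega) hApos (by omega) (by omega)).2
      ⟨hS, hin a ha (by omega), hblock s hzs (by omega)⟩
  have hT : P (a * (m * d ^ 2 - A)) := by
    by_contra hT
    exact (h A (m * d ^ 2 - A) d hApos (by omega) (by omega) (by omega)).2
      ⟨hin b hb (by omega), hT, hblock d hzd (by omega)⟩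
  refine (h (m * s ^ 2 - A) (m * d ^ 2 - A) n (by omega) (by omega) (by omega) ?_).1 ⟨hS, hT, hw⟩
  have : m * s ^ 2 + m * d ^ 2 = m * n ^ 2 + m * E := by rw [← mul_add, hsum, mul_add]
  omega

theorem Avoids.false {a b e B : ℕ} {P : ℕ → Prop} (ha : 0 < a) (hb : 0 < b)
    (he : 0 < e) (h : Avoids a b (2 * (a + b) * e) B P) : False := by
  obtain ⟨N, hBN, hN⟩ : ∃ N, B < N ∧ 42 * (4 * (a + b)) * ((a + b) ^ 2 * e) ^ 2 < N :=
    ⟨_, (Nat.lt_succ_of_le (Nat.le_add_right B _)), Nat.lt_succ_of_le (Nat.le_add_left _ B)⟩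
  have hchange : ∀ k, N ≤ k → ∃ w, k ≤ w ∧ ¬ (P w ↔ P (w + 1)) := by
    intro k hk
    by_contra! hc
    have hconst : ∀ t, k ≤ t → (P t ↔ P k) := by
      intro t ht
      induction t, ht using Nat.le_induction with
      | base => rfl
      | succ t ht ih => rw [← hc t ht, ih]
    have hkpos : 0 < k := by omega
    have hle : ∀ j, 0 < j → k ≤ j * k ^ 2 := fun j hj => by
      nlinarith [Nat.mul_le_mul hj hkpos, Nat.mul_le_mul_right (k * k) hj]
    have e1 : b * (2 * a * e * k ^ 2) = (b * (2 * a * e)) * k ^ 2 := by ring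
    have e2 : a * (2 * b * e * k ^ 2) = (a * (2 * b * e)) * k ^ 2 := by ring
    have := h (2 * a * e * k ^ 2) (2 * b * e * k ^ 2) k (by positivity) (by positivity)
      (by omega) (by ring)
    rw [e1, e2, hconst _ (hle _ (by positivity)), hconst _ (hle _ (by positivity))] at this
    tauto
  obtain ⟨z, hNz, hz⟩ := hchange N le_rfl
  have hex : ∃ w, z + 1 ≤ w ∧ ¬ (P w ↔ P (w + 1)) := hchange (z + 1) (by omega)
  classical
  obtain ⟨w, ⟨hzw, hw⟩, hmin⟩ : ∃ w, (z + 1 ≤ w ∧ ¬ (P w ↔ P (w + 1))) ∧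
      ∀ t < w, ¬ (z + 1 ≤ t ∧ ¬ (P t ↔ P (t + 1))) :=
    ⟨Nat.find hex, Nat.find_spec hex, fun t ht => Nat.find_min hex ht⟩
  have hblock : ∀ t, z + 1 ≤ t → t ≤ w → (P t ↔ P (z + 1)) := by
    intro t ht
    induction t, ht using Nat.le_induction with
    | base => intro _; rfl
    | succ t ht ih =>
      intro htw
      have := hmin t (by omega)
      have := ih (by omega)
      tauto
  have hwb := hblock w hzw le_rfl
  rcases le_total (z ^ 2) (4 * (a + b) * (w + 1)) with hl | hl
  · by_cases hP : P (z + 1)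
    · exact h.not.false_of_long_block ha hb he (by omega) hl (by omega)
        (fun t h1 h2 => not_not.2 ((hblock t h1 h2).2 hP)) (by tauto)
    · exact h.false_of_long_block ha hb he (by omega) hl (by omega)
        (fun t h1 h2 => mt (hblock t h1 h2).1 hP) (by tauto)
  · by_cases hP : P (z + 1)
    · exact h.not.false_of_close_changes ha hb he (by omega) (by omega) hl
        (by tauto) (by tauto) (by tauto) (by tauto)
    · exact h.false_of_close_changes ha hb he (by omega) (by omega) hl
        (by tauto) (by tauto) (by tauto) (by tauto)

/-- Let `a, b, c` be positive integers such that `gcd(a,b) = 1`, `gcd(a,c)` is a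
power of 2, and `gcd(b,c)` is a power of 2. Then the equation `a·x + b·y = c·z²` is 2-Ramsey. -/
theorem stmt_4 (a b c : ℕ) (ha : 0 < a) (hb : 0 < b) (hc : 0 < c)
    (hab : Nat.gcd a b = 1)
    (hac : ∃ ℓ : ℕ, Nat.gcd a c = 2 ^ ℓ) (hbc : ∃ ℓ' : ℕ, Nat.gcd b c = 2 ^ ℓ') :
    ∀ φ : ℕ → Fin 2,
      {w : ℕ × ℕ × ℕ | 0 < w.1 ∧ 0 < w.2.1 ∧ 0 < w.2.2 ∧
        φ w.1 = φ w.2.1 ∧ φ w.1 = φ w.2.2 ∧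
        a * w.1 + b * w.2.1 = c * w.2.2 ^ 2}.Infinite := by
  intro φ hfin
  obtain ⟨B, hB⟩ := (hfin.image (fun w => w.2.2)).bddAbove
  obtain ⟨M, hM⟩ : ∃ M, M = 2 * a * b * (a + b) := ⟨_, rfl⟩
  have hMpos : 0 < M := by rw [hM]; positivity
  have hno : ∀ S T Z : ℕ, 0 < S → 0 < T → B < Z → S + T = 2 * (a + b) * c * Z ^ 2 →
      ¬ (φ (M * (b * S)) = φ (M * (a * T)) ∧ φ (M * (b * S)) = φ (M * Z)) := by
    rintro S T Z hS hT hZ e ⟨h1, h2⟩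
    have hZpos : 0 < Z := by omega
    have hle : M * Z ≤ B := hB ⟨(M * (b * S), M * (a * T), M * Z),
      ⟨by positivity, by positivity, by positivity, h1, h2, by
        calc a * (M * (b * S)) + b * (M * (a * T)) = M * a * b * (S + T) := by ring
          _ = c * (M * Z) ^ 2 := by rw [e, hM]; ring⟩, rfl⟩
    have := Nat.le_mul_of_pos_left Z hMpos
    omega
  have havoid : Avoids a b (2 * (a + b) * c) B (fun n => φ (M * n) = 0) := by
    intro S T Z hS hT hZ e
    have := hno S T Z hS hT hZ e
    constructor <;> rintro ⟨h1, h2, h3⟩ <;> apply this <;> omega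
  exact havoid.false ha hb hc
end
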